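/- Let n ≥ 2, 0 < α < 1 and k, l ≥ 1 be integers. Let Ω ⊂ ℝⁿ be a bounded domain with 0 ∈ ∂Ω and let u solve Δu = f in Ω∩B₁ and u = g on ∂Ω∩B₁. Suppose u ∈ C^{k,α}(0), f ∈ C^{k+l−2,α}(0), g ∈ C^{k+l,α}(0), ∂Ω ∈ C^{l,α}(0), and u(0) = |Du(0)| = ⋯ = |D^k u(0)| = 0 and |Dg(0)| = ⋯ = |D^k g(0)| = 0. Then u ∈ C^{k+l,α}(0): there exist a constant C, depending only on n, k, l, α and ‖∂Ω∩B₁‖_{C^{l,α}(0)}, and a polynomial P of degree ≤ k+l such that |u(x) − P(x)| ≤ C|x|^{k+l+α}(‖u‖_{L^∞(Ω∩B₁)} + ‖f‖_{C^{k+l−2,α}(0)} + ‖g‖_{C^{k+l,α}(0)}) for all x ∈ Ω∩B₁, |D^{k+1}u(0)| + ⋯ + |D^{k+l}u(0)| ≤ C(‖u‖_{L^∞(Ω∩B₁)} + ‖f‖_{C^{k+l−2,α}(0)} + ‖g‖_{C^{k+l,α}(0)}), and moreover ΔP ≡ P_f and Π_{k+l}(P(x′, P_Ω(x′))) ≡ Π_{k+l}(P_g(x′,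 P_Ω(x′))) as polynomials in x′. -/

import Mathlib

open MvPolynomial Metric Set MeasureTheory Bornology

noncomputable section

/-- `ℝⁿ` with the Euclidean norm. -/
abbrev En (n : ℕ) := EuclideanSpace ℝ (Fin n)

variable {n : ℕ}

/-- Evaluation of a multivariate polynomial at a point of `ℝⁿ`. -/
def peval (P : MvPolynomial (Fin n) ℝ) (x : En n) : ℝ :=
  MvPolynomial.eval (fun i => x i) P

/-- Total degree of a monomial (multi-index). -/
def mdeg (d : Fin n →₀ ℕ) : ℕ := d.sum fun _ e => e

/-- `σ!` for a multi-index `σ`. -/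
def mfact (d : Fin n →₀ ℕ) : ℕ := d.prod fun _ e => Nat.factorial e

/-- The norm `‖P‖ = Σ_σ |a_σ|` of a polynomial `P = Σ_σ (a_σ/σ!) x^σ`. -/
def pnorm (P : MvPolynomial (Fin n) ℝ) : ℝ :=
  ∑ d ∈ P.support, (mfact d : ℝ) * |MvPolynomial.coeff d P|

/-- `|D^i P(0)|`, the Euclidean norm of the `i`-th derivative of `P` at `0`. -/
def derivNorm (i : ℕ) (P : MvPolynomial (Fin n) ℝ) : ℝ :=
  Real.sqrt (∑ d ∈ P.support.filter (fun d => mdeg d = i),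
    ((mfact d : ℝ) * MvPolynomial.coeff d P) ^ 2)

/-- Polynomial Laplacian. -/
def plap (P : MvPolynomial (Fin n) ℝ) : MvPolynomial (Fin n) ℝ :=
  ∑ i, MvPolynomial.pderiv i (MvPolynomial.pderiv i P)

/-- The index of the last coordinate. -/
def lastIdx (n : ℕ) [NeZero n] : Fin n :=
  ⟨n - 1, Nat.sub_lt (Nat.pos_of_ne_zero (NeZero.ne n)) Nat.one_pos⟩

variable [NeZero n]

/-- The last coordinate `x_n`. -/
def xn (x : En n) : ℝ := x (lastIdx n)

/-- `|x′|`, the norm of the first `n-1` coordinates. -/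
def xpn (x : En n) : ℝ :=
  Real.sqrt (∑ i ∈ Finset.univ.erase (lastIdx n), (x i) ^ 2)

/-- Substitution of the polynomial `q` for the last variable `x_n`. -/
def substLast (q P : MvPolynomial (Fin n) ℝ) : MvPolynomial (Fin n) ℝ :=
  MvPolynomial.aeval (fun i => if i = lastIdx n then q else MvPolynomial.X i) P

/-- The pointwise Laplacian of `u` at `x` (sum of pure second derivatives). -/
def lapAt (u : En n → ℝ) (x : En n) : ℝ :=
  ∑ i, fderiv ℝ (fderiv ℝ u) x (EuclideanSpace.single i 1) (EuclideanSpace.single i 1)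

/-- `u` is a (classical) solution of `Δu = f` in `Ω ∩ B₁`, `u = g` on `∂Ω ∩ B₁`. -/
def SolvesDirichlet (Ω : Set (En n)) (u f g : En n → ℝ) : Prop :=
  ContinuousOn u (closure Ω ∩ ball 0 1) ∧
  (∀ x ∈ Ω ∩ ball (0 : En n) 1,
    DifferentiableAt ℝ u x ∧ DifferentiableAt ℝ (fderiv ℝ u) x ∧ lapAt u x = f x) ∧
  (∀ x ∈ frontier Ω ∩ ball (0 : En n) 1, u x = g x)

/-- `u` is a (classical) solution of the oblique derivative problem `Δu = f` in `Ω ∩ B₁`,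
`β·Du = g` on `∂Ω ∩ B₁`, with `‖β‖_∞ ≤ 1` and `β·e_n ≥ a₀`; `Du` is the (continuous up to the
boundary) gradient of `u`. -/
def SolvesOblique (Ω : Set (En n)) (u f g : En n → ℝ) (β Du : En n → En n) (a₀ : ℝ) : Prop :=
  ContinuousOn u (closure Ω ∩ ball 0 1) ∧
  ContinuousOn Du (closure Ω ∩ ball 0 1) ∧
  (∀ x ∈ Ω ∩ ball (0 : En n) 1,
    DifferentiableAt ℝ u x ∧ (∀ i, fderiv ℝ u x (EuclideanSpace.single i 1) = Du x i) ∧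
    DifferentiableAt ℝ (fderiv ℝ u) x ∧ lapAt u x = f x) ∧
  (∀ x ∈ frontier Ω ∩ ball (0 : En n) 1,
    (∑ i, β x i * Du x i) = g x ∧ ‖β x‖ ≤ 1 ∧ a₀ ≤ β x (lastIdx n))

/-- `∂Ω ∈ C^{m,α}(0)` with polynomial `P_Ω = P` and constant `K`. -/
def DomainCmα (m : ℕ) (α K : ℝ) (P : MvPolynomial (Fin n) ℝ) (Ω : Set (En n)) : Prop :=
  P.totalDegree ≤ m ∧ MvPolynomial.coeff 0 P = 0 ∧
  MvPolynomial.pderiv (lastIdx n) P = 0 ∧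
  (1 ≤ m → ∀ i, MvPolynomial.coeff (Finsupp.single i 1) P = 0) ∧
  (∀ x : En n, ‖x‖ < 1 → xn x > peval P x + K * (xpn x) ^ ((m : ℝ) + α) → x ∈ Ω) ∧
  (∀ x : En n, ‖x‖ < 1 → xn x < peval P x - K * (xpn x) ^ ((m : ℝ) + α) → x ∉ Ω)

/-- `∂Ω ∈ C^{1,α}(0)` with constant `K` (the degree-one polynomial is necessarily `0`). -/
def Domain1α (α K : ℝ) (Ω : Set (En n)) : Prop :=
  (∀ x : En n, ‖x‖ < 1 → xn x > K * (xpn x) ^ ((1 : ℝ) + α) → x ∈ Ω) ∧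
  (∀ x : En n, ‖x‖ < 1 → xn x < -(K * (xpn x) ^ ((1 : ℝ) + α)) → x ∉ Ω)

/-- `[∂Ω∩B₁]_{C^{0,1}(0)} ≤ δ`. -/
def DomainLip (δ : ℝ) (Ω : Set (En n)) : Prop :=
  (∀ x : En n, ‖x‖ < 1 → xn x > δ * xpn x → x ∈ Ω) ∧
  (∀ x : En n, ‖x‖ < 1 → xn x < -(δ * xpn x) → x ∉ Ω)

/-- `osc_{B₁} ∂Ω ≤ δ`. -/
def FrontierOscLe (Ω : Set (En n)) (δ : ℝ) : Prop :=
  ∀ x ∈ frontier Ω ∩ ball (0 : En n) 1, ∀ y ∈ frontier Ω ∩ ball (0 : En n) 1,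
    xn x - xn y ≤ δ

/-- The `L^n` norm of `f` on a set `S ⊆ ℝⁿ`. -/
def LnNorm (n : ℕ) (S : Set (En n)) (f : En n → ℝ) : ℝ :=
  (∫ x in S, |f x| ^ (n : ℝ)) ^ ((n : ℝ)⁻¹)

/-- `∂Ω` is `C^{m,α}` at the point `x₀` with constants `K, r₀`: after an isometric change of
coordinates `φ` taking `x₀` to `0`, the boundary is trapped between `P_Ω(x′) ± K|x′|^{m+α}`. -/
def BoundaryPtCmα (m : ℕ) (α K r₀ : ℝ) (Ω : Set (En n)) (x₀ : En n) : Prop :=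
  ∃ (φ : En n ≃ᵢ En n) (P : MvPolynomial (Fin n) ℝ), φ x₀ = 0 ∧
    P.totalDegree ≤ m ∧ MvPolynomial.coeff 0 P = 0 ∧
    MvPolynomial.pderiv (lastIdx n) P = 0 ∧
    (1 ≤ m → ∀ i, MvPolynomial.coeff (Finsupp.single i 1) P = 0) ∧
    (∀ y : En n, ‖y‖ < r₀ → xn y > peval P y + K * (xpn y) ^ ((m : ℝ) + α) → φ.symm y ∈ Ω) ∧
    (∀ y : En n, ‖y‖ < r₀ → xn y < peval P y - K * (xpn y) ^ ((m : ℝ) + α) → φ.symm y ∉ Ω)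

/-- `∂Ω ∩ B₁ ∈ C^{m,α}`: pointwise `C^{m,α}` with constants uniform on compact subsets. -/
def BoundaryCmα (m : ℕ) (α : ℝ) (Ω : Set (En n)) : Prop :=
  ∀ S : Set (En n), IsCompact S → S ⊆ frontier Ω ∩ ball (0 : En n) 1 →
    ∃ K r₀ : ℝ, 0 ≤ K ∧ 0 < r₀ ∧ ∀ x₀ ∈ S, BoundaryPtCmα m α K r₀ Ω x₀

/-- `∂Ω ∩ B₁ ∈ C^∞`. -/
def BoundarySmooth (Ω : Set (En n)) : Prop :=
  ∀ m : ℕ, 1 ≤ m → ∀ α : ℝ, 0 < α → α ≤ 1 → BoundaryCmα m α Ω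

/-- `u ∈ C^∞(Ω̄ ∩ B₁)`: near every point of `Ω̄ ∩ B₁`, `u` agrees on `Ω` with a globally
smooth function. -/
def SmoothUpToBoundary (Ω : Set (En n)) (u : En n → ℝ) : Prop :=
  ∀ x₀ ∈ closure Ω ∩ ball (0 : En n) 1, ∃ ε : ℝ, 0 < ε ∧ ∃ v : En n → ℝ,
    ContDiff ℝ (⊤ : ℕ∞) v ∧ ∀ x ∈ Ω ∩ ball x₀ ε, v x = u x

set_option linter.unusedSectionVars false
set_option linter.unusedSimpArgs false
set_option linter.unusedVariables false
open Filter Topology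

/-- basis vector -/
abbrev ev (i : Fin n) : En n := EuclideanSpace.single i (1 : ℝ)

lemma ev_apply (i j : Fin n) : (ev i : En n) j = if j = i then 1 else 0 := by
  simp [ev]

/-- pointwise Laplacian through one-dimensional second derivatives -/
def HasLap (w : En n → ℝ) (x : En n) (L : ℝ) : Prop :=
  ∃ a : Fin n → ℝ, (∀ i, ∃ w' : ℝ → ℝ,
    (∀ᶠ t in 𝓝 (0 : ℝ), HasDerivAt (fun t : ℝ => w (x + t • ev i)) (w' t) t) ∧
      HasDerivAt w' (a i) 0) ∧ ∑ i, a i = L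

lemma HasLap.add {w v : En n → ℝ} {x : En n} {L L' : ℝ} (h : HasLap w x L) (h' : HasLap v x L') :
    HasLap (fun y => w y + v y) x (L + L') := by
  obtain ⟨a, ha, rfl⟩ := h
  obtain ⟨b, hb, rfl⟩ := h'
  refine ⟨fun i => a i + b i, fun i => ?_, Finset.sum_add_distrib⟩
  obtain ⟨f, hf, hf'⟩ := ha i
  obtain ⟨g, hg, hg'⟩ := hb i
  refine ⟨fun t => f t + g t, ?_, hf'.add hg'⟩
  filter_upwards [hf, hg] with t h1 h2 using h1.add h2

lemma HasLap.const_mul {w : En n → ℝ} {x : En n} {L : ℝ} (c : ℝ) (h : HasLap w x L) :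
    HasLap (fun y => c * w y) x (c * L) := by
  obtain ⟨a, ha, rfl⟩ := h
  refine ⟨fun i => c * a i, fun i => ?_, (Finset.mul_sum _ _ _).symm⟩
  obtain ⟨f, hf, hf'⟩ := ha i
  refine ⟨fun t => c * f t, ?_, hf'.const_mul c⟩
  filter_upwards [hf] with t h1 using h1.const_mul c

lemma HasLap.neg {w : En n → ℝ} {x : En n} {L : ℝ} (h : HasLap w x L) :
    HasLap (fun y => - w y) x (-L) := by
  simpa using h.const_mul (-1)

lemma HasLap.sub {w v : En n → ℝ} {x : En n} {L L' : ℝ} (h : HasLap w x L) (h' : HasLap v x L') :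
    HasLap (fun y => w y - v y) x (L - L') := by
  simpa [sub_eq_add_neg] using h.add h'.neg

lemma HasLap.const (c : ℝ) (x : En n) : HasLap (fun _ => c) x 0 :=
  ⟨fun _ => 0, fun _ => ⟨fun _ => 0, by simp [hasDerivAt_const], hasDerivAt_const _ _⟩, by simp⟩

lemma HasLap.quad (c b : Fin n → ℝ) (x : En n) :
    HasLap (fun y => ∑ i, (c i * (y i) ^ 2 + b i * y i)) x (∑ i, 2 * c i) := by
  refine ⟨fun i => 2 * c i, fun i => ⟨fun t => 2 * c i * (x i + t) + b i, ?_, ?_⟩, rfl⟩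
  · refine Eventually.of_forall fun t => ?_
    have h : ∀ j ∈ Finset.univ, HasDerivAt
        (fun t : ℝ => c j * ((x + t • ev i) j) ^ 2 + b j * (x + t • ev i) j)
        (if j = i then 2 * c i * (x i + t) + b i else 0) t := by
      intro j _
      by_cases hj : j = i
      · subst hj
        have h1 : HasDerivAt (fun t : ℝ => x j + t) 1 t := (hasDerivAt_id t).const_add _
        have := ((h1.pow 2).const_mul (c j)).add (h1.const_mul (b j))
        simp only [PiLp.add_apply, PiLp.smul_apply, ev_apply, if_true, smul_eq_mul, mul_one]
        refine HasDerivAt.congr_deriv (f' := c j * ((2 : ℕ) * (x j + t) ^ (2 - 1) * 1) + b j * 1) this ?_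
        norm_num
        ring
      · simp [ev_apply, hj, hasDerivAt_const]
    have := HasDerivAt.fun_sum h
    simpa using this
  · have h1 : HasDerivAt (fun t : ℝ => x i + t) 1 0 := (hasDerivAt_id _).const_add _
    simpa using (h1.const_mul (2 * c i)).add_const (b i)

lemma second_deriv_nonpos {φ φ' : ℝ → ℝ} {a : ℝ} (hm : IsLocalMax φ 0)
    (h1 : ∀ᶠ t in 𝓝 (0 : ℝ), HasDerivAt φ (φ' t) t) (h2 : HasDerivAt φ' a 0) : a ≤ 0 := by
  by_contra ha
  push Not at ha
  have hd : deriv φ =ᶠ[𝓝 0] φ' := h1.mono fun t h => h.deriv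
  have hdd : deriv (deriv φ) 0 = a := by rw [hd.deriv_eq]; exact h2.deriv
  have h0 : deriv φ 0 = 0 := hm.deriv_eq_zero
  have hmin : IsLocalMin φ 0 := isLocalMin_of_deriv_deriv_pos (by rw [hdd]; exact ha) h0
    h1.self_of_nhds.continuousAt
  have hc : φ =ᶠ[𝓝 0] fun _ => φ 0 := by
    filter_upwards [hm, hmin] with t h1 h2 using le_antisymm h1 h2
  have hd2 : deriv φ =ᶠ[𝓝 0] fun _ => 0 := by
    have := hc.deriv
    simpa using this
  have : deriv (deriv φ) 0 = 0 := by rw [hd2.deriv_eq]; simp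
  linarith

lemma HasLap.nonpos_of_localMax {w : En n → ℝ} {x : En n} {L : ℝ} (h : HasLap w x L)
    (hm : IsLocalMax w x) : L ≤ 0 := by
  obtain ⟨a, ha, rfl⟩ := h
  refine Finset.sum_nonpos fun i _ => ?_
  obtain ⟨w', h1, h2⟩ := ha i
  refine second_deriv_nonpos ?_ h1 h2
  have hc : Tendsto (fun t : ℝ => x + t • ev i) (𝓝 0) (𝓝 x) := by
    have : Continuous (fun t : ℝ => x + t • (ev i : En n)) := by fun_prop
    simpa using this.tendsto 0
  have := hc.eventually hm
  simpa [IsLocalMax, IsMaxFilter] using this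

theorem mp_strict {U : Set (En n)} (hU : IsOpen U) (hb : IsBounded U) {w : En n → ℝ}
    (hc : ContinuousOn w (closure U)) (hL : ∀ x ∈ U, ∃ L, 0 < L ∧ HasLap w x L) {m : ℝ}
    (hm : ∀ x ∈ frontier U, w x ≤ m) : ∀ x ∈ U, w x ≤ m := by
  intro x hx
  have hK : IsCompact (closure U) := hb.isCompact_closure
  obtain ⟨z, hz, hmax⟩ := hK.exists_isMaxOn ⟨x, subset_closure hx⟩ hc
  have hxz : w x ≤ w z := hmax (subset_closure hx)
  by_cases hzU : z ∈ U
  · obtain ⟨L, hL0, hLz⟩ := hL z hzU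
    have : IsLocalMax w z := by
      filter_upwards [hU.mem_nhds hzU] with y hy using hmax (subset_closure hy)
    linarith [hLz.nonpos_of_localMax this]
  · refine hxz.trans (hm z ?_)
    rw [hU.frontier_eq]; exact ⟨hz, hzU⟩

lemma normsq_eq (x : En n) : ‖x‖ ^ 2 = ∑ i, (x i) ^ 2 := by
  rw [EuclideanSpace.norm_eq, Real.sq_sqrt (Finset.sum_nonneg fun _ _ => sq_nonneg _)]
  simp

/-- weak maximum principle -/
theorem mp_weak {U : Set (En n)} (hU : IsOpen U) {R : ℝ}
    (hb : U ⊆ closedBall 0 R) {w : En n → ℝ} {δ : ℝ} (hδ : 0 ≤ δ)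
    (hc : ContinuousOn w (closure U)) (hL : ∀ x ∈ U, ∃ L, -δ ≤ L ∧ HasLap w x L) {m : ℝ}
    (hm : ∀ x ∈ frontier U, w x ≤ m) : ∀ x ∈ U, w x ≤ m + δ * R ^ 2 := by
  intro x hx
  have hcl : closure U ⊆ closedBall 0 R := closure_minimal hb isClosed_closedBall
  have key : ∀ η : ℝ, 0 < η → w x ≤ m + (δ + η) * R ^ 2 := by
    intro η hη
    have hq : ∀ y : En n, HasLap (fun y : En n => ‖y‖ ^ 2) y (∑ i : Fin n, 2 * 1) := by
      intro y
      have := HasLap.quad (fun _ => 1) (fun _ => 0) y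
      simpa [normsq_eq] using this
    have hn1 : (1 : ℝ) ≤ n := by exact_mod_cast NeZero.one_le
    have := mp_strict hU (isBounded_closedBall.subset hb)
      (w := fun y => w y + (δ + η) * ‖y‖ ^ 2) (m := m + (δ + η) * R ^ 2)
      (hc.add (by fun_prop)) ?_ ?_ x hx
    · nlinarith [sq_nonneg ‖x‖, mul_nonneg (add_nonneg hδ hη.le) (sq_nonneg ‖x‖)]
    · intro y hy
      obtain ⟨L, h1, h2⟩ := hL y hy
      refine ⟨_, ?_, h2.add ((hq y).const_mul (δ + η))⟩
      simp
      nlinarith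
    · intro y hy
      have h1 := hm y hy
      have h2 : ‖y‖ ≤ R := by simpa using hcl (frontier_subset_closure hy)
      have : (δ + η) * ‖y‖ ^ 2 ≤ (δ + η) * R ^ 2 := by gcongr
      linarith
  refine le_of_forall_pos_le_add fun η hη => ?_
  have := key (η / (R ^ 2 + 1)) (by positivity)
  have h2 : η / (R ^ 2 + 1) * R ^ 2 ≤ η := by
    rw [div_mul_eq_mul_div, div_le_iff₀ (by positivity)]; nlinarith [sq_nonneg R]
  linarith

/-- two sided version -/
theorem mp_abs {U : Set (En n)} (hU : IsOpen U) {R : ℝ}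
    (hb : U ⊆ closedBall 0 R) {w : En n → ℝ} {δ : ℝ} (hδ : 0 ≤ δ)
    (hc : ContinuousOn w (closure U)) (hL : ∀ x ∈ U, ∃ L, |L| ≤ δ ∧ HasLap w x L) {m : ℝ}
    (hm : ∀ x ∈ frontier U, |w x| ≤ m) : ∀ x ∈ U, |w x| ≤ m + δ * R ^ 2 := by
  intro x hx
  rw [abs_le]
  constructor
  · have := mp_weak hU hb (w := fun y => - w y) hδ hc.neg ?_ (m := m) ?_ x hx
    · linarith
    · intro y hy
      obtain ⟨L, h1, h2⟩ := hL y hy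
      exact ⟨_, by linarith [(abs_le.1 h1).2], h2.neg⟩
    · intro y hy
      linarith [(abs_le.1 (hm y hy)).1]
  · refine mp_weak hU hb hδ hc ?_ ?_ x hx
    · intro y hy
      obtain ⟨L, h1, h2⟩ := hL y hy
      exact ⟨_, by linarith [(abs_le.1 h1).1], h2⟩
    · intro y hy
      linarith [(abs_le.1 (hm y hy)).2]

/-! polynomials -/
lemma peval_add (P Q : MvPolynomial (Fin n) ℝ) (x : En n) :
    peval (P + Q) x = peval P x + peval Q x := by simp [peval]
lemma peval_sub (P Q : MvPolynomial (Fin n) ℝ) (x : En n) :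
    peval (P - Q) x = peval P x - peval Q x := by simp [peval]
lemma peval_mul (P Q : MvPolynomial (Fin n) ℝ) (x : En n) :
    peval (P * Q) x = peval P x * peval Q x := by simp [peval]
lemma peval_pow (P : MvPolynomial (Fin n) ℝ) (k : ℕ) (x : En n) :
    peval (P ^ k) x = peval P x ^ k := by simp [peval]
lemma peval_sum {ι : Type*} (s : Finset ι) (P : ι → MvPolynomial (Fin n) ℝ) (x : En n) :
    peval (∑ i ∈ s, P i) x = ∑ i ∈ s, peval (P i) x := by simp [peval]
@[simp] lemma peval_C (c : ℝ) (x : En n) : peval (C c) x = c := by simp [peval]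
@[simp] lemma peval_X (i : Fin n) (x : En n) : peval (X i) x = x i := by simp [peval]
@[simp] lemma peval_zero (x : En n) : peval 0 x = 0 := by simp [peval]
lemma peval_neg (P : MvPolynomial (Fin n) ℝ) (x : En n) : peval (-P) x = - peval P x := by
  simp [peval]

lemma continuous_peval (P : MvPolynomial (Fin n) ℝ) : Continuous (peval P) := by
  unfold peval
  have : Continuous fun x : Fin n → ℝ => MvPolynomial.eval x P := MvPolynomial.continuous_eval P
  exact this.comp (by fun_prop)

/-- derivative along any direction -/
lemma hasDerivAt_peval (P : MvPolynomial (Fin n) ℝ) (x y : En n) (t : ℝ) :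
    HasDerivAt (fun t : ℝ => peval P (x + t • y)) (∑ i, y i * peval (pderiv i P) (x + t • y)) t := by
  induction P using MvPolynomial.induction_on with
  | C a => simpa using hasDerivAt_const t a
  | add p q hp hq =>
    simp only [peval_add, map_add, mul_add, Finset.sum_add_distrib]
    exact hp.add hq
  | mul_X p j hp =>
    have hx : HasDerivAt (fun t : ℝ => peval (X j) (x + t • y)) (y j) t := by
      simp only [peval_X, PiLp.add_apply, PiLp.smul_apply, smul_eq_mul]
      simpa using ((hasDerivAt_id t).mul_const (y j)).const_add (x j)
    have := hp.mul hx
    simp only [peval_mul, Derivation.leibniz, smul_eq_mul, peval_add, pderiv_X]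
    refine HasDerivAt.congr_deriv this ?_
    simp only [mul_add, Finset.sum_add_distrib]
    rw [Finset.sum_mul]
    have e1 : ∑ i, y i * (peval p (x + t • y) * peval ((Pi.single i 1 : Fin n → MvPolynomial (Fin n) ℝ) j) (x + t • y)) =
        peval p (x + t • y) * y j := by
      rw [Finset.sum_eq_single j]
      · simp [peval]; ring
      · intro b _ hb
        simp [Pi.single_apply, hb.symm]
      · simp
    have e2 : ∑ i, y i * (peval (X j) (x + t • y) * peval (pderiv i p) (x + t • y)) =
        ∑ i, y i * peval (pderiv i p) (x + t • y) * peval (X j) (x + t • y) :=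
      Finset.sum_congr rfl fun i _ => by ring
    rw [e1, e2, add_comm]

lemma HasLap.peval (P : MvPolynomial (Fin n) ℝ) (x : En n) :
    HasLap (peval P) x (peval (plap P) x) := by
  have h : ∀ (Q : MvPolynomial (Fin n) ℝ) (i : Fin n) (t : ℝ),
      HasDerivAt (fun t : ℝ => _root_.peval Q (x + t • ev i))
        (_root_.peval (pderiv i Q) (x + t • ev i)) t := by
    intro Q i t
    have := hasDerivAt_peval Q x (ev i) t
    simpa [ev_apply] using this
  refine ⟨fun i => _root_.peval (pderiv i (pderiv i P)) x, fun i => ⟨_, .of_forall (h P i), ?_⟩, ?_⟩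
  · simpa using h (pderiv i P) i 0
  · simp [plap, peval_sum]

lemma hasLap_of_differentiable {V : Set (En n)} (hV : IsOpen V) {u : En n → ℝ} {x : En n}
    (hx : x ∈ V) (h1 : ∀ y ∈ V, DifferentiableAt ℝ u y) (h2 : DifferentiableAt ℝ (fderiv ℝ u) x) :
    HasLap u x (∑ i, fderiv ℝ (fderiv ℝ u) x (ev i) (ev i)) := by
  refine ⟨_, fun i => ⟨fun t => fderiv ℝ u (x + t • ev i) (ev i), ?_, ?_⟩, rfl⟩
  · have hc : Tendsto (fun t : ℝ => x + t • ev i) (𝓝 0) (𝓝 x) := by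
      have : Continuous (fun t : ℝ => x + t • (ev i : En n)) := by fun_prop
      simpa using this.tendsto 0
    filter_upwards [hc.eventually (hV.mem_nhds hx)] with t ht
    have hl : HasDerivAt (fun t : ℝ => x + t • (ev i : En n)) (ev i) t := by
      simpa using ((hasDerivAt_id t).smul_const (ev i : En n)).const_add x
    exact (h1 _ ht).hasFDerivAt.comp_hasDerivAt t hl
  · have hl : HasDerivAt (fun t : ℝ => x + t • (ev i : En n)) (ev i) 0 := by
      simpa using ((hasDerivAt_id (0:ℝ)).smul_const (ev i : En n)).const_add x
    have hx0 : x = x + (0:ℝ) • (ev i : En n) := by simp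
    have h3 : HasFDerivAt (fderiv ℝ u) (fderiv ℝ (fderiv ℝ u) x) (x + (0:ℝ) • (ev i : En n)) := by
      rw [← hx0]; exact h2.hasFDerivAt
    have := h3.comp_hasDerivAt (0:ℝ) hl
    exact this.clm_apply (hasDerivAt_const _ _) |>.congr_deriv (by simp)

/-! part 2 -/

abbrev MP (n : ℕ) := MvPolynomial (Fin n) ℝ

lemma mdeg_eq (d : Fin n →₀ ℕ) : mdeg d = d.degree := rfl

lemma mdeg_add (d e : Fin n →₀ ℕ) : mdeg (d + e) = mdeg d + mdeg e := by
  simp [mdeg_eq]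

lemma mdeg_single (i : Fin n) (k : ℕ) : mdeg (Finsupp.single i k) = k := by
  simp [mdeg_eq]

/-- truncation: keep the terms of degree `< m` -/
def tr (m : ℕ) (p : MP n) : MP n := ∑ d ∈ Finset.range m, homogeneousComponent d p

lemma coeff_tr (m : ℕ) (p : MP n) (d : Fin n →₀ ℕ) :
    coeff d (tr m p) = if mdeg d < m then coeff d p else 0 := by
  simp only [tr, coeff_sum, coeff_homogeneousComponent, mdeg_eq, Finset.sum_ite_eq,
    Finset.mem_range]
  by_cases h : Finsupp.degree d < m <;> simp [h]

lemma tr_sub (m : ℕ) (p q : MP n) : tr m (p - q) = tr m p - tr m q := by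
  simp [tr, Finset.sum_sub_distrib]

lemma pderiv_tr (m : ℕ) (i : Fin n) (p : MP n) : pderiv i (tr (m + 1) p) = tr m (pderiv i p) := by
  ext d
  simp only [coeff_pderiv, coeff_tr, mdeg_add, mdeg_single]
  by_cases h : mdeg d < m
  · simp [h]
  · simp [h]

lemma pderiv_comm' (i j : Fin n) (p : MP n) : pderiv i (pderiv j p) = pderiv j (pderiv i p) := by
  ext d
  simp only [coeff_pderiv]
  by_cases h : i = j
  · subst h; rfl
  · have h' : j ≠ i := fun e => h e.symm
    rw [add_right_comm]
    simp [Finsupp.single_apply, h, h']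
    ring

lemma plap_pderiv (i : Fin n) (p : MP n) : plap (pderiv i p) = pderiv i (plap p) := by
  simp only [plap, map_sum]
  refine Finset.sum_congr rfl fun j _ => ?_
  rw [pderiv_comm' j i, pderiv_comm' j i]

lemma plap_add (p q : MP n) : plap (p + q) = plap p + plap q := by
  simp [plap, Finset.sum_add_distrib]
lemma plap_sub (p q : MP n) : plap (p - q) = plap p - plap q := by
  simp [plap, Finset.sum_sub_distrib]
lemma plap_C_mul (c : ℝ) (p : MP n) : plap (C c * p) = C c * plap p := by
  simp [plap, Finset.mul_sum, pderiv_C_mul]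
lemma plap_mul (p q : MP n) : plap (p * q) = p * plap q + q * plap p +
    2 * ∑ i, pderiv i p * pderiv i q := by
  simp only [plap, pderiv_mul, map_add, Finset.mul_sum, ← Finset.sum_add_distrib]
  refine Finset.sum_congr rfl fun i _ => ?_
  ring

/-- `R^2 - |x|^2` -/
def eta (n : ℕ) (R : ℝ) : MP n := C (R ^ 2) - ∑ i, X i ^ 2

lemma peval_eta (R : ℝ) (x : En n) : peval (eta n R) x = R ^ 2 - ‖x‖ ^ 2 := by
  simp [eta, peval_sub, peval_sum, peval_pow, normsq_eq]

lemma pderiv_eta (R : ℝ) (i : Fin n) : pderiv i (eta n R) = - (C 2 * X i) := by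
  simp only [eta, map_sub, map_sum, pderiv_C, pderiv_pow, zero_sub]
  rw [Finset.sum_eq_single i]
  · simp; rfl
  · intro j _ hj
    simp [pderiv_X, Pi.single_apply, hj]
  · simp

lemma plap_eta (R : ℝ) : plap (eta n R) = - C (2 * (n : ℝ)) := by
  simp only [plap, pderiv_eta, map_neg, pderiv_C_mul, pderiv_X_self]
  rw [Finset.sum_const, Finset.card_univ, Fintype.card_fin, nsmul_eq_mul, map_mul, map_natCast,
    mul_one]
  ring

lemma grad_est (p : MP n) (hp : plap p = 0) {R b : ℝ} (hR : 0 < R) (hb : 0 ≤ b)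
    (h : ∀ x : En n, ‖x‖ ≤ R → |peval p x| ≤ b) (i : Fin n) (x : En n) (hx : ‖x‖ ≤ R / 2) :
    |peval (pderiv i p) x| ≤ (2 * n + 12) * b / R := by
  set q := pderiv i p with hq
  have hq0 : plap q = 0 := by rw [hq, plap_pderiv, hp, map_zero]
  set lam : ℝ := (2 * n + 12) * R ^ 2 with hlam
  set W : MP n := (eta n R * q) * (eta n R * q) + C lam * (p * p) with hW
  have hlap : ∀ y : En n, ‖y‖ ≤ R → 0 ≤ peval (plap W) y := by
    intro y hy
    have e1 : peval (plap W) y = ∑ j, (2 * (peval (eta n R) y * peval (pderiv j q) y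
        - 4 * (y j * peval q y)) ^ 2) - 24 * ‖y‖ ^ 2 * peval q y ^ 2
        - 4 * n * (R ^ 2 - ‖y‖ ^ 2) * peval q y ^ 2
        + 2 * lam * ∑ j, (peval (pderiv j p) y) ^ 2 := by
      rw [hW, plap_add, plap_C_mul, plap_mul, plap_mul p p, hp, plap_mul (eta n R) q, hq0, plap_eta]
      simp only [peval_add, peval_mul, peval_sub, peval_neg, peval_sum, peval_C, pderiv_mul,
        pderiv_eta, peval_X, peval_zero]
      have h2 : peval (2 : MP n) y = 2 := by
        rw [show (2 : MP n) = C 2 from (map_ofNat C 2).symm, peval_C]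
      rw [h2, peval_eta, normsq_eq]
      set N := ∑ k, y k ^ 2
      set Q := peval q y
      have e2 : ∑ j, (2 * ((R ^ 2 - N) * peval (pderiv j q) y - 4 * (y j * Q)) ^ 2) =
        2 * (R ^ 2 - N) ^ 2 * ∑ j, (peval (pderiv j q) y) ^ 2
         - 16 * (R ^ 2 - N) * Q * ∑ j, y j * peval (pderiv j q) y + 32 * Q ^ 2 * N := by
        simp only [N, Finset.mul_sum, ← Finset.sum_add_distrib, ← Finset.sum_sub_distrib]
        refine Finset.sum_congr rfl fun j _ => ?_
        ring
      have e3 : ∑ j, (-(2 * y j) * Q + (R ^ 2 - N) * peval (pderiv j q) y) *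
          (-(2 * y j) * Q + (R ^ 2 - N) * peval (pderiv j q) y) =
          (R ^ 2 - N) ^ 2 * ∑ j, (peval (pderiv j q) y) ^ 2
         - 4 * (R ^ 2 - N) * Q * ∑ j, y j * peval (pderiv j q) y + 4 * Q ^ 2 * N := by
        simp only [N, Finset.mul_sum, ← Finset.sum_add_distrib, ← Finset.sum_sub_distrib]
        refine Finset.sum_congr rfl fun j _ => ?_
        ring
      have e4 : ∑ j, -(2 * y j) * peval (pderiv j q) y = -2 * ∑ j, y j * peval (pderiv j q) y := by
        rw [Finset.mul_sum]
        refine Finset.sum_congr rfl fun j _ => ?_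
        ring
      have e5 : ∑ j, peval (pderiv j p) y * peval (pderiv j p) y = ∑ j, peval (pderiv j p) y ^ 2 := by
        refine Finset.sum_congr rfl fun j _ => ?_
        ring
      rw [e2, e4, e5]
      have e3' := e3
      simp only [neg_mul] at e3'
      simp only [neg_mul]
      rw [e3']; ring
    rw [e1]
    have h1 : 0 ≤ ∑ j, (2 * (peval (eta n R) y * peval (pderiv j q) y
        - 4 * (y j * peval q y)) ^ 2) := Finset.sum_nonneg fun j _ => by positivity
    have h2 : peval q y ^ 2 ≤ ∑ j, (peval (pderiv j p) y) ^ 2 :=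
      Finset.single_le_sum (f := fun j => (peval (pderiv j p) y) ^ 2)
        (fun j _ => sq_nonneg _) (Finset.mem_univ i)
    have h3 : ‖y‖ ^ 2 ≤ R ^ 2 := by gcongr
    have hl0 : 0 ≤ lam := by positivity
    have h4 : 2 * lam * peval q y ^ 2 ≤ 2 * lam * ∑ j, (peval (pderiv j p) y) ^ 2 := by gcongr
    have h5 : 24 * ‖y‖ ^ 2 * peval q y ^ 2 ≤ 24 * R ^ 2 * peval q y ^ 2 := by gcongr
    have h6 : 4 * n * (R ^ 2 - ‖y‖ ^ 2) * peval q y ^ 2 ≤ 4 * n * R ^ 2 * peval q y ^ 2 := by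
      gcongr; linarith [sq_nonneg ‖y‖]
    have h7 : 2 * lam * peval q y ^ 2 = 24 * R ^ 2 * peval q y ^ 2 + 4 * n * R ^ 2 * peval q y ^ 2 := by
      rw [hlam]; ring
    linarith
  have hWx := mp_weak (U := ball (0 : En n) R) isOpen_ball ball_subset_closedBall
    (w := peval W) le_rfl (continuous_peval W).continuousOn (m := lam * b ^ 2)
    (fun y hy => ⟨_, by simpa using hlap y (by simpa using (mem_ball.1 hy).le), HasLap.peval W y⟩)
    (by
      intro y hy
      rw [frontier_ball _ hR.ne'] at hy
      have hy' : ‖y‖ = R := by simpa using hy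
      rw [hW]
      simp only [peval_add, peval_mul, peval_eta, hy', peval_C]
      have := h y hy'.le
      have h2 : peval p y ^ 2 ≤ b ^ 2 := sq_le_sq' (abs_le.1 this).1 (abs_le.1 this).2
      have hl0 : 0 ≤ lam := by positivity
      nlinarith) x (by rw [mem_ball_zero_iff]; linarith)
  simp only [hW, peval_add, peval_mul, peval_eta, peval_C] at hWx
  have hl0 : 0 ≤ lam := by positivity
  have h1 : (R ^ 2 - ‖x‖ ^ 2) ≥ 3 / 4 * R ^ 2 := by nlinarith [norm_nonneg x]
  have h2 : (3 / 4 * R ^ 2) ^ 2 * peval q x ^ 2 ≤ lam * b ^ 2 := by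
    have : (3 / 4 * R ^ 2) ^ 2 ≤ (R ^ 2 - ‖x‖ ^ 2) ^ 2 := by gcongr
    have h3 : (3 / 4 * R ^ 2) ^ 2 * peval q x ^ 2 ≤ (R ^ 2 - ‖x‖ ^ 2) ^ 2 * peval q x ^ 2 := by gcongr
    nlinarith [mul_nonneg hl0 (mul_self_nonneg (peval p x))]
  refine abs_le_of_sq_le_sq ?_ (by positivity)
  rw [div_pow, le_div_iff₀ (by positivity)]
  have hR2 : 0 < R ^ 2 := by positivity
  have h3 : 9 / 16 * (peval q x ^ 2 * R ^ 2) ≤ (2 * n + 12) * b ^ 2 := by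
    have : R ^ 2 * (9 / 16 * (peval q x ^ 2 * R ^ 2)) ≤ R ^ 2 * ((2 * n + 12) * b ^ 2) := by
      rw [hlam] at h2; nlinarith
    exact le_of_mul_le_mul_left this hR2
  have hn0 : (0 : ℝ) ≤ n := Nat.cast_nonneg n
  nlinarith [mul_nonneg hn0 (sq_nonneg b), mul_nonneg (mul_nonneg hn0 hn0) (sq_nonneg b), sq_nonneg b]

lemma coeff_zero_eq (p : MP n) : coeff 0 p = peval p 0 := by
  have : (fun i => (0 : En n) i) = (0 : Fin n → ℝ) := by ext; simp
  rw [peval, this]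
  induction p using MvPolynomial.induction_on with
  | C a => simp
  | add p q hp hq => simp [hp, hq]
  | mul_X p i hp => simp [coeff_mul_X']

lemma head_est (m : ℕ) : ∃ C : ℝ, 0 < C ∧ ∀ (p : MP n), plap p = 0 → ∀ R b : ℝ, 0 < R → 0 ≤ b →
    (∀ x : En n, ‖x‖ ≤ R → |peval p x| ≤ b) → ∀ d : Fin n →₀ ℕ, mdeg d = m →
    |coeff d p| ≤ C * b / R ^ m := by
  induction m with
  | zero =>
    refine ⟨1, one_pos, fun p hp R b hR hb h d hd => ?_⟩
    have : d = 0 := by rw [mdeg_eq, Finsupp.degree_eq_zero_iff] at hd; exact hd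
    rw [this, coeff_zero_eq]
    simpa using h 0 (by simpa using hR.le)
  | succ m ih =>
    obtain ⟨C, hC, ih⟩ := ih
    refine ⟨C * (2 * n + 12) * 2 ^ m, by positivity, fun p hp R b hR hb h d hd => ?_⟩
    have hd0 : d ≠ 0 := by rintro rfl; simp [mdeg_eq] at hd
    obtain ⟨i, hi⟩ := Finsupp.ne_iff.1 hd0
    have hle : Finsupp.single i 1 ≤ d := by
      rw [Finsupp.single_le_iff]; exact Nat.one_le_iff_ne_zero.2 (by simpa using hi)
    obtain ⟨e, rfl⟩ : ∃ e, d = e + Finsupp.single i 1 := ⟨d - Finsupp.single i 1, (tsub_add_cancel_of_le hle).symm⟩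
    have he : mdeg e = m := by rw [mdeg_add, mdeg_single] at hd; omega
    have h1 := ih (pderiv i p) (by rw [plap_pderiv, hp, map_zero]) (R / 2) ((2 * n + 12) * b / R)
      (by positivity) (by positivity) (fun x hx => grad_est p hp hR hb h i x hx) e he
    rw [coeff_pderiv, abs_mul] at h1
    have h2 : |coeff (e + Finsupp.single i 1) p| ≤ |coeff (e + Finsupp.single i 1) p| * |((e i : ℝ) + 1)| := by
      refine le_mul_of_one_le_right (abs_nonneg _) ?_
      rw [abs_of_nonneg (by positivity)]
      have : (0 : ℝ) ≤ e i := Nat.cast_nonneg _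
      linarith
    refine (h2.trans h1).trans (le_of_eq ?_)
    rw [div_pow, pow_succ]
    field_simp

lemma norm_apply_le (x : En n) (i : Fin n) : |x i| ≤ ‖x‖ := by
  have := PiLp.norm_apply_le x i
  simpa using this

lemma mvt_poly (q : MP n) (x : En n) {B : ℝ}
    (h : ∀ i, ∀ t ∈ Icc (0 : ℝ) 1, |peval (pderiv i q) (t • x)| ≤ B) :
    |peval q x - peval q 0| ≤ n * ‖x‖ * B := by
  have := norm_image_sub_le_of_norm_deriv_le_segment_01' (f := fun t : ℝ => peval q (0 + t • x))
    (f' := fun t => ∑ i, x i * peval (pderiv i q) (0 + t • x)) (C := n * ‖x‖ * B)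
    (fun t _ => (hasDerivAt_peval q 0 x t).hasDerivWithinAt) ?_
  · simpa using this
  · intro t ht
    refine (norm_sum_le _ _).trans ?_
    have : ∀ i ∈ Finset.univ, ‖x i * peval (pderiv i q) (0 + t • x)‖ ≤ ‖x‖ * B := by
      intro i _
      rw [Real.norm_eq_abs, abs_mul, zero_add]
      exact mul_le_mul (norm_apply_le x i) (h i t ⟨ht.1, ht.2.le⟩) (abs_nonneg _) (norm_nonneg _)
    refine (Finset.sum_le_sum this).trans (le_of_eq ?_)
    simp; ring

lemma tail_est (m : ℕ) : ∃ C : ℝ, 0 < C ∧ ∀ (p : MP n), plap p = 0 → ∀ R b : ℝ, 0 < R → 0 ≤ b →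
    (∀ x : En n, ‖x‖ ≤ R → |peval p x| ≤ b) → ∀ x : En n, ‖x‖ ≤ R / 2 ^ m →
    |peval p x - peval (tr m p) x| ≤ C * b * (‖x‖ / R) ^ m := by
  induction m with
  | zero =>
    refine ⟨1, one_pos, fun p hp R b hR hb h x hx => ?_⟩
    simpa [tr] using h x (by simpa using hx)
  | succ m ih =>
    obtain ⟨C, hC, ih⟩ := ih
    have hn0 : (0 : ℝ) < n := by exact_mod_cast NeZero.pos n
    refine ⟨n * C * (2 * n + 12) * 2 ^ m, by positivity, fun p hp R b hR hb h x hx => ?_⟩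
    have key := mvt_poly (p - tr (m + 1) p) x
      (B := C * ((2 * n + 12) * b / R) * (‖x‖ / (R / 2)) ^ m) ?_
    · have h0 : peval (p - tr (m + 1) p) 0 = 0 := by
        rw [← coeff_zero_eq, coeff_sub, coeff_tr]; simp [mdeg_eq]
      rw [h0, sub_zero, peval_sub] at key
      refine key.trans (le_of_eq ?_)
      rw [pow_succ, div_pow, div_pow, div_pow]
      field_simp
    · intro i t ht
      have hn : ‖t • x‖ ≤ ‖x‖ := by
        rw [norm_smul, Real.norm_eq_abs, abs_of_nonneg ht.1]
        exact mul_le_of_le_one_left (norm_nonneg _) ht.2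
      have := ih (pderiv i p) (by rw [plap_pderiv, hp, map_zero]) (R / 2) ((2 * n + 12) * b / R)
        (by positivity) (by positivity) (fun x hx => grad_est p hp hR hb h i x hx) (t • x)
        (hn.trans (hx.trans (le_of_eq (by rw [pow_succ]; field_simp))))
      rw [map_sub, pderiv_tr, peval_sub]
      refine this.trans ?_
      gcongr

/-! part 3 -/

lemma poly_zero_of_open (p : MP n) {U : Set (En n)} (hU : IsOpen U) {x : En n} (hx : x ∈ U)
    (h : ∀ y ∈ U, peval p y = 0) : p = 0 := by
  have hU' : IsOpen (WithLp.toLp 2 ⁻¹' U : Set (Fin n → ℝ)) :=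
    hU.preimage (PiLp.continuous_toLp 2 _)
  obtain ⟨ε, hε, hb⟩ := Metric.isOpen_iff.1 hU' (WithLp.ofLp x) (by simpa using hx)
  refine MvPolynomial.funext_set (fun i => Metric.ball (x i) ε) (fun i => ?_) (fun y hy => ?_)
  · rw [Real.ball_eq_Ioo]; exact Set.Ioo_infinite (by linarith)
  · have hy' : y ∈ Metric.ball (WithLp.ofLp x) ε := by
      rw [ball_pi _ hε]; exact hy
    have := h (WithLp.toLp 2 y) (hb hy')
    simpa [peval] using this

lemma coeff_eq_zero_of_mdeg {p : MP n} {m : ℕ} (hp : p.totalDegree ≤ m) {d : Fin n →₀ ℕ}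
    (hd : m < mdeg d) : coeff d p = 0 :=
  coeff_eq_zero_of_totalDegree_lt (lt_of_le_of_lt hp hd)

lemma totalDegree_le_of_coeff {p : MP n} {m : ℕ} (h : ∀ d, m < mdeg d → coeff d p = 0) :
    p.totalDegree ≤ m := by
  rw [totalDegree]
  refine Finset.sup_le fun d hd => ?_
  by_contra hlt
  exact (mem_support_iff.1 hd) (h d (not_le.1 hlt))

lemma coeff_plap (p : MP n) (d : Fin n →₀ ℕ) : coeff d (plap p) =
    ∑ i, coeff (d + Finsupp.single i 2) p * (((d i : ℝ) + 2) * ((d i : ℝ) + 1)) := by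
  simp only [plap, coeff_sum]
  refine Finset.sum_congr rfl fun i _ => ?_
  rw [coeff_pderiv, coeff_pderiv, add_assoc, ← Finsupp.single_add]
  simp
  ring

lemma totalDegree_plap {p : MP n} {m : ℕ} (hp : p.totalDegree ≤ m + 2) :
    (plap p).totalDegree ≤ m := by
  refine totalDegree_le_of_coeff fun d hd => ?_
  rw [coeff_plap]
  refine Finset.sum_eq_zero fun i _ => ?_
  rw [coeff_eq_zero_of_mdeg hp (by rw [mdeg_add, mdeg_single]; omega), zero_mul]

lemma totalDegree_eta (R : ℝ) : (eta n R).totalDegree ≤ 2 := by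
  refine (totalDegree_sub _ _).trans ?_
  simp only [totalDegree_C, zero_le, sup_of_le_right]
  refine totalDegree_finsetSum_le fun i _ => ?_
  simp [totalDegree_X_pow]

/-- polynomial Dirichlet problem on the ball -/
lemma dirichlet_ball (p : MP n) {R : ℝ} (hR : 0 < R) :
    ∃ H : MP n, plap H = 0 ∧ ∀ x : En n, ‖x‖ = R → peval H x = peval p x := by
  set D := p.totalDegree with hD
  let V := restrictTotalDegree (Fin n) ℝ D
  have hdeg : ∀ q : V, plap (eta n R * q.1) ∈ V := by
    intro q
    rw [mem_restrictTotalDegree]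
    refine totalDegree_plap ?_
    refine (totalDegree_mul _ _).trans ?_
    have := (mem_restrictTotalDegree _ _ _).1 q.2
    have := totalDegree_eta (n := n) R
    omega
  let L : V →ₗ[ℝ] V :=
    { toFun := fun q => ⟨plap (eta n R * q.1), hdeg q⟩
      map_add' := fun a b => by
        ext1; simp [mul_add, plap_add]
      map_smul' := fun c a => by
        ext1
        simp only [SetLike.val_smul, RingHom.id_apply, smul_eq_C_mul]
        rw [← plap_C_mul]; congr 1; ring }
  have hinj : Function.Injective L := by
    rw [← LinearMap.ker_eq_bot, LinearMap.ker_eq_bot']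
    intro q hq
    have hq' : plap (eta n R * q.1) = 0 := congrArg Subtype.val hq
    have hz : ∀ x ∈ ball (0 : En n) R, |peval (eta n R * q.1) x| ≤ 0 + 0 * R ^ 2 := by
      refine mp_abs isOpen_ball ball_subset_closedBall le_rfl
        (continuous_peval _).continuousOn (fun x hx => ⟨_, ?_, HasLap.peval _ x⟩) ?_
      · rw [hq']; simp
      · intro x hx
        rw [frontier_ball _ hR.ne'] at hx
        have hx' : ‖x‖ = R := by simpa using hx
        rw [peval_mul, peval_eta, hx']; simp
    ext1
    refine poly_zero_of_open q.1 (U := ball 0 R) isOpen_ball (mem_ball_self hR) fun y hy => ?_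
    have h1 := hz y hy
    rw [peval_mul, peval_eta] at h1
    have h2 : ‖y‖ < R := by simpa using hy
    have h3 : R ^ 2 - ‖y‖ ^ 2 ≠ 0 := by nlinarith [norm_nonneg y]
    have h4 : (R ^ 2 - ‖y‖ ^ 2) * peval q.1 y = 0 := by
      rw [← abs_nonpos_iff]; simpa using h1
    exact (mul_eq_zero.1 h4).resolve_left h3
  have hsurj := LinearMap.surjective_of_injective hinj
  obtain ⟨q, hq⟩ := hsurj ⟨plap p, (mem_restrictTotalDegree _ _ _).2
    (totalDegree_plap (by omega))⟩
  have hq' : plap (eta n R * q.1) = plap p := congrArg Subtype.val hq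
  refine ⟨p - eta n R * q.1, by rw [plap_sub, hq', sub_self], fun x hx => ?_⟩
  rw [peval_sub, peval_mul, peval_eta, hx]; simp

/-- polynomial approximation on a sphere -/
lemma approx_sphere {φ : En n → ℝ} {R : ℝ} (hφ : ContinuousOn φ (sphere (0 : En n) R)) {ε : ℝ}
    (hε : 0 < ε) : ∃ p : MP n, ∀ x : En n, ‖x‖ = R → |peval p x - φ x| ≤ ε := by
  let F : MP n →ₐ[ℝ] C(sphere (0 : En n) R, ℝ) :=
    aeval (fun i => ⟨fun x => x.1 i, by fun_prop⟩)
  have hF : ∀ p (x : sphere (0 : En n) R), F p x = peval p x.1 := by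
    intro p x
    induction p using MvPolynomial.induction_on with
    | C a => simp [F]
    | add p q hp hq => simp [hp, hq, peval_add]
    | mul_X p i hp => simp [hp, peval_mul, F]
  have hsep : F.range.SeparatesPoints := by
    intro x y hxy
    have : x.1 ≠ y.1 := fun h => hxy (Subtype.ext h)
    obtain ⟨i, hi⟩ : ∃ i, x.1 i ≠ y.1 i := by
      by_contra! hc
      exact this (by ext i; exact hc i)
    refine ⟨_, ⟨F (X i), ⟨X i, rfl⟩, rfl⟩, ?_⟩
    simpa [hF] using hi
  obtain ⟨⟨g, p, hp⟩, hg⟩ := ContinuousMap.exists_mem_subalgebra_near_continuous_of_separatesPoints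
    F.range hsep (fun x => φ x.1) (continuousOn_iff_continuous_domRestrict.1 hφ) ε hε
  refine ⟨p, fun x hx => ?_⟩
  have := hg ⟨x, by simpa using hx⟩
  have h2 := hF p ⟨x, by simpa using hx⟩
  rw [← h2]
  subst hp
  exact this.le

/-- reflection in the last coordinate -/
def rfx (x : En n) : En n := WithLp.toLp 2 (fun i => if i = lastIdx n then - x i else x i)

lemma rfx_apply (x : En n) (i : Fin n) : rfx x i = if i = lastIdx n then - x i else x i := rfl

@[simp] lemma xn_rfx (x : En n) : xn (rfx x) = - xn x := by simp [xn, rfx_apply]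
@[simp] lemma norm_rfx (x : En n) : ‖rfx x‖ = ‖x‖ := by
  have : ‖rfx x‖ ^ 2 = ‖x‖ ^ 2 := by
    rw [normsq_eq, normsq_eq]
    refine Finset.sum_congr rfl fun i _ => ?_
    rw [rfx_apply]; split_ifs <;> ring
  exact (sq_eq_sq₀ (norm_nonneg _) (norm_nonneg _)).1 this
@[simp] lemma rfx_rfx (x : En n) : rfx (rfx x) = x := by
  ext i; rw [rfx_apply, rfx_apply]; split_ifs <;> ring
lemma continuous_rfx : Continuous (rfx : En n → En n) := by
  unfold rfx
  refine (PiLp.continuous_toLp 2 _).comp (continuous_pi fun i => ?_)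
  split_ifs <;> fun_prop

/-- odd in the last variable -/
def OddP (p : MP n) : Prop := ∀ d : Fin n →₀ ℕ, Even (d (lastIdx n)) → coeff d p = 0

def oddPart (p : MP n) : MP n :=
  ∑ d ∈ p.support.filter (fun d => Odd (d (lastIdx n))), monomial d (coeff d p)

lemma coeff_oddPart (p : MP n) (d : Fin n →₀ ℕ) :
    coeff d (oddPart p) = if Odd (d (lastIdx n)) then coeff d p else 0 := by
  classical
  simp only [oddPart, coeff_sum, coeff_monomial]
  rw [Finset.sum_ite_eq']
  by_cases h : Odd (d (lastIdx n))
  · by_cases h2 : coeff d p = 0 <;> simp [h, h2]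
  · simp [h]

lemma peval_eq (p : MP n) (x : En n) : peval p x = ∑ d ∈ p.support, coeff d p * ∏ i, x i ^ d i := by
  rw [peval, eval_eq']

lemma peval_eq_of_subset (p : MP n) (x : En n) {s : Finset (Fin n →₀ ℕ)} (h : p.support ⊆ s) :
    peval p x = ∑ d ∈ s, coeff d p * ∏ i, x i ^ d i := by
  rw [peval_eq]
  refine Finset.sum_subset h fun d _ hd => ?_
  rw [notMem_support_iff.1 hd, zero_mul]

lemma prod_rfx (x : En n) (d : Fin n →₀ ℕ) :
    ∏ i, rfx x i ^ d i = (-1) ^ d (lastIdx n) * ∏ i, x i ^ d i := by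
  have : ∀ i, rfx x i ^ d i = (if i = lastIdx n then (-1) ^ d i else 1) * x i ^ d i := by
    intro i
    rw [rfx_apply]
    split_ifs
    · rw [neg_pow]
    · simp
  simp_rw [this]
  rw [Finset.prod_mul_distrib, Finset.prod_ite_eq']
  simp

lemma peval_oddPart (p : MP n) (x : En n) :
    peval (oddPart p) x = (peval p x - peval p (rfx x)) / 2 := by
  have hs : (oddPart p).support ⊆ p.support := by
    intro d hd
    rw [mem_support_iff] at *
    rw [coeff_oddPart] at hd
    split_ifs at hd with h
    · exact hd
    · exact absurd rfl hd
  rw [peval_eq_of_subset _ _ hs, peval_eq p, peval_eq p, ← Finset.sum_sub_distrib,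
    Finset.sum_div]
  refine Finset.sum_congr rfl fun d _ => ?_
  rw [prod_rfx, coeff_oddPart]
  split_ifs with h
  · rw [h.neg_one_pow]; ring
  · rw [(Nat.not_odd_iff_even.1 h).neg_one_pow]; ring

lemma OddP.oddPart (p : MP n) : OddP (oddPart p) := fun d hd => by
  rw [coeff_oddPart, if_neg (Nat.not_odd_iff_even.2 hd)]

lemma oddPart_eq {p : MP n} (h : OddP p) : oddPart p = p := by
  ext d
  rw [coeff_oddPart]
  split_ifs with h1
  · rfl
  · exact (h d (Nat.not_odd_iff_even.1 h1)).symm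

lemma OddP.peval_rfx {p : MP n} (h : OddP p) (x : En n) : peval p (rfx x) = - peval p x := by
  have := peval_oddPart p x
  rw [oddPart_eq h] at this
  linarith

lemma plap_oddPart {p : MP n} (h : plap p = 0) : plap (oddPart p) = 0 := by
  ext d
  rw [coeff_plap]
  have key : ∀ i : Fin n, Odd ((d + Finsupp.single i 2 : Fin n →₀ ℕ) (lastIdx n)) ↔ Odd (d (lastIdx n)) := by
    intro i
    rw [Finsupp.add_apply, Finsupp.single_apply]
    split_ifs
    · rw [Nat.odd_add]; simp
    · simp
  simp only [coeff_oddPart, key]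
  by_cases ho : Odd (d (lastIdx n))
  · simp only [ho, if_true]
    rw [← coeff_plap, h]
  · simp [ho]

lemma OddP.sub {p q : MP n} (hp : OddP p) (hq : OddP q) : OddP (p - q) := fun d hd => by
  rw [coeff_sub, hp d hd, hq d hd, sub_zero]

/-- approximate odd harmonic replacement -/
lemma odd_replacement {φ : En n → ℝ} {R : ℝ} (hR : 0 < R)
    (hφ : ContinuousOn φ (sphere (0 : En n) R)) (hodd : ∀ x, φ (rfx x) = - φ x) {ε : ℝ}
    (hε : 0 < ε) : ∃ H : MP n, plap H = 0 ∧ OddP H ∧ ∀ x : En n, ‖x‖ = R → |peval H x - φ x| ≤ ε := by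
  obtain ⟨p, hp⟩ := approx_sphere hφ hε
  obtain ⟨H, hH, hHp⟩ := dirichlet_ball p hR
  refine ⟨_root_.oddPart H, plap_oddPart hH, OddP.oddPart H, fun x hx => ?_⟩
  rw [peval_oddPart, hHp x hx, hHp (rfx x) (by simpa using hx)]
  have h1 := abs_le.1 (hp x hx)
  have h2 := abs_le.1 (hp (rfx x) (by simpa using hx))
  rw [hodd] at h2
  rw [abs_le]; constructor <;> linarith

/-! part 4 : the core lemma -/

lemma hasLap_xn (a b c : ℝ) (x : En n) :
    HasLap (fun y : En n => a * (xn y) ^ 2 + b * xn y + c) x (2 * a) := by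
  have h := (HasLap.quad (fun i => if i = lastIdx n then a else 0)
    (fun i => if i = lastIdx n then b else 0) x).add (HasLap.const c x)
  simpa [Finset.sum_add_distrib, xn] using h

lemma hasLap_normsub (z x : En n) :
    HasLap (fun y : En n => ‖y - z‖ ^ 2) x (2 * n) := by
  have h := (HasLap.quad (fun _ => 1) (fun i => - 2 * z i) x).add (HasLap.const (‖z‖ ^ 2) x)
  have e : (fun y : En n => ‖y - z‖ ^ 2) =
      fun y : En n => ∑ i, (1 * (y i) ^ 2 + - 2 * z i * y i) + ‖z‖ ^ 2 := by
    ext y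
    rw [normsq_eq, normsq_eq, ← Finset.sum_add_distrib]
    refine Finset.sum_congr rfl fun i _ => ?_
    simp; ring
  rw [e]
  convert h using 1
  simp; ring

lemma abs_xn_le (x : En n) : |xn x| ≤ ‖x‖ := norm_apply_le x _

lemma continuous_xn : Continuous (xn : En n → ℝ) := by unfold xn; fun_prop

lemma xn_sub_sq_le (x z : En n) : (xn x - xn z) ^ 2 ≤ ‖x - z‖ ^ 2 := by
  have h := abs_xn_le (x - z)
  have : xn (x - z) = xn x - xn z := by simp [xn]
  rw [this] at h
  exact sq_le_sq' (by linarith [(abs_le.1 h).1]) (abs_le.1 h).2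

/-- data at scale `R` -/
structure Dat (Ω : Set (En n)) (v : En n → ℝ) (R s E δ : ℝ) : Prop where
  op : IsOpen Ω
  R0 : 0 < R
  s0 : 0 < s
  E0 : 0 < E
  d0 : 0 ≤ δ
  lo : ∀ x ∈ Ω, ‖x‖ < R → -s ≤ xn x
  up : ∀ x, ‖x‖ < R → s < xn x → x ∈ Ω
  ct : ContinuousOn v (closure Ω ∩ ball 0 R)
  lap : ∀ x ∈ Ω, ‖x‖ < R → ∃ L, |L| ≤ δ / R ^ 2 ∧ HasLap v x L
  bd : ∀ x ∈ frontier Ω, ‖x‖ < R → |v x| ≤ δ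
  bv : ∀ x ∈ Ω, ‖x‖ < R → |v x| ≤ E

section core4
variable {Ω : Set (En n)} {v : En n → ℝ} {R s E δ : ℝ}

lemma closure_ball_aux {Ω : Set (En n)} {x : En n} {R : ℝ} (hx : x ∈ closure Ω) (hR : ‖x‖ < R) :
    x ∈ closure (Ω ∩ ball 0 R) := by
  rw [inter_comm]
  exact isOpen_ball.inter_closure ⟨by simpa using hR, hx⟩

lemma Dat.lo_cl (h : Dat Ω v R s E δ) {x : En n} (hx : x ∈ closure Ω) (hR : ‖x‖ < R) :
    -s ≤ xn x := by
  have : closure (Ω ∩ ball 0 R) ⊆ {y | -s ≤ xn y} := closure_minimal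
    (fun y hy => h.lo y hy.1 (by simpa using hy.2)) (isClosed_le continuous_const continuous_xn)
  exact this (closure_ball_aux hx hR)

lemma Dat.bv_cl (h : Dat Ω v R s E δ) {x : En n} (hx : x ∈ closure Ω) (hR : ‖x‖ < R) :
    |v x| ≤ E := by
  have hc : ContinuousWithinAt v (Ω ∩ ball 0 R) x :=
    (h.ct x ⟨hx, by simpa using hR⟩).mono (inter_subset_inter_left _ subset_closure)
  have hx' := closure_ball_aux hx hR
  have := hc.mem_closure (t := {y : ℝ | |y| ≤ E}) hx'
    (fun y hy => h.bv y hy.1 (by simpa using hy.2))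
  rwa [(isClosed_le continuous_abs continuous_const).closure_eq] at this

lemma Dat.fr (h : Dat Ω v R s E δ) {x : En n} (hx : x ∈ frontier Ω) (hR : ‖x‖ < R) :
    |xn x| ≤ s := by
  rw [h.op.frontier_eq] at hx
  rw [abs_le]
  refine ⟨h.lo_cl hx.1 hR, ?_⟩
  by_contra hc
  exact hx.2 (h.up x hR (not_le.1 hc))

lemma Dat.neg (h : Dat Ω v R s E δ) : Dat Ω (fun x => - v x) R s E δ where
  op := h.op
  R0 := h.R0
  s0 := h.s0
  E0 := h.E0
  d0 := h.d0
  lo := h.lo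
  up := h.up
  ct := h.ct.neg
  lap := fun x hx hR => by
    obtain ⟨L, h1, h2⟩ := h.lap x hx hR
    exact ⟨-L, by rwa [abs_neg], h2.neg⟩
  bd := fun x hx hR => by simpa using h.bd x hx hR
  bv := fun x hx hR => by simpa using h.bv x hx hR

lemma Dat.barrier1 (h : Dat Ω v R s E δ) {z : En n} (hz : z ∈ Ω) (hzR : ‖z‖ < 3 / 4 * R)
    (ht : xn z + s ≤ R / 8) : v z ≤ 32 * (n + 1) * (E * (xn z + s) / R) + 2 * δ := by
  have hR := h.R0
  have hE := h.E0
  have hn1 : (1 : ℝ) ≤ n := by exact_mod_cast NeZero.one_le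
  set U := Ω ∩ ball z (R / 4) with hU
  have hball : ∀ y : En n, dist y z ≤ R / 4 → ‖y‖ < R := by
    intro y hy
    rw [dist_eq_norm] at hy
    have : ‖y‖ ≤ ‖y - z‖ + ‖z‖ := by simpa using norm_add_le (y - z) z
    linarith
  have hclU : closure U ⊆ closure Ω ∩ closedBall z (R / 4) := by
    refine closure_minimal ?_ (isClosed_closure.inter isClosed_closedBall)
    exact inter_subset_inter subset_closure ball_subset_closedBall
  have htz : 0 ≤ xn z + s := by linarith [h.lo z hz (by linarith)]
  let ψ : En n → ℝ := fun y => ‖y - z‖ ^ 2 +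
    ((-1 - n : ℝ) * (xn y) ^ 2 + (2 * xn z + (n + 1) * R - 2 * n * s) * xn y +
      (- (xn z) ^ 2 + (n + 1) * R * s - n * s ^ 2))
  have hψ : ∀ y, ψ y = ‖y - z‖ ^ 2 - (xn y - xn z) ^ 2 + (n + 1) * R * (xn y + s)
      - n * (xn y + s) ^ 2 := by intro y; simp only [ψ]; ring
  have hψL : ∀ y, HasLap ψ y (-2) := by
    intro y
    have := (hasLap_normsub z y).add (hasLap_xn (-1 - n : ℝ) (2 * xn z + (n + 1) * R - 2 * n * s)
      (- (xn z) ^ 2 + (n + 1) * R * s - n * s ^ 2) y)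
    convert this using 1
    ring
  have hψlow : ∀ y ∈ closure Ω, dist y z ≤ R / 4 →
      ‖y - z‖ ^ 2 - (xn y - xn z) ^ 2 + R * (xn y + s) ≤ ψ y ∧ 0 ≤ xn y + s := by
    intro y hy hd
    have h1 := h.lo_cl hy (hball y hd)
    have h2 : |xn y - xn z| ≤ R / 4 := by
      have := abs_xn_le (y - z)
      rw [dist_eq_norm] at hd
      have e : xn (y - z) = xn y - xn z := by simp [xn]
      rw [e] at this; linarith
    have h3 := (abs_le.1 h2).2
    refine ⟨?_, by linarith⟩
    rw [hψ]
    have h4 : xn y + s ≤ R := by linarith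
    have h5 : 0 ≤ xn y + s := by linarith
    have : (n : ℝ) * ((xn y + s) * (xn y + s)) ≤ n * ((xn y + s) * R) := by gcongr
    nlinarith
  have key := mp_weak (U := U) (h.op.inter isOpen_ball) (R := R)
    (fun y hy => by
      rw [mem_closedBall_zero_iff]; exact (hball y (mem_ball.1 hy.2).le).le)
    (w := fun y => v y - 32 * E / R ^ 2 * ψ y) (δ := δ / R ^ 2) (by have := h.d0; positivity)
    ?_ ?_ (m := δ) ?_ z ⟨hz, mem_ball_self (by positivity)⟩
  · simp only [hψ] at key
    have e1 : δ / R ^ 2 * R ^ 2 = δ := by field_simp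
    rw [e1] at key
    simp only [sub_self, norm_zero] at key
    have h1 : 32 * E / R ^ 2 * ((n + 1) * R * (xn z + s)) = 32 * (n + 1) * (E * (xn z + s) / R) := by
      field_simp
    have h2 : 0 ≤ 32 * E / R ^ 2 * (n * (xn z + s) ^ 2) := by positivity
    nlinarith
  · refine ContinuousOn.sub (h.ct.mono ?_) ?_
    · intro y hy
      have := hclU hy
      exact ⟨this.1, by simpa using hball y (mem_closedBall.1 this.2)⟩
    · have : Continuous ψ := by
        have := continuous_xn (n := n)
        fun_prop
      exact (continuous_const.mul this).continuousOn
  · intro y hy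
    obtain ⟨L, h1, h2⟩ := h.lap y hy.1 (hball y (mem_ball.1 hy.2).le)
    refine ⟨_, ?_, h2.sub ((hψL y).const_mul _)⟩
    have : 0 ≤ 32 * E / R ^ 2 := by positivity
    linarith [(abs_le.1 h1).1]
  · intro y hy
    rw [(h.op.inter isOpen_ball).frontier_eq] at hy
    have hy1 := hclU hy.1
    have hd := mem_closedBall.1 hy1.2
    obtain ⟨hlow, ht0⟩ := hψlow y hy1.1 hd
    have hsq := xn_sub_sq_le y z
    have hψ0 : 0 ≤ ψ y := by nlinarith
    have hc0 : 0 ≤ 32 * E / R ^ 2 := by positivity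
    by_cases hyΩ : y ∈ Ω
    · have hd' : dist y z = R / 4 := by
        refine le_antisymm hd (not_lt.1 fun hlt => hy.2 ⟨hyΩ, hlt⟩)
      have h1 : R ^ 2 / 32 ≤ ψ y := by
        refine le_trans ?_ hlow
        rw [dist_eq_norm] at hd'
        rw [hd']
        by_cases hc : xn y + s ≤ R / 16
        · have : (xn y - xn z) ^ 2 ≤ (R / 8) ^ 2 := by
            refine sq_le_sq' ?_ ?_ <;> linarith
          nlinarith
        · rw [hd'] at hsq
          have := not_le.1 hc
          nlinarith
      have h2 := (abs_le.1 (h.bv y hyΩ (hball y hd))).2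
      have h3 : E ≤ 32 * E / R ^ 2 * ψ y := by
        calc E = 32 * E / R ^ 2 * (R ^ 2 / 32) := by field_simp
          _ ≤ _ := by gcongr
      linarith [h.d0]
    · have hf : y ∈ frontier Ω := by rw [h.op.frontier_eq]; exact ⟨hy1.1, hyΩ⟩
      have h2 := (abs_le.1 (h.bd y hf (hball y hd))).2
      have := mul_nonneg hc0 hψ0
      linarith

lemma Dat.barrier (h : Dat Ω v R s E δ) {z : En n} (hz : z ∈ closure Ω) (hzR : ‖z‖ < 3 / 4 * R) :
    |v z| ≤ 32 * (n + 1) * (E * (xn z + s) / R) + 2 * δ := by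
  have hR := h.R0
  have hE := h.E0
  have hn1 : (1 : ℝ) ≤ n := by exact_mod_cast NeZero.one_le
  have h0 := h.lo_cl hz (by linarith)
  have h0' : 0 ≤ xn z + s := by linarith
  have h1 : 0 ≤ 32 * (n + 1) * (E * (xn z + s) / R) := by positivity
  by_cases hzΩ : z ∈ Ω
  · by_cases ht : xn z + s ≤ R / 8
    · have a := h.barrier1 hzΩ hzR ht
      have b := h.neg.barrier1 hzΩ hzR ht
      rw [abs_le]; constructor <;> linarith
    · refine (h.bv_cl hz (by linarith)).trans ?_
      have h2 : E ≤ 8 * (E * (xn z + s) / R) := by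
        rw [mul_div_assoc', le_div_iff₀ hR]
        nlinarith
      have h3 : 0 ≤ E * (xn z + s) / R := by positivity
      nlinarith [h.d0]
  · have hf : z ∈ frontier Ω := by rw [h.op.frontier_eq]; exact ⟨hz, hzΩ⟩
    have := h.bd z hf (by linarith)
    linarith [h.d0]
end core4

/-! part 5 : the core lemma, continued -/
section core5
variable {Ω : Set (En n)} {v : En n → ℝ} {R s E δ : ℝ}

/-- cut-off version of `v` -/
def cutv (s : ℝ) (v : En n → ℝ) (x : En n) : ℝ :=
  if s < xn x then max 0 (min 1 ((xn x - 2 * s) / s)) * v x else 0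

lemma cutv_zero (hs : 0 < s) {x : En n} (hx : xn x ≤ 2 * s) : cutv s v x = 0 := by
  unfold cutv
  split_ifs with h
  · have : (xn x - 2 * s) / s ≤ 0 := div_nonpos_of_nonpos_of_nonneg (by linarith) hs.le
    rw [max_eq_left ((min_le_right _ _).trans this), zero_mul]
  · rfl

lemma cutv_one (hs : 0 < s) {x : En n} (hx : 3 * s ≤ xn x) : cutv s v x = v x := by
  unfold cutv
  have : 1 ≤ (xn x - 2 * s) / s := by rw [le_div_iff₀ hs]; linarith
  rw [if_pos (by linarith), min_eq_left this, max_eq_right zero_le_one, one_mul]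

lemma cutv_le {x : En n} : |cutv s v x| ≤ if s < xn x then |v x| else 0 := by
  unfold cutv
  split_ifs with h
  · rw [abs_mul]
    refine mul_le_of_le_one_left (abs_nonneg _) ?_
    rw [abs_of_nonneg (le_max_left _ _)]
    exact max_le zero_le_one (min_le_left _ _)
  · simp

lemma Dat.cont_cutv (h : Dat Ω v R s E δ) {x : En n} (hx : ‖x‖ < R) :
    ContinuousAt (cutv s v) x := by
  have hs := h.s0
  have hcx := continuous_xn (n := n)
  by_cases hc : xn x < 2 * s
  · have : cutv s v =ᶠ[𝓝 x] fun _ => 0 := by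
      filter_upwards [(isOpen_lt hcx continuous_const).mem_nhds hc] with y hy
      exact cutv_zero hs (le_of_lt hy)
    exact continuousAt_const.congr this.symm
  · have hc' : s < xn x := by linarith [not_lt.1 hc]
    have : cutv s v =ᶠ[𝓝 x] fun x => max 0 (min 1 ((xn x - 2 * s) / s)) * v x := by
      filter_upwards [(isOpen_lt continuous_const hcx).mem_nhds hc'] with y hy
      unfold cutv
      rw [if_pos hy]
    refine ContinuousAt.congr ?_ this.symm
    refine ContinuousAt.mul ?_ ?_
    · exact (by fun_prop : Continuous fun x : En n => max 0 (min 1 ((xn x - 2 * s) / s))).continuousAt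
    · refine h.ct.continuousAt ?_
      have hxΩ := h.up x hx hc'
      exact inter_mem (mem_of_superset (h.op.mem_nhds hxΩ) subset_closure)
        (isOpen_ball.mem_nhds (by simpa using hx))

lemma Dat.core (h : Dat Ω v R s E δ) : ∃ H : MP n, plap H = 0 ∧ OddP H ∧
    (∀ x ∈ Ω, ‖x‖ < R / 2 → |v x - peval H x| ≤ (256 * (n + 1) + 5) * (E * s / R + δ)) ∧
    (∀ x : En n, ‖x‖ ≤ R / 2 → |peval H x| ≤ (256 * (n + 1) + 5) * (E * (|xn x| + s) / R + δ)) := by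
  have hR := h.R0
  have hE := h.E0
  have hs := h.s0
  have hd := h.d0
  have hcx := continuous_xn (n := n)
  set c : ℝ := 32 * (n + 1) with hc
  have hc1 : 1 ≤ c := by
    have hn1 : (1 : ℝ) ≤ n := by exact_mod_cast NeZero.one_le
    rw [hc]; linarith
  set ε : ℝ := E * s / R with hε
  have hε0 : 0 < ε := by positivity
  let φ : En n → ℝ := fun x => cutv s v x - cutv s v (rfx x)
  obtain ⟨H, hH, hHo, hHφ⟩ := odd_replacement (φ := φ) (R := R / 2) (by positivity)
    (by
      intro x hx
      have hx' : ‖x‖ < R := by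
        have : ‖x‖ = R / 2 := by simpa using hx
        linarith
      refine ContinuousAt.continuousWithinAt ?_
      refine (h.cont_cutv hx').sub ?_
      exact ContinuousAt.comp' (h.cont_cutv (by simpa using hx')) continuous_rfx.continuousAt)
    (by intro x; simp [φ]) hε0
  -- bound on the sphere, upper half
  have hφup : ∀ x : En n, ‖x‖ = R / 2 → 0 ≤ xn x → |φ x| ≤ c * (E * (xn x + s) / R) + 2 * δ := by
    intro x hx h0
    have e : cutv s v (rfx x) = 0 := cutv_zero hs (by rw [xn_rfx]; linarith)
    simp only [φ, e, sub_zero]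
    refine cutv_le.trans ?_
    split_ifs with h1
    · exact h.barrier (subset_closure (h.up x (by linarith) h1)) (by linarith)
    · positivity
  have hEs : ∀ t : ℝ, c * (E * (t + s) / R) = c * (E * t / R) + c * ε := by
    intro t; rw [hε]; ring
  set m : ℝ := c * ε + 2 * δ + ε with hm
  have hHup : ∀ (K : MP n), plap K = 0 → OddP K →
      (∀ x : En n, ‖x‖ = R / 2 → 0 ≤ xn x → peval K x ≤ c * (E * xn x / R) + m) →
      ∀ x : En n, ‖x‖ < R / 2 → 0 < xn x → peval K x ≤ c * (E * xn x / R) + m := by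
    intro K hK hKo hKb x hx hx0
    set U : Set (En n) := ball 0 (R / 2) ∩ {y | 0 < xn y} with hU
    have hUo : IsOpen U := isOpen_ball.inter (isOpen_lt continuous_const hcx)
    have hcl : closure U ⊆ closedBall 0 (R / 2) ∩ {y | 0 ≤ xn y} := by
      refine closure_minimal ?_ (isClosed_closedBall.inter (isClosed_le continuous_const hcx))
      exact inter_subset_inter ball_subset_closedBall fun y (hy : 0 < xn y) => (hy.le : 0 ≤ xn y)
    have key := mp_weak (U := U) hUo (R := R / 2) (fun y hy => ball_subset_closedBall hy.1)
      (w := fun y => peval K y - (0 * xn y ^ 2 + (c * E / R) * xn y + m)) (δ := 0) le_rfl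
      (by
        have := continuous_peval K
        exact (by fun_prop : Continuous _).continuousOn)
      (fun y hy => ⟨_, ?_, (HasLap.peval K y).sub (hasLap_xn _ _ _ y)⟩) (m := 0) ?_ x
      ⟨by simpa using hx, hx0⟩
    · simp only [zero_mul, zero_add] at key
      have : c * (E * xn x / R) = c * E / R * xn x := by ring
      linarith
    · rw [hK]; simp
    · intro y hy
      rw [hUo.frontier_eq] at hy
      have hy1 := hcl hy.1
      have hyn : ‖y‖ ≤ R / 2 := by simpa using hy1.1
      have hy0 : 0 ≤ xn y := hy1.2
      have e : c * (E * xn y / R) = c * E / R * xn y := by ring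
      by_cases h1 : ‖y‖ < R / 2
      · have h2 : xn y = 0 := by
          refine le_antisymm (not_lt.1 fun hlt => hy.2 ⟨by simpa using h1, hlt⟩) hy0
        have h3 : rfx y = y := by
          ext i; rw [rfx_apply]; split_ifs with hi
          · subst hi
            have h4 : y (lastIdx n) = 0 := h2
            rw [h4]; simp
          · rfl
        have h4 := hKo.peval_rfx y
        rw [h3] at h4
        have h5 : peval K y = 0 := by linarith
        rw [h5, h2]
        have : 0 ≤ m := by positivity
        linarith
      · have := hKb y (le_antisymm hyn (not_lt.1 h1)) hy0
        linarith
  have hsph : ∀ x : En n, ‖x‖ = R / 2 → 0 ≤ xn x → |peval H x| ≤ c * (E * xn x / R) + m := by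
    intro x hx h0
    have h1 := hφup x hx h0
    have h2 := hHφ x hx
    rw [hEs] at h1
    have := abs_sub_abs_le_abs_sub (peval H x) (φ x)
    linarith
  have hneg : plap (-H) = 0 := by
    have := plap_C_mul (-1 : ℝ) H
    rw [hH] at this
    simpa using this
  have hnego : OddP (-H) := fun d hd => by rw [coeff_neg, hHo d hd, neg_zero]
  have hup : ∀ x : En n, ‖x‖ ≤ R / 2 → 0 < xn x → |peval H x| ≤ c * (E * xn x / R) + m := by
    intro x hx h0
    rcases hx.lt_or_eq with h1 | h1
    · rw [abs_le]
      constructor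
      · have := hHup (-H) hneg hnego (fun y hy hy0 => by
          rw [peval_neg]; linarith [(abs_le.1 (hsph y hy hy0)).1]) x h1 h0
        rw [peval_neg] at this
        linarith
      · exact hHup H hH hHo (fun y hy hy0 => (abs_le.1 (hsph y hy hy0)).2) x h1 h0
    · exact hsph x h1 h0.le
  have hall : ∀ x : En n, ‖x‖ ≤ R / 2 → |peval H x| ≤ c * (E * |xn x| / R) + m := by
    intro x hx
    rcases lt_trichotomy (xn x) 0 with h1 | h1 | h1
    · have := hup (rfx x) (by simpa using hx) (by rw [xn_rfx]; linarith)
      rw [hHo.peval_rfx, abs_neg, xn_rfx] at this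
      rwa [abs_of_neg h1]
    · have h3 : rfx x = x := by
        ext i; rw [rfx_apply]; split_ifs with hi
        · subst hi
          have h4 : x (lastIdx n) = 0 := h1
          rw [h4]; simp
        · rfl
      have h4 := hHo.peval_rfx x
      rw [h3] at h4
      have h5 : peval H x = 0 := by linarith
      rw [h5, h1]
      simp; positivity
    · rw [abs_of_pos h1]; exact hup x hx h1
  have hC : (256 * ((n : ℝ) + 1) + 5) = 8 * c + 5 := by rw [hc]; ring
  rw [hC]
  refine ⟨H, hH, hHo, ?_, ?_⟩
  · intro x hx hxR
    have hUo : IsOpen (Ω ∩ ball 0 (R / 2)) := h.op.inter isOpen_ball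
    have hcl : closure (Ω ∩ ball 0 (R / 2)) ⊆ closure Ω ∩ closedBall 0 (R / 2) := by
      refine closure_minimal ?_ (isClosed_closure.inter isClosed_closedBall)
      exact inter_subset_inter subset_closure ball_subset_closedBall
    have key := mp_abs (U := Ω ∩ ball 0 (R / 2)) hUo (R := R / 2)
      (fun y hy => ball_subset_closedBall hy.2)
      (w := fun y => v y - peval H y) (δ := δ / R ^ 2) (by positivity)
      (by
        refine ContinuousOn.sub (h.ct.mono fun y hy => ?_) (continuous_peval H).continuousOn
        have h1 := hcl hy
        have h2 : ‖y‖ ≤ R / 2 := by simpa using h1.2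
        exact ⟨h1.1, by rw [mem_ball_zero_iff]; linarith⟩)
      (fun y hy => ?_) (m := 8 * c * ε + 4 * δ + ε) ?_ x ⟨hx, by simpa using hxR⟩
    · have e : δ / R ^ 2 * (R / 2) ^ 2 = δ / 4 := by field_simp; norm_num
      rw [e] at key
      refine key.trans ?_
      nlinarith
    · have h2 : ‖y‖ < R / 2 := by simpa using hy.2
      obtain ⟨L, h3, h4⟩ := h.lap y hy.1 (by linarith)
      refine ⟨_, ?_, h4.sub (HasLap.peval H y)⟩
      rw [hH, peval_zero, sub_zero]; exact h3
    · intro y hy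
      rw [hUo.frontier_eq] at hy
      have hy1 := hcl hy.1
      have hyn : ‖y‖ ≤ R / 2 := by simpa using hy1.2
      have hlo := h.lo_cl hy1.1 (by linarith)
      have hb := h.barrier hy1.1 (by linarith)
      rw [← hc] at hb
      have hHb := hall y hyn
      by_cases h3 : xn y ≤ 3 * s
      · have e1 : E * |xn y| / R ≤ 3 * ε := by
          have : |xn y| ≤ 3 * s := by rw [abs_le]; constructor <;> linarith
          rw [hε, mul_div_assoc', div_le_div_iff_of_pos_right hR]
          nlinarith
        have e2 : E * (xn y + s) / R ≤ 4 * ε := by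
          rw [hε, mul_div_assoc', div_le_div_iff_of_pos_right hR]
          nlinarith
        have e3 : c * (E * |xn y| / R) ≤ c * (3 * ε) := by gcongr
        have e4 : c * (E * (xn y + s) / R) ≤ c * (4 * ε) := by gcongr
        have := abs_sub (v y) (peval H y)
        linarith
      · have hyΩ : y ∈ Ω := h.up y (by linarith) (by linarith)
        have hyR : ‖y‖ = R / 2 := by
          refine le_antisymm hyn (not_lt.1 fun hlt => hy.2 ⟨hyΩ, by simpa using hlt⟩)
        have h4 := hHφ y hyR
        have e : φ y = v y := by
          simp only [φ]
          rw [cutv_one hs (by linarith), cutv_zero hs (by rw [xn_rfx]; linarith), sub_zero]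
        rw [e, abs_sub_comm] at h4
        have : 0 ≤ c * ε := by positivity
        linarith
  · intro x hx
    refine (hall x hx).trans ?_
    have e : E * (|xn x| + s) / R = E * |xn x| / R + ε := by rw [hε]; ring
    rw [e]
    have : 0 ≤ E * |xn x| / R := by positivity
    nlinarith
end core5

/-! part 6 : limits of polynomials -/

/-- multi-indices of degree at most `m` -/
def degs (n m : ℕ) : Finset (Fin n →₀ ℕ) := (Finsupp.finite_of_degree_le (σ := Fin n) m).toFinset

lemma mem_degs {m : ℕ} {d : Fin n →₀ ℕ} : d ∈ degs n m ↔ mdeg d ≤ m := by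
  simp [degs, mdeg_eq]

lemma abs_prod_le (x : En n) (d : Fin n →₀ ℕ) : |∏ i, x i ^ d i| ≤ ‖x‖ ^ mdeg d := by
  rw [Finset.abs_prod, mdeg_eq, Finsupp.degree_eq_sum, ← Finset.prod_pow_eq_pow_sum]
  refine Finset.prod_le_prod (fun i _ => abs_nonneg _) fun i _ => ?_
  rw [abs_pow]
  exact pow_le_pow_left₀ (abs_nonneg _) (norm_apply_le x i) _

lemma support_subset_degs {p : MP n} {m : ℕ} (hp : p.totalDegree ≤ m) : p.support ⊆ degs n m := by
  intro d hd
  rw [mem_degs]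
  by_contra hc
  exact (mem_support_iff.1 hd) (coeff_eq_zero_of_mdeg hp (not_le.1 hc))

lemma head_est_le (m : ℕ) : ∃ C : ℝ, 0 < C ∧ ∀ (p : MP n), plap p = 0 → ∀ R b : ℝ, 0 < R → 0 ≤ b →
    (∀ x : En n, ‖x‖ ≤ R → |peval p x| ≤ b) → ∀ d : Fin n →₀ ℕ, mdeg d ≤ m →
    |coeff d p| ≤ C * b / R ^ mdeg d := by
  choose C hC h using fun m => head_est (n := n) m
  refine ⟨∑ e ∈ Finset.range (m + 1), C e, Finset.sum_pos (fun e _ => hC e) ⟨0, by simp⟩, ?_⟩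
  intro p hp R b hR hb hpb d hd
  refine (h (mdeg d) p hp R b hR hb hpb d rfl).trans ?_
  have : C (mdeg d) ≤ ∑ e ∈ Finset.range (m + 1), C e :=
    Finset.single_le_sum (fun e _ => (hC e).le) (by simp; omega)
  gcongr

lemma totalDegree_tr (m : ℕ) (p : MP n) : (tr (m + 1) p).totalDegree ≤ m := by
  refine totalDegree_le_of_coeff fun d hd => ?_
  rw [coeff_tr, if_neg (by omega)]

def mkpoly (m : ℕ) (a : (Fin n →₀ ℕ) → ℝ) : MP n := ∑ d ∈ degs n m, monomial d (a d)

lemma coeff_mkpoly (m : ℕ) (a : (Fin n →₀ ℕ) → ℝ) (d : Fin n →₀ ℕ) :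
    coeff d (mkpoly m a) = if mdeg d ≤ m then a d else 0 := by
  classical
  simp only [mkpoly, coeff_sum, coeff_monomial]
  rw [Finset.sum_ite_eq']
  simp [mem_degs]

lemma poly_limit (m : ℕ) (γ : ℝ) (h1 : (m : ℝ) < γ) (h2 : γ < m + 1) :
    ∃ C : ℝ, 0 < C ∧ ∀ (h : ℕ → MP n) (B : ℝ), 0 ≤ B → (∀ j, plap (h j) = 0) → (∀ j, OddP (h j)) →
    (∀ x : En n, ‖x‖ ≤ 1 / 8 → |peval (h 0) x| ≤ B) →
    (∀ j (x : En n), ‖x‖ ≤ (1 / 2) ^ j / 8 →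
      |peval (h (j + 1) - h j) x| ≤ B * ((1 / 2 : ℝ) ^ j) ^ γ) →
    ∃ a : MP n, plap a = 0 ∧ OddP a ∧ a.totalDegree ≤ m ∧ (∀ d, |coeff d a| ≤ C * B) ∧
      ∀ j (x : En n), ‖x‖ ≤ (1 / 2) ^ j / 8 / 2 ^ (m + 1) →
        |peval (h j) x - peval a x| ≤ C * B * ((1 / 2 : ℝ) ^ j) ^ γ := by
  obtain ⟨Ch, hCh, hhead⟩ := head_est_le (n := n) m
  obtain ⟨Ct, hCt, htail⟩ := tail_est (n := n) (m + 1)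
  have hm0 : (0 : ℝ) ≤ m := Nat.cast_nonneg m
  set ρ : ℝ := (1 / 2 : ℝ) ^ (γ - m) with hρ
  have hρ0 : 0 < ρ := by positivity
  have hρ1 : ρ < 1 := Real.rpow_lt_one (by norm_num) (by norm_num) (by linarith)
  set q : ℝ := (2 : ℝ) ^ (m + 1 - γ) with hq
  have hq1 : 1 < q := Real.one_lt_rpow (by norm_num) (by linarith)
  set Q : ℝ := Ct * 8 ^ (m + 1) * (1 + 1 / (q - 1)) with hQ
  have hq10 : 0 < q - 1 := by linarith
  have hQ0 : 0 < Q := by positivity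
  set W : ℝ := Ch * 8 ^ m / (1 - ρ) with hW
  have hρ10 : 0 < 1 - ρ := by linarith
  have hW0 : 0 < W := by positivity
  refine ⟨Q + (degs n m).card * W + (W + Ch * 8 ^ m), by positivity, ?_⟩
  intro h B hB hlap hodd h0 hstep
  have hlapd : ∀ j, plap (h (j + 1) - h j) = 0 := fun j => by rw [plap_sub, hlap, hlap, sub_zero]
  have hr0 : ∀ j : ℕ, (0 : ℝ) < (1 / 2) ^ j := fun j => by positivity
  -- coefficients
  have hcoef : ∀ d : Fin n →₀ ℕ, mdeg d ≤ m → ∃ l : ℝ, Tendsto (fun j => coeff d (h j)) atTop (𝓝 l) ∧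
      ∀ j, |coeff d (h j) - l| ≤ W * B * (((1 / 2 : ℝ) ^ j) ^ γ / ((1 / 2 : ℝ) ^ j) ^ mdeg d) := by
    intro d hd
    have hd' : (mdeg d : ℝ) ≤ m := by exact_mod_cast hd
    set r : ℝ := (1 / 2 : ℝ) ^ (γ - mdeg d) with hr
    have hrρ : r ≤ ρ := Real.rpow_le_rpow_of_exponent_ge (by norm_num) (by norm_num) (by linarith)
    have hr1 : r < 1 := by linarith
    have hrpos : 0 < r := by positivity
    have hrj : ∀ j : ℕ, r ^ j = ((1 / 2 : ℝ) ^ j) ^ γ / ((1 / 2 : ℝ) ^ j) ^ mdeg d := by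
      intro j
      rw [hr, Real.rpow_sub (by norm_num), Real.rpow_natCast, div_pow, ← pow_mul, ← pow_mul,
        mul_comm (mdeg d) j, ← Real.rpow_natCast, ← Real.rpow_natCast (1 / 2) j, ← Real.rpow_mul (by norm_num), ← Real.rpow_mul (by norm_num),
        mul_comm γ]
    have hdist : ∀ j, dist (coeff d (h j)) (coeff d (h (j + 1))) ≤ (Ch * 8 ^ m * B) * r ^ j := by
      intro j
      have := hhead _ (hlapd j) ((1 / 2) ^ j / 8) _ (by positivity) (by positivity) (hstep j) d hd
      rw [dist_comm, Real.dist_eq, ← coeff_sub]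
      refine this.trans ?_
      rw [hrj, div_pow ((1 / 2 : ℝ) ^ j) 8]
      have h8 : (8 : ℝ) ^ mdeg d ≤ 8 ^ m := pow_le_pow_right₀ (by norm_num) hd
      have hp : (0 : ℝ) < ((1 / 2) ^ j) ^ mdeg d := by positivity
      have hp2 : (0 : ℝ) < ((1 / 2) ^ j) ^ γ := by positivity
      calc Ch * (B * ((1 / 2) ^ j) ^ γ) / (((1 / 2) ^ j) ^ mdeg d / 8 ^ mdeg d)
          = Ch * B * (8 ^ mdeg d) * (((1 / 2) ^ j) ^ γ / ((1 / 2) ^ j) ^ mdeg d) := by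
            field_simp
        _ ≤ Ch * B * (8 ^ m) * (((1 / 2) ^ j) ^ γ / ((1 / 2) ^ j) ^ mdeg d) := by gcongr
        _ = _ := by ring
    have hcs := cauchySeq_of_le_geometric r _ hr1 hdist
    obtain ⟨l, hl⟩ := cauchySeq_tendsto_of_complete hcs
    refine ⟨l, hl, fun j => ?_⟩
    have := dist_le_of_le_geometric_of_tendsto r _ hr1 hdist hl j
    rw [Real.dist_eq] at this
    refine this.trans ?_
    rw [← hrj, hW]
    have : 0 ≤ r ^ j := by positivity
    calc Ch * 8 ^ m * B * r ^ j / (1 - r) ≤ Ch * 8 ^ m * B * r ^ j / (1 - ρ) := by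
          gcongr
      _ = _ := by ring
  choose! l hl hlb using hcoef
  set a : MP n := mkpoly m l with ha
  have hca : ∀ d, mdeg d ≤ m → coeff d a = l d := fun d hd => by rw [ha, coeff_mkpoly, if_pos hd]
  have hca' : ∀ d, m < mdeg d → coeff d a = 0 := fun d hd => by
    rw [ha, coeff_mkpoly, if_neg (by omega)]
  have hadeg : a.totalDegree ≤ m := totalDegree_le_of_coeff hca'
  refine ⟨a, ?_, ?_, hadeg, ?_, ?_⟩
  · ext d
    by_cases hd : mdeg d + 2 ≤ m
    · have ht : Tendsto (fun j => coeff d (plap (h j))) atTop (𝓝 (coeff d (plap a))) := by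
        simp only [coeff_plap]
        refine tendsto_finsetSum _ fun i _ => Tendsto.mul_const _ ?_
        rw [hca _ (by rw [mdeg_add, mdeg_single]; exact hd)]
        exact hl _ (by rw [mdeg_add, mdeg_single]; exact hd)
      simp only [hlap, coeff_zero] at ht
      exact (tendsto_nhds_unique ht tendsto_const_nhds)
    · rw [coeff_plap, coeff_zero]
      refine Finset.sum_eq_zero fun i _ => ?_
      rw [hca' _ (by rw [mdeg_add, mdeg_single]; omega), zero_mul]
  · intro d hd
    by_cases hdm : mdeg d ≤ m
    · rw [hca d hdm]
      have ht := hl d hdm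
      have : (fun j => coeff d (h j)) = fun _ => 0 := by ext j; exact hodd j d hd
      rw [this] at ht
      exact tendsto_nhds_unique ht tendsto_const_nhds
    · exact hca' d (by omega)
  · intro d
    by_cases hdm : mdeg d ≤ m
    · have e1 := hlb d hdm 0
      have e2 := hhead _ (hlap 0) (1 / 8) B (by norm_num) hB h0 d hdm
      rw [← hca d hdm] at e1
      simp only [pow_zero, Real.one_rpow, one_pow, div_one, mul_one] at e1
      have e3 : Ch * B / (1 / 8) ^ mdeg d ≤ Ch * 8 ^ m * B := by
        have h8 : (8 : ℝ) ^ mdeg d ≤ 8 ^ m := pow_le_pow_right₀ (by norm_num) hdm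
        calc Ch * B / (1 / 8) ^ mdeg d = Ch * 8 ^ mdeg d * B := by
              rw [div_pow, one_pow]; field_simp
          _ ≤ _ := by gcongr
      have e4 : |coeff d a| ≤ |coeff d (h 0) - coeff d a| + |coeff d (h 0)| := by
        have := abs_sub_abs_le_abs_sub (coeff d a) (coeff d (h 0))
        rw [abs_sub_comm] at this; linarith
      have e5 : 0 ≤ (Q + (degs n m).card * W) * B := by positivity
      nlinarith
    · rw [hca' d (by omega)]; simp; positivity
  · -- tail
    set c2 : ℝ := Ct * 8 ^ (m + 1) * B with hc2
    have hc20 : 0 ≤ c2 := by positivity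
    have htl : ∀ j (x : En n), ‖x‖ ≤ (1 / 2) ^ j / 8 / 2 ^ (m + 1) →
        |peval (h j) x - peval (tr (m + 1) (h j)) x| ≤
          Q * B * ((((1 / 2 : ℝ) ^ j) ^ γ / ((1 / 2 : ℝ) ^ j) ^ (m + 1)) * ‖x‖ ^ (m + 1)) := by
      intro j
      induction j with
      | zero =>
        intro x hx
        have := htail _ (hlap 0) (1 / 8) B (by norm_num) hB h0 x (by simpa using hx)
        refine this.trans ?_
        simp only [pow_zero, Real.one_rpow, one_pow, div_one, one_mul]
        have e : Ct * B * (‖x‖ / (1 / 8)) ^ (m + 1) = Ct * 8 ^ (m + 1) * B * ‖x‖ ^ (m + 1) := by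
          rw [div_pow, div_pow, one_pow]; field_simp
        rw [e]
        have : Ct * 8 ^ (m + 1) ≤ Q := by
          rw [hQ]
          refine le_mul_of_one_le_right (by positivity) ?_
          have : 0 ≤ 1 / (q - 1) := by positivity
          linarith
        gcongr
      | succ j ih =>
        intro x hx
        have hx' : ‖x‖ ≤ (1 / 2) ^ j / 8 / 2 ^ (m + 1) := by
          refine hx.trans ?_
          have : (1 / 2 : ℝ) ^ (j + 1) ≤ (1 / 2) ^ j :=
            pow_le_pow_of_le_one (by norm_num) (by norm_num) (by omega)
          gcongr
        have e1 := ih x hx'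
        have e2 := htail _ (hlapd j) ((1 / 2) ^ j / 8) _ (by positivity) (by positivity) (hstep j) x hx'
        rw [tr_sub, peval_sub, peval_sub] at e2
        set r : ℝ := (1 / 2 : ℝ) ^ j with hr
        have hrp : 0 < r := hr0 j
        have e3 : Ct * (B * r ^ γ) * (‖x‖ / (r / 8)) ^ (m + 1) =
            c2 * (r ^ γ / r ^ (m + 1) * ‖x‖ ^ (m + 1)) := by
          rw [hc2, div_pow, div_pow]; field_simp
        rw [e3] at e2
        have e4 : ((1 / 2 : ℝ) ^ (j + 1)) ^ γ / ((1 / 2 : ℝ) ^ (j + 1)) ^ (m + 1) =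
            q * (r ^ γ / r ^ (m + 1)) := by
          rw [pow_succ, ← hr, Real.mul_rpow hrp.le (by norm_num), mul_pow, hq,
            Real.rpow_sub (by norm_num), one_div, Real.inv_rpow (by norm_num), inv_pow,
            ← Real.rpow_natCast 2 (m + 1)]
          push_cast
          field_simp
        rw [e4]
        set S : ℝ := r ^ γ / r ^ (m + 1) * ‖x‖ ^ (m + 1) with hS
        have hS0 : 0 ≤ S := by positivity
        have e5 : Q * B * (q - 1) ≥ c2 := by
          rw [hQ, hc2]
          have : Ct * 8 ^ (m + 1) * (1 + 1 / (q - 1)) * B * (q - 1) =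
            Ct * 8 ^ (m + 1) * B * q := by field_simp; ring
          rw [this]
          exact le_mul_of_one_le_right (by positivity) hq1.le
        have e6 : |peval (h (j + 1)) x - peval (tr (m + 1) (h (j + 1))) x| ≤ Q * B * S + c2 * S := by
          rw [abs_le] at *
          constructor <;> linarith
        refine e6.trans ?_
        have : Q * B * (q * (r ^ γ / r ^ (m + 1)) * ‖x‖ ^ (m + 1)) = Q * B * S + Q * B * (q - 1) * S := by
          rw [hS]; ring
        rw [this]
        gcongr
    intro j x hx
    set r : ℝ := (1 / 2 : ℝ) ^ j with hr
    have hrp : 0 < r := hr0 j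
    have hxr : ‖x‖ ≤ r := by
      refine hx.trans ?_
      rw [div_div]
      refine div_le_self hrp.le ?_
      have : (1 : ℝ) ≤ 2 ^ (m + 1) := one_le_pow₀ (by norm_num)
      linarith
    have e1 := htl j x hx
    rw [← hr] at e1
    have e2 : r ^ γ / r ^ (m + 1) * ‖x‖ ^ (m + 1) ≤ r ^ γ := by
      have : ‖x‖ ^ (m + 1) ≤ r ^ (m + 1) := by gcongr
      calc r ^ γ / r ^ (m + 1) * ‖x‖ ^ (m + 1) ≤ r ^ γ / r ^ (m + 1) * r ^ (m + 1) := by gcongr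
        _ = r ^ γ := by field_simp
    have e3 : |peval (tr (m + 1) (h j)) x - peval a x| ≤ (degs n m).card * (W * B * r ^ γ) := by
      rw [peval_eq_of_subset _ x (support_subset_degs (totalDegree_tr m (h j))),
        peval_eq_of_subset _ x (support_subset_degs hadeg), ← Finset.sum_sub_distrib]
      refine (Finset.abs_sum_le_sum_abs _ _).trans ?_
      rw [← nsmul_eq_mul]
      refine Finset.sum_le_card_nsmul _ _ _ fun d hd => ?_
      have hd := mem_degs.1 hd
      rw [← sub_mul, abs_mul, coeff_tr, if_pos (by omega), hca d hd]
      have f1 := hlb d hd j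
      rw [← hr] at f1
      have f2 : ‖x‖ ^ mdeg d ≤ r ^ mdeg d := by gcongr
      calc _ ≤ W * B * (r ^ γ / r ^ mdeg d) * r ^ mdeg d := by
            refine mul_le_mul f1 ((abs_prod_le x d).trans f2) (abs_nonneg _) (by positivity)
        _ = _ := by field_simp
    have e4 : |peval (h j) x - peval a x| ≤ Q * B * r ^ γ + (degs n m).card * (W * B * r ^ γ) := by
      have : Q * B * (r ^ γ / r ^ (m + 1) * ‖x‖ ^ (m + 1)) ≤ Q * B * r ^ γ := by gcongr
      rw [abs_le] at *
      constructor <;> linarith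
    refine e4.trans ?_
    have : 0 ≤ (W + Ch * 8 ^ m) * (B * r ^ γ) := by positivity
    nlinarith

/-! part 7 : the stage lemma -/

structure Stg (Ω : Set (En n)) (v : En n → ℝ) (A β κ α M : ℝ) : Prop where
  op : IsOpen Ω
  z0 : (0 : En n) ∉ Ω
  A0 : 0 < A
  M0 : 0 < M
  lo : ∀ x ∈ Ω, ‖x‖ < 1 → -(M * ‖x‖ ^ (1 + α)) ≤ xn x
  up : ∀ x : En n, ‖x‖ < 1 → M * ‖x‖ ^ (1 + α) < xn x → x ∈ Ω
  ct : ContinuousOn v (closure Ω ∩ ball 0 1)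
  lap : ∀ x ∈ Ω, ‖x‖ < 1 → ∃ L, |L| ≤ A * ‖x‖ ^ (κ - 2) ∧ HasLap v x L
  bd : ∀ x ∈ frontier Ω, ‖x‖ < 1 → |v x| ≤ A * ‖x‖ ^ κ
  bv : ∀ x ∈ Ω, ‖x‖ < 1 → |v x| ≤ A * ‖x‖ ^ β

section stage
variable {Ω : Set (En n)} {v : En n → ℝ} {A β κ α M γ : ℝ}

lemma Stg.dat (h : Stg Ω v A β κ α M) (hα : 0 < α) (hβ : 0 ≤ β) (hκ : 2 ≤ κ)
    (hγ : γ ≤ κ) {r : ℝ} (hr : 0 < r) (hr1 : r ≤ 1) :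
    Dat Ω v r (M * r ^ (1 + α)) (A * r ^ β) (A * r ^ γ) := by
  have hA := h.A0
  have hM := h.M0
  have hmono : ∀ (x : En n) (e : ℝ), 0 ≤ e → ‖x‖ < r → ‖x‖ ^ e ≤ r ^ e := fun x e he hx =>
    Real.rpow_le_rpow (norm_nonneg _) hx.le he
  refine ⟨h.op, hr, by positivity, by positivity, by positivity, ?_, ?_, ?_, ?_, ?_, ?_⟩
  · intro x hx hxr
    have h1 := h.lo x hx (by linarith)
    have h2 := hmono x (1 + α) (by linarith) hxr
    nlinarith
  · intro x hxr hx
    refine h.up x (by linarith) (lt_of_le_of_lt ?_ hx)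
    have h2 := hmono x (1 + α) (by linarith) hxr
    gcongr
  · exact h.ct.mono (inter_subset_inter_right _ (ball_subset_ball hr1))
  · intro x hx hxr
    obtain ⟨L, h1, h2⟩ := h.lap x hx (by linarith)
    refine ⟨L, h1.trans ?_, h2⟩
    rw [mul_div_assoc]
    refine mul_le_mul_of_nonneg_left ?_ hA.le
    refine (hmono x (κ - 2) (by linarith) hxr).trans ?_
    rw [Real.rpow_sub hr, Real.rpow_two]
    have := Real.rpow_le_rpow_of_exponent_ge hr hr1 hγ
    gcongr
  · intro x hx hxr
    refine (h.bd x hx (by linarith)).trans ?_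
    refine mul_le_mul_of_nonneg_left ?_ hA.le
    exact (hmono x κ (by linarith) hxr).trans (Real.rpow_le_rpow_of_exponent_ge hr hr1 hγ)
  · intro x hx hxr
    refine (h.bv x hx (by linarith)).trans ?_
    exact mul_le_mul_of_nonneg_left (hmono x β hβ hxr) hA.le

lemma Stg.seq (h : Stg Ω v A β κ α M) (hα : 0 < α) (hα1 : α < 1) (hβ : 0 ≤ β) (hκ : 2 ≤ κ)
    (hγ : γ ≤ κ) (hγ0 : 0 ≤ γ) (hγ2 : γ ≤ β + α) : ∃ H : ℕ → MP n,
    (∀ j, plap (H j) = 0) ∧ (∀ j, OddP (H j)) ∧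
    (∀ j, ∀ x ∈ Ω, ‖x‖ < (1 / 2) ^ j / 2 →
      |v x - peval (H j) x| ≤ (256 * (n + 1) + 5) * (7 * M + 2) * A * ((1 / 2 : ℝ) ^ j) ^ γ) ∧
    (∀ x : En n, ‖x‖ ≤ 1 / 8 → |peval (H 0) x| ≤ (256 * (n + 1) + 5) * (7 * M + 2) * A) ∧
    (∀ j (x : En n), ‖x‖ ≤ (1 / 2) ^ j / 8 →
      |peval (H (j + 1) - H j) x| ≤ (256 * (n + 1) + 5) * (7 * M + 2) * A * ((1 / 2 : ℝ) ^ j) ^ γ) := by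
  have hA := h.A0
  have hM := h.M0
  have hr0 : ∀ j : ℕ, (0 : ℝ) < (1 / 2) ^ j := fun j => by positivity
  have hr1 : ∀ j : ℕ, (1 / 2 : ℝ) ^ j ≤ 1 := fun j => pow_le_one₀ (by norm_num) (by norm_num)
  have hdat := fun j : ℕ => h.dat hα hβ hκ hγ (hr0 j) (hr1 j)
  choose H h1 h2 h3 h4 using fun j => (hdat j).core
  set c : ℝ := 256 * (n + 1) + 5 with hc
  have hc0 : 0 < c := by positivity
  -- products of powers
  have hprod : ∀ j : ℕ, A * ((1 / 2 : ℝ) ^ j) ^ β * (M * ((1 / 2 : ℝ) ^ j) ^ (1 + α)) / (1 / 2) ^ j ≤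
      A * M * ((1 / 2 : ℝ) ^ j) ^ γ := by
    intro j
    have hr := hr0 j
    have hle := Real.rpow_le_rpow_of_exponent_ge hr (hr1 j) hγ2
    set r : ℝ := (1 / 2) ^ j
    have : A * r ^ β * (M * r ^ (1 + α)) / r = A * M * r ^ (β + α) := by
      rw [Real.rpow_add hr, Real.rpow_add hr, Real.rpow_one]; field_simp
    rw [this]; gcongr
  -- bound of H on slabs
  have hslab : ∀ (j : ℕ) (x : En n) (t : ℝ), 0 ≤ t → ‖x‖ ≤ (1 / 2) ^ j / 2 →
      |xn x| ≤ t * (M * ((1 / 2 : ℝ) ^ j) ^ (1 + α)) →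
      |peval (H j) x| ≤ c * (((t + 1) * M + 1) * A * ((1 / 2 : ℝ) ^ j) ^ γ) := by
    intro j x t ht hx hxt
    refine (h4 j x hx).trans ?_
    have hp := hprod j
    have hr := hr0 j
    set r : ℝ := (1 / 2) ^ j
    have : A * r ^ β * (|xn x| + M * r ^ (1 + α)) / r ≤ (t + 1) * (A * r ^ β * (M * r ^ (1 + α)) / r) := by
      rw [mul_div_assoc', div_le_div_iff_of_pos_right hr]
      have : 0 < A * r ^ β := by positivity
      nlinarith
    refine mul_le_mul_of_nonneg_left ?_ hc0.le
    have h5 : (t + 1) * (A * r ^ β * (M * r ^ (1 + α)) / r) ≤ (t + 1) * (A * M * r ^ γ) := by gcongr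
    nlinarith
  have hv : ∀ j, ∀ x ∈ Ω, ‖x‖ < (1 / 2) ^ j / 2 →
      |v x - peval (H j) x| ≤ c * ((M + 1) * A * ((1 / 2 : ℝ) ^ j) ^ γ) := by
    intro j x hx hxr
    refine (h3 j x hx hxr).trans ?_
    refine mul_le_mul_of_nonneg_left ?_ hc0.le
    have hp := hprod j
    nlinarith
  have hmono : ∀ j : ℕ, ((1 / 2 : ℝ) ^ (j + 1)) ^ γ ≤ ((1 / 2 : ℝ) ^ j) ^ γ := by
    intro j
    refine Real.rpow_le_rpow (by positivity) ?_ hγ0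
    exact pow_le_pow_of_le_one (by norm_num) (by norm_num) (by omega)
  refine ⟨H, h1, h2, ?_, ?_, ?_⟩
  · intro j x hx hxr
    refine (hv j x hx hxr).trans ?_
    have e1 : c * (7 * M + 2) * A * ((1 / 2 : ℝ) ^ j) ^ γ
        = c * ((7 * M + 2) * (A * ((1 / 2 : ℝ) ^ j) ^ γ)) := by ring
    rw [e1]
    refine mul_le_mul_of_nonneg_left ?_ hc0.le
    rw [mul_assoc]
    refine mul_le_mul_of_nonneg_right ?_ (by positivity)
    linarith
  · intro x hx
    have h5 := h4 0 x (by norm_num; linarith)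
    simp only [pow_zero, Real.one_rpow, mul_one, div_one] at h5
    refine h5.trans ?_
    rw [mul_assoc]
    refine mul_le_mul_of_nonneg_left ?_ hc0.le
    have := abs_xn_le x
    have : A * |xn x| ≤ A * 1 := by gcongr; linarith
    nlinarith
  · -- upper part
    have hup : ∀ j (x : En n), ‖x‖ ≤ (1 / 2) ^ j / 8 → 0 ≤ xn x →
      |peval (H (j + 1) - H j) x| ≤ c * (7 * M + 2) * A * ((1 / 2 : ℝ) ^ j) ^ γ := by
      intro j x hx hx0
      have hr := hr0 j
      have hm := hmono j
      have e2 : (1 / 2 : ℝ) ^ (j + 1) = (1 / 2) ^ j / 2 := by rw [pow_succ]; ring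
      rw [peval_sub]
      have hAm : 0 ≤ A * ((1 / 2 : ℝ) ^ j) ^ γ := by positivity
      have hgoal : c * (7 * M + 2) * A * ((1 / 2 : ℝ) ^ j) ^ γ =
        c * ((7 * M + 2) * (A * ((1 / 2 : ℝ) ^ j) ^ γ)) := by ring
      rw [hgoal]
      have hAm' : A * ((1 / 2 : ℝ) ^ (j + 1)) ^ γ ≤ A * ((1 / 2 : ℝ) ^ j) ^ γ := by gcongr
      by_cases hs : M * ((1 / 2 : ℝ) ^ j) ^ (1 + α) < xn x
      · have hxΩ := (hdat j).up x (by linarith) hs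
        have f1 := hv j x hxΩ (by linarith)
        have f2 := hv (j + 1) x hxΩ (by rw [e2]; linarith)
        have f3 : |peval (H (j + 1)) x - peval (H j) x| ≤ c * ((M + 1) * A * ((1 / 2 : ℝ) ^ j) ^ γ) +
            c * ((M + 1) * A * ((1 / 2 : ℝ) ^ (j + 1)) ^ γ) := by
          rw [abs_le] at *; constructor <;> linarith
        refine f3.trans ?_
        rw [← mul_add]
        refine mul_le_mul_of_nonneg_left ?_ hc0.le
        have : (M + 1) * (A * ((1 / 2 : ℝ) ^ (j + 1)) ^ γ) ≤ (M + 1) * (A * ((1 / 2 : ℝ) ^ j) ^ γ) := by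
          gcongr
        nlinarith
      · have hs' := not_lt.1 hs
        have f1 := hslab j x 1 zero_le_one (by linarith) (by rw [abs_of_nonneg hx0]; linarith)
        have f2 := hslab (j + 1) x 4 (by norm_num) (by rw [e2]; linarith) (by
          rw [abs_of_nonneg hx0]
          refine hs'.trans ?_
          rw [e2, Real.div_rpow hr.le (by norm_num)]
          have h24 : (2 : ℝ) ^ (1 + α) ≤ 4 := by
            calc (2 : ℝ) ^ (1 + α) ≤ 2 ^ (2 : ℝ) :=
                  Real.rpow_le_rpow_of_exponent_le (by norm_num) (by linarith)
              _ = 4 := by norm_num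
          have h2p : (0 : ℝ) < 2 ^ (1 + α) := by positivity
          have : ((1 / 2 : ℝ) ^ j) ^ (1 + α) ≤ 4 * (((1 / 2 : ℝ) ^ j) ^ (1 + α) / 2 ^ (1 + α)) := by
            rw [mul_div_assoc', le_div_iff₀ h2p]
            have : (0 : ℝ) < ((1 / 2 : ℝ) ^ j) ^ (1 + α) := by positivity
            nlinarith
          nlinarith)
        have f3 : |peval (H (j + 1)) x - peval (H j) x| ≤ c * (((4 + 1) * M + 1) * A * ((1 / 2 : ℝ) ^ (j + 1)) ^ γ) +
            c * (((1 + 1) * M + 1) * A * ((1 / 2 : ℝ) ^ j) ^ γ) := by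
          rw [abs_le] at *; constructor <;> linarith
        refine f3.trans ?_
        rw [← mul_add]
        refine mul_le_mul_of_nonneg_left ?_ hc0.le
        have : (5 * M + 1) * (A * ((1 / 2 : ℝ) ^ (j + 1)) ^ γ) ≤ (5 * M + 1) * (A * ((1 / 2 : ℝ) ^ j) ^ γ) := by
          gcongr
        nlinarith
    intro j x hx
    rcases le_or_gt 0 (xn x) with h0 | h0
    · exact hup j x hx h0
    · have := hup j (rfx x) (by simpa using hx) (by rw [xn_rfx]; linarith)
      rwa [((h2 (j + 1)).sub (h2 j)).peval_rfx, abs_neg] at this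

lemma abs_peval_le_card {a : MP n} {m : ℕ} (ha : a.totalDegree ≤ m) {B : ℝ}
    (hB : ∀ d, |coeff d a| ≤ B) {x : En n} (hx : ‖x‖ ≤ 1) : |peval a x| ≤ (degs n m).card * B := by
  rw [peval_eq_of_subset _ x (support_subset_degs ha)]
  refine (Finset.abs_sum_le_sum_abs _ _).trans ?_
  rw [← nsmul_eq_mul]
  refine Finset.sum_le_card_nsmul _ _ _ fun d _ => ?_
  rw [abs_mul]
  calc _ ≤ B * 1 := mul_le_mul (hB d) ((abs_prod_le x d).trans (pow_le_one₀ (norm_nonneg _) hx))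
        (abs_nonneg _) ((abs_nonneg _).trans (hB d))
    _ = B := mul_one B

lemma stage (n : ℕ) [NeZero n] (m : ℕ) (α β κ M γ : ℝ) (hα : 0 < α) (hα1 : α < 1) (hβ : 0 ≤ β)
    (hκ : 2 ≤ κ) (hγ : γ ≤ κ) (hγ2 : γ ≤ β + α) (hM : 0 < M)
    (h1 : (m : ℝ) < γ) (h2 : γ < m + 1) :
    ∃ C : ℝ, 0 < C ∧ ∀ (Ω : Set (En n)) (v : En n → ℝ) (A : ℝ), Stg Ω v A β κ α M →
      ∃ a : MP n, plap a = 0 ∧ OddP a ∧ a.totalDegree ≤ m ∧ (∀ d, |coeff d a| ≤ C * A) ∧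
      ∀ x ∈ Ω, ‖x‖ < 1 → |v x - peval a x| ≤ C * A * ‖x‖ ^ γ := by
  obtain ⟨C0, hC0, hlim⟩ := poly_limit (n := n) m γ h1 h2
  set c : ℝ := (256 * (n + 1) + 5) * (7 * M + 2) with hc
  have hc0 : 0 < c := by positivity
  have hγ0 : 0 < γ := lt_of_le_of_lt (Nat.cast_nonneg m) h1
  set T : ℝ := (2 : ℝ) ^ (m + 5) with hT
  have hT1 : 1 ≤ T := one_le_pow₀ (by norm_num)
  set W : ℝ := 1 + (degs n m).card * (C0 * c) + c + C0 * c with hW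
  have hW0 : 0 < W := by positivity
  have hTγ : 1 ≤ T ^ γ := Real.one_le_rpow hT1 hγ0.le
  refine ⟨W * T ^ γ, by positivity, ?_⟩
  intro Ω v A h
  have hA := h.A0
  obtain ⟨H, g1, g2, g3, g4, g5⟩ := h.seq hα hα1 hβ hκ hγ hγ0.le hγ2
  obtain ⟨a, a1, a2, a3, a4, a5⟩ := hlim H (c * A) (by positivity) g1 g2 g4 g5
  refine ⟨a, a1, a2, a3, ?_, ?_⟩
  · intro d
    refine (a4 d).trans ?_
    have : C0 * c ≤ W := by rw [hW]; have : 0 ≤ (degs n m).card * (C0 * c) := by positivity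
                            linarith
    calc C0 * (c * A) = C0 * c * 1 * A := by ring
      _ ≤ W * T ^ γ * A := by gcongr
  · intro x hx hx1
    have hx0 : 0 < ‖x‖ := by
      rw [norm_pos_iff]; rintro rfl; exact h.z0 hx
    -- it suffices
    suffices hs : ∃ r : ℝ, 0 < r ∧ r ≤ T * ‖x‖ ∧ |v x - peval a x| ≤ W * A * r ^ γ by
      obtain ⟨r, hr, hr2, hr3⟩ := hs
      refine hr3.trans ?_
      have : r ^ γ ≤ T ^ γ * ‖x‖ ^ γ := by
        rw [← Real.mul_rpow (by positivity) hx0.le]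
        exact Real.rpow_le_rpow hr.le hr2 hγ0.le
      calc W * A * r ^ γ ≤ W * A * (T ^ γ * ‖x‖ ^ γ) := by gcongr
        _ = _ := by ring
    by_cases hsm : ‖x‖ ≤ 1 / 2 ^ (m + 4)
    · obtain ⟨j, hj1, hj2⟩ := exists_nat_pow_near_of_lt_one (x := ‖x‖ * 2 ^ (m + 4))
        (y := (1 / 2 : ℝ)) (by positivity) (by
          rwa [le_div_iff₀ (by positivity)] at hsm) (by norm_num) (by norm_num)
      have hp4 : (0 : ℝ) < 2 ^ (m + 4) := by positivity
      refine ⟨(1 / 2) ^ j, by positivity, ?_, ?_⟩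
      · rw [pow_succ] at hj1
        rw [hT, pow_succ]; nlinarith
      · have hxj : ‖x‖ ≤ (1 / 2) ^ j / 8 / 2 ^ (m + 1) := by
          rw [div_div, le_div_iff₀ (by positivity)]
          refine le_trans (le_of_eq ?_) hj2
          have e2 : (2 : ℝ) ^ (m + 4) = 8 * 2 ^ (m + 1) := by
            rw [show m + 4 = 3 + (m + 1) by ring, pow_add]; norm_num
          rw [e2]
        have hxj2 : ‖x‖ < (1 / 2) ^ j / 2 := by
          rw [lt_div_iff₀ (by norm_num)]
          refine lt_of_lt_of_le ?_ hj2
          refine mul_lt_mul_of_pos_left ?_ hx0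
          rw [pow_add]
          have : (1 : ℝ) ≤ 2 ^ m := one_le_pow₀ (by norm_num)
          linarith
        have e1 := g3 j x hx hxj2
        have e2 := a5 j x hxj
        have e3 : |v x - peval a x| ≤ c * A * ((1 / 2 : ℝ) ^ j) ^ γ + C0 * (c * A) * ((1 / 2 : ℝ) ^ j) ^ γ := by
          rw [abs_le] at *; constructor <;> linarith
        refine e3.trans ?_
        have : 0 ≤ (1 + (degs n m).card * (C0 * c)) * (A * ((1 / 2 : ℝ) ^ j) ^ γ) := by positivity
        rw [hW]; nlinarith
    · refine ⟨1, one_pos, ?_, ?_⟩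
      · have := not_le.1 hsm
        rw [div_lt_iff₀ (by positivity)] at this
        rw [hT, pow_succ]
        nlinarith [pow_pos (two_pos : (0 : ℝ) < 2) (m + 4)]
      · rw [Real.one_rpow, mul_one]
        have e1 := h.bv x hx hx1
        have e2 : A * ‖x‖ ^ β ≤ A * 1 := by
          gcongr
          exact Real.rpow_le_one hx0.le hx1.le hβ
        have e3 := abs_peval_le_card a3 a4 hx1.le
        have e4 : |v x - peval a x| ≤ |v x| + |peval a x| := abs_sub _ _
        have : 0 ≤ (c + C0 * c) * A := by positivity
        rw [hW]; nlinarith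
end stage

/-- no terms of degree `< j` -/
def Low (j : ℕ) (p : MP n) : Prop := ∀ d : Fin n →₀ ℕ, mdeg d < j → coeff d p = 0

lemma Low.mono {i j : ℕ} {p : MP n} (h : Low j p) (hij : i ≤ j) : Low i p :=
  fun d hd => h d (lt_of_lt_of_le hd hij)
lemma Low.zero (j : ℕ) : Low j (0 : MP n) := fun d _ => by simp
lemma Low.of0 (p : MP n) : Low 0 p := fun d hd => absurd hd (Nat.not_lt_zero _)
lemma Low.add {j : ℕ} {p q : MP n} (hp : Low j p) (hq : Low j q) : Low j (p + q) :=
  fun d hd => by rw [coeff_add, hp d hd, hq d hd, add_zero]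
lemma Low.sub {j : ℕ} {p q : MP n} (hp : Low j p) (hq : Low j q) : Low j (p - q) :=
  fun d hd => by rw [coeff_sub, hp d hd, hq d hd, sub_zero]
lemma Low.neg {j : ℕ} {p : MP n} (hp : Low j p) : Low j (-p) :=
  fun d hd => by rw [coeff_neg, hp d hd, neg_zero]
lemma Low.mul {i j : ℕ} {p q : MP n} (hp : Low i p) (hq : Low j q) : Low (i + j) (p * q) := by
  intro d hd
  rw [coeff_mul]
  refine Finset.sum_eq_zero fun e he => ?_
  rw [Finset.HasAntidiagonal.mem_antidiagonal] at he
  have : mdeg e.1 + mdeg e.2 = mdeg d := by rw [← mdeg_add, he]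
  by_cases h1 : mdeg e.1 < i
  · rw [hp _ h1, zero_mul]
  · rw [hq _ (by omega), mul_zero]
lemma Low.pow {j : ℕ} {p : MP n} (hp : Low j p) (m : ℕ) : Low (m * j) (p ^ m) := by
  induction m with
  | zero => exact (Low.of0 _).mono (by simp)
  | succ m ih => rw [pow_succ, add_mul, one_mul]; exact ih.mul hp
lemma Low.prod {ι : Type*} (s : Finset ι) (w : ι → ℕ) (p : ι → MP n) (h : ∀ i ∈ s, Low (w i) (p i)) :
    Low (∑ i ∈ s, w i) (∏ i ∈ s, p i) := by
  classical
  induction s using Finset.induction_on with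
  | empty => exact (Low.of0 _).mono (by simp)
  | insert a s ha ih =>
    rw [Finset.sum_insert ha, Finset.prod_insert ha]
    exact (h a (by simp)).mul (ih fun i hi => h i (by simp [hi]))
lemma Low.sum {ι : Type*} (s : Finset ι) {j : ℕ} (p : ι → MP n) (h : ∀ i ∈ s, Low j (p i)) :
    Low j (∑ i ∈ s, p i) := fun d hd => by
  rw [coeff_sum]; exact Finset.sum_eq_zero fun i hi => h i hi d hd
lemma Low.X (i : Fin n) : Low 1 (X i : MP n) := fun d hd => by
  classical
  rw [coeff_X, if_neg]
  rintro rfl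
  rw [mdeg_single] at hd; omega

lemma Low.tr {j : ℕ} {p : MP n} (hp : Low j p) (m : ℕ) : Low j (tr m p) := fun d hd => by
  rw [coeff_tr, hp d hd, ite_self]

lemma Low.abs_le {j m : ℕ} {a : MP n} (h : Low j a) (ha : a.totalDegree ≤ m) {B : ℝ}
    (hB : ∀ d, |coeff d a| ≤ B) {x : En n} (hx : ‖x‖ ≤ 1) :
    |peval a x| ≤ (degs n m).card * B * ‖x‖ ^ j := by
  rw [peval_eq_of_subset _ x (support_subset_degs ha)]
  refine (Finset.abs_sum_le_sum_abs _ _).trans ?_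
  rw [mul_assoc, ← nsmul_eq_mul]
  refine Finset.sum_le_card_nsmul _ _ _ fun d _ => ?_
  rw [abs_mul]
  have hB0 : 0 ≤ B := (abs_nonneg _).trans (hB d)
  by_cases hd : mdeg d < j
  · rw [h d hd]; simp; positivity
  · refine mul_le_mul (hB d) ((abs_prod_le x d).trans ?_) (abs_nonneg _) hB0
    exact pow_le_pow_of_le_one (norm_nonneg _) hx (by omega)

/-! substitution -/
lemma substLast_add (q p p' : MP n) : substLast q (p + p') = substLast q p + substLast q p' := by
  simp [substLast]
lemma substLast_sub (q p p' : MP n) : substLast q (p - p') = substLast q p - substLast q p' := by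
  simp [substLast]
lemma substLast_neg (q p : MP n) : substLast q (-p) = - substLast q p := by
  simp [substLast]
lemma substLast_sum {ι : Type*} (s : Finset ι) (q : MP n) (p : ι → MP n) :
    substLast q (∑ i ∈ s, p i) = ∑ i ∈ s, substLast q (p i) := by
  simp [substLast]

lemma substLast_monomial (q : MP n) (d : Fin n →₀ ℕ) (c : ℝ) :
    substLast q (monomial d c) = C c * ∏ i, (if i = lastIdx n then q else X i) ^ d i := by
  rw [substLast, aeval_monomial, Finsupp.prod_fintype _ _ (fun i => pow_zero _), algebraMap_eq]

lemma Low.substLast_monomial {q : MP n} (hq : Low 2 q) (d : Fin n →₀ ℕ) (c : ℝ) :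
    Low (mdeg d + d (lastIdx n)) (substLast q (monomial d c)) := by
  rw [_root_.substLast_monomial]
  have h2 := Low.prod Finset.univ (fun i => d i * (if i = lastIdx n then 2 else 1))
    (fun i => (if i = lastIdx n then q else MvPolynomial.X i) ^ d i) (by
      intro i _
      refine Low.pow ?_ _
      split_ifs
      · exact hq
      · exact Low.X i)
  have h3 := (Low.of0 (C c : MP n)).mul h2
  refine h3.mono (le_of_eq ?_)
  rw [mdeg_eq, Finsupp.degree_eq_sum, zero_add]
  have : ∀ i, d i * (if i = lastIdx n then 2 else 1) = d i + (if i = lastIdx n then d i else 0) := by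
    intro i; split_ifs <;> omega
  simp only [this, Finset.sum_add_distrib, Finset.sum_ite_eq', Finset.mem_univ, if_true]

lemma Low.substLast {q p : MP n} (hq : Low 2 q) {j : ℕ} (hp : Low j p) : Low j (substLast q p) := by
  rw [p.as_sum, substLast_sum]
  refine Low.sum _ _ fun d hd => ?_
  refine (Low.substLast_monomial hq d _).mono ?_
  by_contra hc
  exact (mem_support_iff.1 hd) (hp d (by omega))

/-- divisibility by the last variable gives one more degree -/
lemma Low.substLast_succ {q p : MP n} (hq : Low 2 q) {j : ℕ} (hp : Low j p)
    (h0 : ∀ d : Fin n →₀ ℕ, d (lastIdx n) = 0 → coeff d p = 0) : Low (j + 1) (_root_.substLast q p) := by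
  rw [p.as_sum, substLast_sum]
  refine Low.sum _ _ fun d hd => ?_
  refine (Low.substLast_monomial hq d _).mono ?_
  have h1 : j ≤ mdeg d := by
    by_contra hc
    exact (mem_support_iff.1 hd) (hp d (by omega))
  have h2 : d (lastIdx n) ≠ 0 := fun h => (mem_support_iff.1 hd) (h0 d h)
  omega

lemma substLast_bound_fixed (M : ℝ) (p : MP n) : ∀ N : ℕ, ∃ C : ℝ, 0 ≤ C ∧ ∀ q : MP n,
    (∀ d, |coeff d q| ≤ M) → ∀ d, mdeg d ≤ N → |coeff d (substLast q p)| ≤ C := by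
  classical
  have hmul : ∀ (F G : MP n → MP n),
      (∀ N : ℕ, ∃ C : ℝ, 0 ≤ C ∧ ∀ q : MP n, (∀ d, |coeff d q| ≤ M) → ∀ d, mdeg d ≤ N →
        |coeff d (F q)| ≤ C) →
      (∀ N : ℕ, ∃ C : ℝ, 0 ≤ C ∧ ∀ q : MP n, (∀ d, |coeff d q| ≤ M) → ∀ d, mdeg d ≤ N →
        |coeff d (G q)| ≤ C) →
      (∀ N : ℕ, ∃ C : ℝ, 0 ≤ C ∧ ∀ q : MP n, (∀ d, |coeff d q| ≤ M) → ∀ d, mdeg d ≤ N →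
        |coeff d (F q * G q)| ≤ C) := by
    intro F G hF hG N
    obtain ⟨C1, hC1, h1⟩ := hF N
    obtain ⟨C2, hC2, h2⟩ := hG N
    refine ⟨∑ d ∈ degs n N, (Finset.HasAntidiagonal.antidiagonal d).card * (C1 * C2), by positivity, ?_⟩
    intro q hq d hd
    refine le_trans ?_ (Finset.single_le_sum
      (f := fun d : Fin n →₀ ℕ => ((Finset.HasAntidiagonal.antidiagonal d).card : ℝ) * (C1 * C2))
      (fun e _ => by positivity) (mem_degs.2 hd))
    rw [coeff_mul]
    refine (Finset.abs_sum_le_sum_abs _ _).trans ?_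
    rw [← nsmul_eq_mul]
    refine Finset.sum_le_card_nsmul _ _ _ fun e he => ?_
    rw [Finset.HasAntidiagonal.mem_antidiagonal] at he
    have : mdeg e.1 + mdeg e.2 = mdeg d := by rw [← mdeg_add, he]
    rw [abs_mul]
    exact mul_le_mul (h1 q hq _ (by omega)) (h2 q hq _ (by omega)) (abs_nonneg _) hC1
  induction p using MvPolynomial.induction_on with
  | C c =>
    intro N
    refine ⟨|c|, abs_nonneg _, fun q _ d _ => ?_⟩
    rw [substLast, aeval_C, algebraMap_eq, coeff_C]
    split_ifs
    · exact le_rfl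
    · simp
  | add p p' hp hp' =>
    intro N
    obtain ⟨C1, hC1, h1⟩ := hp N
    obtain ⟨C2, hC2, h2⟩ := hp' N
    refine ⟨C1 + C2, by positivity, fun q hq d hd => ?_⟩
    rw [substLast_add, coeff_add]
    exact (abs_add_le _ _).trans (add_le_add (h1 q hq d hd) (h2 q hq d hd))
  | mul_X p i hp =>
    intro N
    have := hmul (fun q => substLast q p) (fun q => substLast q (X i)) hp ?_ N
    · simpa [substLast] using this
    · intro N
      by_cases hi : i = lastIdx n
      · refine ⟨|M|, abs_nonneg _, fun q hq d hd => ?_⟩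
        simp only [substLast, aeval_X, hi, if_true]
        exact (hq d).trans (le_abs_self _)
      · refine ⟨1, zero_le_one, fun q hq d hd => ?_⟩
        simp only [substLast, aeval_X, hi, if_false, coeff_X]
        split_ifs <;> simp

lemma substLast_bound (n : ℕ) [NeZero n] (M : ℝ) (N : ℕ) : ∃ C : ℝ, 0 < C ∧ ∀ q : MP n,
    (∀ d, |coeff d q| ≤ M) → ∀ p : MP n, p.totalDegree ≤ N → ∀ B : ℝ, (∀ d, |coeff d p| ≤ B) →
    ∀ d, mdeg d ≤ N → |coeff d (substLast q p)| ≤ C * B := by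
  choose C hC h using fun e : Fin n →₀ ℕ => substLast_bound_fixed M (monomial e (1 : ℝ)) N
  refine ⟨1 + ∑ e ∈ degs n N, C e, by have := Finset.sum_nonneg (fun e (_ : e ∈ degs n N) => hC e); linarith, ?_⟩
  intro q hq p hp B hB d hd
  have hB0 : 0 ≤ B := (abs_nonneg _).trans (hB 0)
  have e1 : substLast q p = ∑ e ∈ degs n N, MvPolynomial.C (coeff e p) * substLast q (monomial e (1 : ℝ)) := by
    conv_lhs => rw [p.as_sum, substLast_sum]
    rw [Finset.sum_subset (support_subset_degs hp)]
    · refine Finset.sum_congr rfl fun e _ => ?_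
      rw [substLast_monomial, substLast_monomial, map_one, one_mul]
    · intro e _ he
      rw [notMem_support_iff.1 he]; simp [substLast]
  rw [e1, coeff_sum]
  refine (Finset.abs_sum_le_sum_abs _ _).trans ?_
  have : ∑ e ∈ degs n N, |coeff d (MvPolynomial.C (coeff e p) * substLast q (monomial e (1 : ℝ)))|
      ≤ ∑ e ∈ degs n N, C e * B := by
    refine Finset.sum_le_sum fun e _ => ?_
    rw [coeff_C_mul, abs_mul, mul_comm (C e)]
    exact mul_le_mul (hB e) (h e q hq d hd) (abs_nonneg _) hB0
  refine this.trans ?_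
  rw [← Finset.sum_mul, add_mul]; linarith

lemma coeff_eq_zero_of_pderiv {q : MP n} {i : Fin n} (h : pderiv i q = 0) {d : Fin n →₀ ℕ}
    (hd : d i ≠ 0) : coeff d q = 0 := by
  have h1 : coeff (d - Finsupp.single i 1) (pderiv i q) = 0 := by rw [h, coeff_zero]
  rw [coeff_pderiv] at h1
  have h2 : d - Finsupp.single i 1 + Finsupp.single i 1 = d := by
    ext j
    by_cases hj : i = j
    · subst hj; simp; omega
    · simp [Finsupp.single_apply, hj]
  rw [h2] at h1
  have h3 := (mul_eq_zero.1 h1).resolve_right (by positivity)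
  exact h3

lemma substLast_of_pderiv {q p : MP n} (h : pderiv (lastIdx n) p = 0) : substLast q p = p := by
  conv_lhs => rw [p.as_sum, substLast_sum]
  conv_rhs => rw [p.as_sum]
  refine Finset.sum_congr rfl fun d hd => ?_
  rw [substLast_monomial]
  have h0 : d (lastIdx n) = 0 := by
    by_contra hc
    exact (mem_support_iff.1 hd) (coeff_eq_zero_of_pderiv h hc)
  rw [monomial_eq, Finsupp.prod_fintype _ _ (fun i => pow_zero _)]
  congr 1
  refine Finset.prod_congr rfl fun i _ => ?_
  by_cases hi : i = lastIdx n
  · subst hi; simp [h0]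
  · simp [hi]

lemma pderiv_substLast {q : MP n} (h : pderiv (lastIdx n) q = 0) (p : MP n) :
    pderiv (lastIdx n) (substLast q p) = 0 := by
  induction p using MvPolynomial.induction_on with
  | C c => simp [substLast]
  | add p p' hp hp' => rw [substLast_add, map_add, hp, hp', add_zero]
  | mul_X p i hp =>
    have : substLast q (p * X i) = substLast q p * (if i = lastIdx n then q else X i) := by
      simp [substLast]
    rw [this, pderiv_mul, hp, zero_mul, zero_add]
    split_ifs with hi
    · rw [h, mul_zero]
    · rw [pderiv_X_of_ne (fun h => hi h), mul_zero]

lemma peval_substLast (q p : MP n) (x y : En n) (h1 : y (lastIdx n) = peval q x)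
    (h2 : ∀ i, i ≠ lastIdx n → y i = x i) : peval (substLast q p) x = peval p y := by
  induction p using MvPolynomial.induction_on with
  | C c => simp [substLast, peval]
  | add p p' hp hp' => rw [substLast_add, peval_add, peval_add, hp, hp']
  | mul_X p i hp =>
    have : substLast q (p * X i) = substLast q p * (if i = lastIdx n then q else X i) := by
      simp [substLast]
    rw [this, peval_mul, peval_mul, hp, peval_X]
    split_ifs with hi
    · rw [hi, h1]
    · rw [peval_X, h2 i hi]

/-- double antiderivative in the last variable -/
def dint (b : ℕ) (F : MP n) : MP n := mkpoly (b + 2) (fun d =>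
  if 2 ≤ d (lastIdx n) then coeff (d - Finsupp.single (lastIdx n) 2) F /
    ((d (lastIdx n) : ℝ) * ((d (lastIdx n) : ℝ) - 1)) else 0)

lemma coeff_dint (b : ℕ) (F : MP n) (d : Fin n →₀ ℕ) : coeff d (dint b F) =
    if mdeg d ≤ b + 2 then (if 2 ≤ d (lastIdx n) then coeff (d - Finsupp.single (lastIdx n) 2) F /
    ((d (lastIdx n) : ℝ) * ((d (lastIdx n) : ℝ) - 1)) else 0) else 0 := by
  rw [dint, coeff_mkpoly]

lemma abs_coeff_dint {b : ℕ} {F : MP n} {B : ℝ} (hB : ∀ d, |coeff d F| ≤ B) (d : Fin n →₀ ℕ) :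
    |coeff d (dint b F)| ≤ B := by
  have hB0 : 0 ≤ B := (abs_nonneg _).trans (hB 0)
  rw [coeff_dint]
  split_ifs with h1 h2
  · have h3 : (2 : ℝ) ≤ d (lastIdx n) := by exact_mod_cast h2
    have h4 : (1 : ℝ) ≤ (d (lastIdx n) : ℝ) * ((d (lastIdx n) : ℝ) - 1) := by nlinarith
    rw [abs_div, abs_of_pos (by linarith : (0:ℝ) < (d (lastIdx n) : ℝ) * ((d (lastIdx n) : ℝ) - 1))]
    exact (div_le_self (abs_nonneg _) h4).trans (hB _)
  · simpa using hB0
  · simpa using hB0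

lemma apply_le_mdeg (d : Fin n →₀ ℕ) (i : Fin n) : d i ≤ mdeg d := by
  rw [mdeg_eq]; exact Finsupp.le_degree i d

lemma mdeg_sub_two {d : Fin n →₀ ℕ} (h : 2 ≤ d (lastIdx n)) :
    mdeg (d - Finsupp.single (lastIdx n) 2) + 2 = mdeg d := by
  have h2 : d - Finsupp.single (lastIdx n) 2 + Finsupp.single (lastIdx n) 2 = d := by
    ext j
    by_cases hj : lastIdx n = j
    · subst hj; simp; omega
    · simp [Finsupp.single_apply, hj]
  conv_rhs => rw [← h2, mdeg_add, mdeg_single]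

lemma coeff_dint_res {b : ℕ} {F : MP n} (hF : F.totalDegree ≤ b) (d : Fin n →₀ ℕ) :
    coeff d (F - plap (dint b F)) = - ∑ i ∈ Finset.univ.erase (lastIdx n),
      coeff (d + Finsupp.single i 2) (dint b F) * (((d i : ℝ) + 2) * ((d i : ℝ) + 1)) := by
  rw [coeff_sub, coeff_plap, ← Finset.add_sum_erase _ _ (Finset.mem_univ (lastIdx n))]
  have : coeff (d + Finsupp.single (lastIdx n) 2) (dint b F) *
      (((d (lastIdx n) : ℝ) + 2) * ((d (lastIdx n) : ℝ) + 1)) = coeff d F := by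
    rw [coeff_dint, mdeg_add, mdeg_single]
    by_cases h : mdeg d ≤ b
    · rw [if_pos (by omega), if_pos (by simp), add_tsub_cancel_right]
      simp only [Finsupp.add_apply, Finsupp.single_eq_same]
      push_cast
      have h1 : (d (lastIdx n) : ℝ) + 2 ≠ 0 := by positivity
      have h2 : (d (lastIdx n) : ℝ) + 2 - 1 ≠ 0 := by
        have : (0 : ℝ) ≤ d (lastIdx n) := Nat.cast_nonneg _
        linarith
      field_simp
      ring
    · rw [if_neg (by omega), zero_mul, coeff_eq_zero_of_mdeg hF (by omega)]
  rw [this]; ring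

lemma psolve_aux (n : ℕ) [NeZero n] (b s : ℕ) : ∃ C : ℝ, 0 < C ∧ ∀ t : ℕ, b < t + s → ∀ (F : MP n) (a : ℕ)
    (B : ℝ), F.totalDegree ≤ b → Low a F → (∀ d : Fin n →₀ ℕ, d (lastIdx n) < t → coeff d F = 0) →
    (∀ d, |coeff d F| ≤ B) → ∃ P : MP n, plap P = F ∧ P.totalDegree ≤ b + 2 ∧ Low (a + 2) P ∧
    (∀ d : Fin n →₀ ℕ, d (lastIdx n) = 0 → coeff d P = 0) ∧ ∀ d, |coeff d P| ≤ C * B := by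
  induction s with
  | zero =>
    refine ⟨1, one_pos, ?_⟩
    intro t ht F a B hF ha hl hB
    have : F = 0 := by
      ext d
      rw [coeff_zero]
      by_cases h : mdeg d ≤ b
      · exact hl d (by have := apply_le_mdeg d (lastIdx n); omega)
      · exact coeff_eq_zero_of_mdeg hF (by omega)
    have hB0 : 0 ≤ B := (abs_nonneg _).trans (hB 0)
    exact ⟨0, by rw [this]; simp [plap], by simp, Low.zero _, by simp, by simpa using hB0⟩
  | succ s ih =>
    obtain ⟨C, hC, h⟩ := ih
    set c : ℝ := n * ((b + 2) * (b + 2)) with hc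
    refine ⟨1 + C * c, by positivity, ?_⟩
    intro t ht F a B hF ha hl hB
    have hB0 : 0 ≤ B := (abs_nonneg _).trans (hB 0)
    have hdeg : (dint b F).totalDegree ≤ b + 2 := totalDegree_le_of_coeff fun d hd => by
      rw [coeff_dint, if_neg (by omega)]
    have hlow : Low (a + 2) (dint b F) := fun d hd => by
      rw [coeff_dint]
      split_ifs with h1 h2
      · have := mdeg_sub_two h2
        rw [ha _ (by omega), zero_div]
      · rfl
      · rfl
    have hFdeg : (F - plap (dint b F)).totalDegree ≤ b :=
      (totalDegree_sub _ _).trans (max_le hF (totalDegree_plap hdeg))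
    obtain ⟨P, h1, h2, h3, h4, h5⟩ := h (t + 2) (by omega) (F - plap (dint b F)) a (c * B) hFdeg
      (ha.sub (fun d hd => by
        rw [coeff_plap]
        refine Finset.sum_eq_zero fun i _ => ?_
        rw [hlow _ (by rw [mdeg_add, mdeg_single]; omega), zero_mul]))
      (fun d hd => by
        rw [coeff_dint_res hF, neg_eq_zero]
        refine Finset.sum_eq_zero fun i hi => ?_
        have hi' : i ≠ lastIdx n := (Finset.mem_erase.1 hi).1
        have e1 : (d + Finsupp.single i 2 : Fin n →₀ ℕ) (lastIdx n) = d (lastIdx n) := by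
          simp [Finsupp.single_apply, hi']
        rw [coeff_dint, e1]
        split_ifs with h1 h2
        · rw [hl, zero_div, zero_mul]
          rw [Finsupp.tsub_apply, e1]; simp; omega
        · rw [zero_mul]
        · rw [zero_mul])
      (fun d => by
        by_cases hd : b < mdeg d
        · rw [coeff_eq_zero_of_mdeg hFdeg hd, abs_zero]; positivity
        rw [coeff_dint_res hF, abs_neg]
        refine (Finset.abs_sum_le_sum_abs _ _).trans ?_
        refine (Finset.sum_le_sum_of_subset_of_nonneg (Finset.subset_univ _)
          (fun i _ _ => abs_nonneg _)).trans ?_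
        have : (n : ℝ) * ((b + 2) * (b + 2)) * B = (Finset.univ : Finset (Fin n)).card •
            (B * (((b : ℝ) + 2) * (b + 2))) := by
          rw [Finset.card_univ, Fintype.card_fin, nsmul_eq_mul]; ring
        rw [hc, this]
        refine Finset.sum_le_card_nsmul _ _ _ fun i _ => ?_
        have hdi : (d i : ℝ) ≤ b := by
          have := apply_le_mdeg d i
          exact_mod_cast (by omega : d i ≤ b)
        rw [abs_mul, abs_of_nonneg (by positivity : (0:ℝ) ≤ ((d i : ℝ) + 2) * ((d i : ℝ) + 1))]
        refine mul_le_mul (abs_coeff_dint hB _) ?_ (by positivity) hB0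
        refine mul_le_mul (by linarith) (by linarith) (by positivity) (by positivity))
    refine ⟨dint b F + P, ?_, ?_, hlow.add h3, ?_, ?_⟩
    · rw [plap_add, h1]; ring
    · exact (totalDegree_add _ _).trans (max_le hdeg h2)
    · intro d hd
      rw [coeff_add, h4 d hd, coeff_dint]
      simp [hd]
    · intro d
      rw [coeff_add]
      refine (abs_add_le _ _).trans ?_
      have := h5 d
      have := abs_coeff_dint (b := b) hB d
      nlinarith

lemma psolve (n : ℕ) [NeZero n] (b : ℕ) : ∃ C : ℝ, 0 < C ∧ ∀ (F : MP n) (a : ℕ)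
    (B : ℝ), F.totalDegree ≤ b → Low a F →
    (∀ d, |coeff d F| ≤ B) → ∃ P : MP n, plap P = F ∧ P.totalDegree ≤ b + 2 ∧ Low (a + 2) P ∧
    (∀ d : Fin n →₀ ℕ, d (lastIdx n) = 0 → coeff d P = 0) ∧ ∀ d, |coeff d P| ≤ C * B := by
  obtain ⟨C, hC, h⟩ := psolve_aux n b (b + 1)
  exact ⟨C, hC, fun F a B h1 h2 h3 => h 0 (by omega) F a B h1 h2 (fun d hd => absurd hd (by omega)) h3⟩

/-- admissible boundary polynomials -/
structure BP (M : ℝ) (Q : MP n) : Prop where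
  low : Low 2 Q
  pd : pderiv (lastIdx n) Q = 0
  cf : ∀ d, |coeff d Q| ≤ M

lemma abs_coeff_plap {N : ℕ} {p : MP n} (hp : p.totalDegree ≤ N + 2) {B : ℝ}
    (hB : ∀ d, |coeff d p| ≤ B) (d : Fin n →₀ ℕ) :
    |coeff d (plap p)| ≤ (n * ((N + 2) * (N + 2))) * B := by
  have hB0 : 0 ≤ B := (abs_nonneg _).trans (hB 0)
  by_cases hd : N < mdeg d
  · rw [coeff_eq_zero_of_mdeg (totalDegree_plap hp) hd, abs_zero]; positivity
  rw [coeff_plap]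
  refine (Finset.abs_sum_le_sum_abs _ _).trans ?_
  have : (n : ℝ) * ((N + 2) * (N + 2)) * B = (Finset.univ : Finset (Fin n)).card •
      (B * (((N : ℝ) + 2) * (N + 2))) := by
    rw [Finset.card_univ, Fintype.card_fin, nsmul_eq_mul]; ring
  rw [this]
  refine Finset.sum_le_card_nsmul _ _ _ fun i _ => ?_
  have hdi : (d i : ℝ) ≤ N := by
    have := apply_le_mdeg d i
    exact_mod_cast (by omega : d i ≤ N)
  rw [abs_mul, abs_of_nonneg (by positivity : (0:ℝ) ≤ ((d i : ℝ) + 2) * ((d i : ℝ) + 1))]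
  refine mul_le_mul (hB _) ?_ (by positivity) hB0
  refine mul_le_mul (by linarith) (by linarith) (by positivity) (by positivity)

/-- harmonic correction on the boundary -/
lemma corr0 (n : ℕ) [NeZero n] (N : ℕ) (M : ℝ) (s : ℕ) : ∃ C : ℝ, 0 < C ∧ ∀ j : ℕ, N + 2 < j + s →
    ∀ Q : MP n, BP M Q → ∀ (q : MP n) (B : ℝ), pderiv (lastIdx n) q = 0 → Low j q →
    q.totalDegree ≤ N + 2 → (∀ d, |coeff d q| ≤ B) →
    ∃ P : MP n, plap P = 0 ∧ Low j P ∧ P.totalDegree ≤ N + 2 ∧ (∀ d, |coeff d P| ≤ C * B) ∧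
      ∀ d, mdeg d ≤ N + 2 → coeff d (substLast Q P) = coeff d q := by
  induction s with
  | zero =>
    refine ⟨1, one_pos, ?_⟩
    intro j hj Q hQ q B hq hlow hdeg hB
    have : q = 0 := by
      ext d
      rw [coeff_zero]
      by_cases h : mdeg d ≤ N + 2
      · exact hlow d (by omega)
      · exact coeff_eq_zero_of_mdeg hdeg (by omega)
    have hB0 : 0 ≤ B := (abs_nonneg _).trans (hB 0)
    refine ⟨0, by simp [plap], Low.zero _, by simp, by simpa using hB0, ?_⟩
    intro d _; rw [this]; simp [substLast]
  | succ s ih =>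
    obtain ⟨C, hC, h⟩ := ih
    obtain ⟨C1, hC1, h1⟩ := psolve n N
    obtain ⟨C2, hC2, h2⟩ := substLast_bound n M (N + 2)
    set c : ℝ := n * ((N + 2) * (N + 2)) with hc
    have hc0 : 0 ≤ c := by positivity
    refine ⟨1 + C1 * c + C * (C2 * (C1 * c)), by positivity, ?_⟩
    intro j hj Q hQ q B hq hlow hdeg hB
    have hB0 : 0 ≤ B := (abs_nonneg _).trans (hB 0)
    have hplow : Low (j - 2) (plap q) := fun d hd => by
      rw [coeff_plap]
      refine Finset.sum_eq_zero fun i _ => ?_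
      rw [hlow _ (by rw [mdeg_add, mdeg_single]; omega), zero_mul]
    obtain ⟨R, r1, r2, r3, r4, r5⟩ := h1 (plap q) (j - 2) (c * B) (totalDegree_plap hdeg) hplow
      (abs_coeff_plap hdeg hB)
    have r3' : Low j R := r3.mono (by omega)
    set q' := tr (N + 3) (substLast Q R) with hq'
    have hsub : ∀ d, mdeg d ≤ N + 2 → coeff d q' = coeff d (substLast Q R) := fun d hd => by
      rw [hq', coeff_tr, if_pos (by omega)]
    obtain ⟨P, p1, p2, p3, p4, p5⟩ := h (j + 1) (by omega) Q hQ q' (C2 * (C1 * (c * B)))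
      (by rw [hq', pderiv_tr, pderiv_substLast hQ.pd]; ext d; simp [coeff_tr])
      ((Low.substLast_succ hQ.low r3' r4).tr _) (totalDegree_tr _ _)
      (fun d => by
        by_cases hd : mdeg d ≤ N + 2
        · rw [hsub d hd]; exact h2 Q hQ.cf R r2 _ r5 d hd
        · rw [hq', coeff_tr, if_neg (by omega), abs_zero]; positivity)
    refine ⟨q - R + P, ?_, (hlow.sub r3').add (p2.mono (by omega)), ?_, ?_, ?_⟩
    · rw [plap_add, plap_sub, r1, p1]; ring
    · exact (totalDegree_add _ _).trans (max_le ((totalDegree_sub _ _).trans (max_le hdeg r2)) p3)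
    · intro d
      rw [coeff_add, coeff_sub]
      refine (abs_add_le _ _).trans ?_
      have e1 := p4 d
      have e2 := r5 d
      have e3 := hB d
      have e4 := abs_sub (coeff d q) (coeff d R)
      nlinarith
    · intro d hd
      rw [substLast_add, substLast_sub, substLast_of_pderiv hq, coeff_add, coeff_sub, p5 d hd, hsub d hd]
      ring

lemma corr (n : ℕ) [NeZero n] (N : ℕ) (M : ℝ) : ∃ C : ℝ, 0 < C ∧ ∀ (j : ℕ) (Q : MP n), BP M Q →
    ∀ (F q : MP n) (B : ℝ), Low (j - 2) F → Low j q → F.totalDegree ≤ N → q.totalDegree ≤ N + 2 →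
    (∀ d, |coeff d F| ≤ B) → (∀ d, |coeff d q| ≤ B) →
    ∃ P : MP n, plap P = F ∧ Low j P ∧ P.totalDegree ≤ N + 2 ∧ (∀ d, |coeff d P| ≤ C * B) ∧
      ∀ d, mdeg d ≤ N + 2 → coeff d (substLast Q P) = coeff d (substLast Q q) := by
  obtain ⟨C, hC, h⟩ := corr0 n N M (N + 3)
  obtain ⟨C1, hC1, h1⟩ := psolve n N
  obtain ⟨C2, hC2, h2⟩ := substLast_bound n M (N + 2)
  refine ⟨C1 + C * (C2 * (1 + C1)), by positivity, ?_⟩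
  intro j Q hQ F q B hF hq hFd hqd hFB hqB
  have hB0 : 0 ≤ B := (abs_nonneg _).trans (hqB 0)
  obtain ⟨R, r1, r2, r3, r4, r5⟩ := h1 F (j - 2) B hFd hF hFB
  have r3' : Low j R := r3.mono (by omega)
  have hd1 : (q - R).totalDegree ≤ N + 2 := (totalDegree_sub _ _).trans (max_le hqd r2)
  have hb1 : ∀ d, |coeff d (q - R)| ≤ (1 + C1) * B := fun d => by
    rw [coeff_sub]
    have := abs_sub (coeff d q) (coeff d R)
    have := hqB d
    have := r5 d
    linarith
  set q' := tr (N + 3) (substLast Q (q - R)) with hq'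
  have hsub : ∀ d, mdeg d ≤ N + 2 → coeff d q' = coeff d (substLast Q (q - R)) := fun d hd => by
    rw [hq', coeff_tr, if_pos (by omega)]
  obtain ⟨P, p1, p2, p3, p4, p5⟩ := h j (by omega) Q hQ q' (C2 * ((1 + C1) * B))
    (by rw [hq', pderiv_tr, pderiv_substLast hQ.pd]; ext d; simp [coeff_tr])
    ((Low.substLast hQ.low (hq.sub r3')).tr _) (totalDegree_tr _ _)
    (fun d => by
      by_cases hd : mdeg d ≤ N + 2
      · rw [hsub d hd]; exact h2 Q hQ.cf _ hd1 _ hb1 d hd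
      · rw [hq', coeff_tr, if_neg (by omega), abs_zero]; positivity)
  refine ⟨R + P, ?_, r3'.add p2, ?_, ?_, ?_⟩
  · rw [plap_add, r1, p1]; ring
  · exact (totalDegree_add _ _).trans (max_le r2 p3)
  · intro d
    rw [coeff_add]
    refine (abs_add_le _ _).trans ?_
    have e1 := p4 d
    have e2 := r5 d
    nlinarith
  · intro d hd
    rw [substLast_add, coeff_add, p5 d hd, hsub d hd, substLast_sub, coeff_sub]
    ring

/-- the model cone -/
def Cone (ρ : ℝ) (x : En n) : Prop := ‖x‖ < ρ ∧ ‖x‖ / 2 < xn x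

lemma isOpen_cone (ρ : ℝ) : IsOpen {x : En n | Cone ρ x} :=
  (isOpen_lt continuous_norm continuous_const).inter
    (isOpen_lt (continuous_norm.div_const 2) continuous_xn)

lemma cone_ev {ρ t : ℝ} (ht : 0 < t) (htρ : t < ρ) : Cone ρ (t • ev (lastIdx n) : En n) := by
  have h1 : ‖(t • ev (lastIdx n) : En n)‖ = t := by
    rw [norm_smul, Real.norm_of_nonneg ht.le]; simp
  have h2 : xn (t • ev (lastIdx n) : En n) = t := by simp [xn]
  rw [Cone, h1, h2]
  exact ⟨htρ, by linarith⟩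

lemma xn_smul (t : ℝ) (x : En n) : xn (t • x) = t * xn x := by simp [xn]

lemma Cone.smul {ρ t : ℝ} {x : En n} (h : Cone 1 x) (ht : 0 < t) (htρ : t ≤ ρ) : Cone ρ (t • x) := by
  rw [Cone, xn_smul, norm_smul, Real.norm_of_nonneg ht.le]
  obtain ⟨h1, h2⟩ := h
  constructor
  · nlinarith
  · nlinarith

lemma peval_tr_smul {e : ℕ} {a : MP n} (ha : Low e a) (t : ℝ) (y : En n) :
    peval (tr (e + 1) a) (t • y) = t ^ e * peval (tr (e + 1) a) y := by
  rw [peval_eq, peval_eq, Finset.mul_sum]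
  refine Finset.sum_congr rfl fun d hd => ?_
  have hd' := mem_support_iff.1 hd
  rw [coeff_tr] at hd'
  have h1 : mdeg d = e := by
    have h2 : mdeg d < e + 1 := by
      by_contra hc; rw [if_neg hc] at hd'; exact hd' rfl
    rw [if_pos h2] at hd'
    by_contra hc
    exact hd' (ha d (by omega))
  have : ∏ i, (t • y) i ^ d i = t ^ e * ∏ i, y i ^ d i := by
    rw [← h1, mdeg_eq, Finsupp.degree_eq_sum, ← Finset.prod_pow_eq_pow_sum, ← Finset.prod_mul_distrib]
    refine Finset.prod_congr rfl fun i _ => ?_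
    rw [← mul_pow]; simp
  rw [this]; ring

lemma exists_coeff_bound (a : MP n) : ∃ B : ℝ, 0 ≤ B ∧ ∀ d, |coeff d a| ≤ B := by
  refine ⟨∑ d ∈ a.support, |coeff d a|, Finset.sum_nonneg fun _ _ => abs_nonneg _, fun d => ?_⟩
  by_cases h : d ∈ a.support
  · exact Finset.single_le_sum (f := fun d => |coeff d a|) (fun _ _ => abs_nonneg _) h
  · rw [notMem_support_iff.1 h, abs_zero]; exact Finset.sum_nonneg fun _ _ => abs_nonneg _

lemma exists_smul_bound {e : ℕ} {a : MP n} (ha : Low e a) : ∃ B : ℝ, 0 ≤ B ∧ ∀ (t : ℝ) (y : En n),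
    0 < t → t ≤ 1 → ‖y‖ ≤ 1 → |peval a (t • y) - t ^ e * peval (tr (e + 1) a) y| ≤ B * t ^ (e + 1) := by
  obtain ⟨B, hB0, hB⟩ := exists_coeff_bound (a - tr (e + 1) a)
  refine ⟨(degs n (a - tr (e + 1) a).totalDegree).card * B, by positivity, ?_⟩
  intro t y ht ht1 hy
  have hlow : Low (e + 1) (a - tr (e + 1) a) := fun d hd => by
    rw [coeff_sub, coeff_tr, if_pos hd, sub_self]
  have hn : ‖t • y‖ ≤ t := by
    rw [norm_smul, Real.norm_of_nonneg ht.le]; nlinarith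
  have := hlow.abs_le le_rfl hB (x := t • y) (hn.trans ht1)
  rw [peval_sub, peval_tr_smul ha] at this
  refine this.trans ?_
  gcongr

lemma tendsto_rpow_zero {e : ℝ} (he : 0 < e) (c : ℝ) :
    Tendsto (fun t : ℝ => c * t ^ e) (𝓝[>] 0) (𝓝 0) := by
  have : Tendsto (fun t : ℝ => c * t ^ e) (𝓝 0) (𝓝 (c * 0 ^ e)) :=
    ((Real.continuous_rpow_const he.le).tendsto 0).const_mul c
  rw [Real.zero_rpow he.ne', mul_zero] at this
  exact this.mono_left nhdsWithin_le_nhds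

lemma low_step {a : MP n} {C κ ρ : ℝ} (hρ : 0 < ρ)
    (h : ∀ x : En n, Cone ρ x → |peval a x| ≤ C * ‖x‖ ^ κ) {e : ℕ} (ha : Low e a) (he : (e : ℝ) < κ) :
    Low (e + 1) a := by
  obtain ⟨B, hB0, hB⟩ := exists_smul_bound ha
  have key : tr (e + 1) a = 0 := by
    refine poly_zero_of_open _ (isOpen_cone 1) (x := (1 / 2 : ℝ) • ev (lastIdx n))
      (cone_ev (by norm_num) (by norm_num)) ?_
    intro y hy
    have h1 : Tendsto (fun t : ℝ => (C * ‖y‖ ^ κ) * t ^ (κ - e) + B * t ^ (1 : ℝ)) (𝓝[>] 0) (𝓝 0) := by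
      simpa using (tendsto_rpow_zero (sub_pos.2 he) (C * ‖y‖ ^ κ)).add (tendsto_rpow_zero one_pos B)
    have h2 : |peval (tr (e + 1) a) y| ≤ 0 := by
      refine ge_of_tendsto h1 ?_
      have hm : Ioo (0 : ℝ) (min ρ 1) ∈ 𝓝[>] (0 : ℝ) := Ioo_mem_nhdsGT (by positivity)
      filter_upwards [hm] with t ht
      have ht0 := ht.1
      have htρ : t ≤ ρ := (ht.2.trans_le (min_le_left _ _)).le
      have ht1 : t ≤ 1 := (ht.2.trans_le (min_le_right _ _)).le
      have h3 := h _ (hy.smul ht0 htρ)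
      have h4 := hB t y ht0 ht1 hy.1.le
      rw [norm_smul, Real.norm_of_nonneg ht0.le, Real.mul_rpow ht0.le (norm_nonneg _)] at h3
      have h5 : t ^ κ = t ^ (κ - e) * t ^ e := by
        rw [← Real.rpow_natCast t e, ← Real.rpow_add ht0]; congr 1; ring
      have hte : 0 < t ^ e := by positivity
      have h6 : t ^ e * |peval (tr (e + 1) a) y| ≤ t ^ e * ((C * ‖y‖ ^ κ) * t ^ (κ - e) + B * t ^ (1:ℝ)) := by
        have h7 : t ^ e * |peval (tr (e + 1) a) y| = |t ^ e * peval (tr (e + 1) a) y| := by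
          rw [abs_mul, abs_of_pos hte]
        rw [h7]
        have h8 : |t ^ e * peval (tr (e + 1) a) y| ≤ |peval a (t • y)| +
            |peval a (t • y) - t ^ e * peval (tr (e + 1) a) y| := by
          have := abs_sub (peval a (t • y)) (peval a (t • y) - t ^ e * peval (tr (e + 1) a) y)
          simpa using this
        refine h8.trans ((add_le_add h3 h4).trans (le_of_eq ?_))
        rw [h5, pow_succ, Real.rpow_one]; ring
      exact le_of_mul_le_mul_left h6 hte
    exact abs_nonpos_iff.1 h2
  intro d hd
  have := congrArg (coeff d) key
  rwa [coeff_tr, if_pos hd, coeff_zero] at this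

lemma low_of_bound {a : MP n} {C κ ρ : ℝ} (hρ : 0 < ρ)
    (h : ∀ x : En n, Cone ρ x → |peval a x| ≤ C * ‖x‖ ^ κ) {e : ℕ} (he : (e : ℝ) < κ + 1) :
    Low e a := by
  induction e with
  | zero => exact Low.of0 _
  | succ e ih =>
    push_cast at he
    exact low_step hρ h (ih (by linarith)) (by linarith)

lemma ball_est {u : En n → ℝ} {x0 : En n} {s c η : ℝ} (hs : 0 < s)
    (hc : ContinuousOn u (closedBall x0 s)) (hL : ∀ y ∈ ball x0 s, ∃ L, c ≤ L ∧ HasLap u y L)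
    (hu : ∀ y ∈ closedBall x0 s, |u y| ≤ η) : c * s ^ 2 ≤ 4 * n * η := by
  have hn : (0 : ℝ) < n := by exact_mod_cast NeZero.pos n
  have hb : ball x0 s ⊆ closedBall 0 (‖x0‖ + s) := by
    intro y hy
    rw [mem_ball, dist_eq_norm] at hy
    rw [mem_closedBall, dist_zero_right]
    have := norm_add_le (y - x0) x0
    rw [sub_add_cancel] at this
    linarith
  have key := mp_weak isOpen_ball hb (w := fun y => u y - c / (2 * n) * ‖y - x0‖ ^ 2) (δ := 0) le_rfl
    (by
      refine ContinuousOn.sub (hc.mono closure_ball_subset_closedBall) ?_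
      exact Continuous.continuousOn (by fun_prop))
    (by
      intro y hy
      obtain ⟨L, h1, h2⟩ := hL y hy
      refine ⟨L - c / (2 * n) * (2 * n), ?_, h2.sub ((hasLap_normsub x0 y).const_mul _)⟩
      have : c / (2 * n) * (2 * n) = c := by field_simp
      rw [this]; linarith)
    (m := η - c / (2 * n) * s ^ 2) (by
      intro y hy
      have h1 := frontier_ball_subset_sphere hy
      rw [mem_sphere, dist_eq_norm] at h1
      have h2 := hu y (by rw [mem_closedBall, dist_eq_norm, h1])
      have h3 := (abs_le.1 h2).2
      simp only [h1]; linarith) x0 (mem_ball_self hs)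
  simp at key
  have h2 := (abs_le.1 (hu x0 (mem_closedBall_self hs.le))).1
  have h3 : c / (2 * n) * s ^ 2 ≤ 2 * η := by linarith
  have h4 : c / (2 * n) * s ^ 2 = c * s ^ 2 / (2 * n) := by ring
  rw [h4, div_le_iff₀ (by positivity)] at h3
  linarith

lemma rhs_sign {Ω : Set (En n)} {u f : En n → ℝ} {Pf : MP n} {ρ Ku Kf κ e : ℝ} {j : ℕ} (hρ : 0 < ρ)
    (hcone : ∀ x : En n, Cone ρ x → x ∈ Ω) (hρ1 : ρ ≤ 1)
    (hct : ContinuousOn u (Ω ∩ ball 0 1)) (hlap : ∀ x ∈ Ω, ‖x‖ < 1 → HasLap u x (f x))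
    (hu : ∀ x ∈ Ω, ‖x‖ < 1 → |u x| ≤ Ku * ‖x‖ ^ κ) (hκ : (j : ℝ) + 2 < κ)
    (hf : ∀ x ∈ Ω, ‖x‖ < 1 → |f x - peval Pf x| ≤ Kf * ‖x‖ ^ e) (he : (j : ℝ) < e)
    (hKu : 0 ≤ Ku) (hKf : 0 ≤ Kf) (hlow : Low j Pf) (y : En n) (hy : Cone 1 y) :
    peval (tr (j + 1) Pf) y ≤ 0 := by
  by_contra hc
  push Not at hc
  set c := peval (tr (j + 1) Pf) y with hcdef
  obtain ⟨B, hB0, hB⟩ := exists_smul_bound hlow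
  have hopen : IsOpen ({x : En n | Cone 1 x} ∩ {x | c / 2 < peval (tr (j + 1) Pf) x}) :=
    (isOpen_cone 1).inter (isOpen_lt continuous_const (continuous_peval _))
  obtain ⟨s, hs, hsub⟩ := Metric.nhds_basis_closedBall.mem_iff.1
    (hopen.mem_nhds (x := y) ⟨hy, by simp only [Set.mem_ofPred_eq]; linarith⟩)
  have hj0 : (0 : ℝ) ≤ j := Nat.cast_nonneg j
  have main : ∀ t : ℝ, 0 < t → t ≤ ρ →
      (c / 2 - B * t ^ (1 : ℝ) - Kf * t ^ (e - j)) * s ^ 2 ≤ 4 * n * (Ku * t ^ (κ - j - 2)) := by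
    intro t ht htρ
    have ht1 : t ≤ 1 := htρ.trans hρ1
    have hz : ∀ z ∈ closedBall (t • y) (t * s), ∃ z', z = t • z' ∧ z' ∈ closedBall y s := by
      intro z hz
      refine ⟨t⁻¹ • z, by rw [smul_smul, mul_inv_cancel₀ ht.ne', one_smul], ?_⟩
      rw [mem_closedBall, dist_eq_norm] at hz ⊢
      have : t⁻¹ • z - y = t⁻¹ • (z - t • y) := by
        rw [smul_sub, smul_smul, inv_mul_cancel₀ ht.ne', one_smul]
      rw [this, norm_smul, norm_inv, Real.norm_of_nonneg ht.le, inv_mul_le_iff₀ ht]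
      exact hz
    have hzn : ∀ z' ∈ closedBall y s, t • z' ∈ Ω ∧ ‖t • z'‖ ≤ t ∧ ‖t • z'‖ < 1 := by
      intro z' hz'
      have h1 := (hsub hz').1
      have h2 := h1.smul ht htρ
      refine ⟨hcone _ h2, ?_, h2.1.trans_le hρ1⟩
      rw [norm_smul, Real.norm_of_nonneg ht.le]
      have : ‖z'‖ < 1 := h1.1
      nlinarith
    have h := ball_est (u := u) (x0 := t • y) (s := t * s)
      (c := t ^ j * (c / 2) - B * t ^ (j + 1) - Kf * t ^ e) (η := Ku * t ^ κ) (by positivity)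
      (hct.mono (by
        intro z hz1
        obtain ⟨z', rfl, hz2⟩ := hz z hz1
        obtain ⟨a1, a2, a3⟩ := hzn z' hz2
        exact ⟨a1, by simpa using a3⟩))
      (by
        intro z hz1
        obtain ⟨z', rfl, hz2⟩ := hz z (ball_subset_closedBall hz1)
        obtain ⟨a1, a2, a3⟩ := hzn z' hz2
        refine ⟨_, ?_, hlap _ a1 a3⟩
        have b1 := (abs_le.1 (hf _ a1 a3)).1
        have b2 := (abs_le.1 (hB t z' ht ht1 (hsub hz2).1.1.le)).1
        have b3 : c / 2 < peval (tr (j + 1) Pf) z' := (hsub hz2).2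
        have b4 : t ^ j * (c / 2) ≤ t ^ j * peval (tr (j + 1) Pf) z' := by gcongr
        have b5 : Kf * ‖t • z'‖ ^ e ≤ Kf * t ^ e := by
          refine mul_le_mul_of_nonneg_left ?_ hKf
          exact Real.rpow_le_rpow (norm_nonneg _) a2 (by linarith)
        linarith)
      (by
        intro z hz1
        obtain ⟨z', rfl, hz2⟩ := hz z hz1
        obtain ⟨a1, a2, a3⟩ := hzn z' hz2
        refine (hu _ a1 a3).trans ?_
        refine mul_le_mul_of_nonneg_left ?_ hKu
        exact Real.rpow_le_rpow (norm_nonneg _) a2 (by linarith))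
    have e1 : t ^ e = t ^ (e - j) * t ^ j := by
      rw [← Real.rpow_natCast t j, ← Real.rpow_add ht]; congr 1; ring
    have e2 : t ^ κ = t ^ (κ - j - 2) * (t ^ j * t ^ 2) := by
      rw [← pow_add, ← Real.rpow_natCast t (j + 2), ← Real.rpow_add ht]; congr 1; push_cast; ring
    have hp : 0 < t ^ j * t ^ 2 := by positivity
    refine le_of_mul_le_mul_left ?_ hp
    rw [e1, e2] at h
    rw [Real.rpow_one]
    rw [pow_succ] at h
    linarith
  have hlim1 : Tendsto (fun t : ℝ => (c / 2 - B * t ^ (1 : ℝ) - Kf * t ^ (e - j)) * s ^ 2) (𝓝[>] 0)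
      (𝓝 ((c / 2 - 0 - 0) * s ^ 2)) :=
    ((tendsto_const_nhds.sub (tendsto_rpow_zero one_pos B)).sub
      (tendsto_rpow_zero (sub_pos.2 he) Kf)).mul_const _
  have hlim2 : Tendsto (fun t : ℝ => 4 * n * (Ku * t ^ (κ - j - 2))) (𝓝[>] 0) (𝓝 (4 * n * 0)) :=
    (tendsto_rpow_zero (by linarith) Ku).const_mul _
  have := le_of_tendsto_of_tendsto hlim1 hlim2 (by
    filter_upwards [Ioo_mem_nhdsGT hρ] with t ht
    exact main t ht.1 ht.2.le)
  have h3 : 0 < (c / 2 - 0 - 0) * s ^ 2 := by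
    rw [sub_zero, sub_zero]; positivity
  linarith

lemma rhs_low {Ω : Set (En n)} {u f : En n → ℝ} {Pf : MP n} {ρ Ku Kf κ e : ℝ} (hρ : 0 < ρ)
    (hcone : ∀ x : En n, Cone ρ x → x ∈ Ω) (hρ1 : ρ ≤ 1)
    (hct : ContinuousOn u (Ω ∩ ball 0 1)) (hlap : ∀ x ∈ Ω, ‖x‖ < 1 → HasLap u x (f x))
    (hu : ∀ x ∈ Ω, ‖x‖ < 1 → |u x| ≤ Ku * ‖x‖ ^ κ)
    (hf : ∀ x ∈ Ω, ‖x‖ < 1 → |f x - peval Pf x| ≤ Kf * ‖x‖ ^ e)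
    (hKu : 0 ≤ Ku) (hKf : 0 ≤ Kf) (j : ℕ) (hκ : (j : ℝ) + 1 < κ) (he : (j : ℝ) - 1 < e) :
    Low j Pf := by
  induction j with
  | zero => exact Low.of0 _
  | succ j ih =>
    push_cast at hκ he
    have hlow := ih (by linarith) (by linarith)
    have key : tr (j + 1) Pf = 0 := by
      refine poly_zero_of_open _ (isOpen_cone 1) (x := (1 / 2 : ℝ) • ev (lastIdx n))
        (cone_ev (by norm_num) (by norm_num)) ?_
      intro y hy
      refine le_antisymm (rhs_sign hρ hcone hρ1 hct hlap hu (by linarith) hf (by linarith) hKu hKf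
        hlow y hy) ?_
      have h2 := rhs_sign (u := fun x => - u x) (f := fun x => - f x) (Pf := - Pf) hρ hcone hρ1 hct.neg
        (fun x h1 h2 => (hlap x h1 h2).neg) (fun x h1 h2 => by rw [abs_neg]; exact hu x h1 h2)
        (by linarith : (j : ℝ) + 2 < κ)
        (fun x h1 h2 => by
          rw [peval_neg, ← abs_neg]
          have := hf x h1 h2
          simpa [sub_eq_add_neg, add_comm] using this) (by linarith : (j : ℝ) < e) hKu hKf hlow.neg y hy
      have h3 : tr (j + 1) (-Pf) = - tr (j + 1) Pf := by
        ext d; simp only [coeff_tr, coeff_neg]; split_ifs <;> simp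
      rw [h3, peval_neg] at h2
      linarith
    intro d hd
    have := congrArg (coeff d) key
    rwa [coeff_tr, if_pos hd, coeff_zero] at this

lemma pow_diff (a b R : ℝ) (ha : |a| ≤ R) (hb : |b| ≤ R) (m : ℕ) :
    |a ^ m - b ^ m| ≤ m * R ^ (m - 1) * |a - b| := by
  have hR : 0 ≤ R := (abs_nonneg _).trans ha
  have h : |a ^ m - b ^ m| ≤ |a - b| * m * max |a| |b| ^ (m - 1) := by
    exact abs_pow_sub_pow_le a b m
  refine h.trans ?_
  have : max |a| |b| ^ (m - 1) ≤ R ^ (m - 1) := pow_le_pow_left₀ (by positivity) (max_le ha hb) _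
  calc |a - b| * m * max |a| |b| ^ (m - 1) ≤ |a - b| * m * R ^ (m - 1) := by gcongr
    _ = _ := by ring

lemma peval_diff {P : MP n} {j m : ℕ} (hP : Low (j + 1) P) (hdeg : P.totalDegree ≤ m) {B : ℝ}
    (hB : ∀ d, |coeff d P| ≤ B) {x y : En n} {T : ℝ} (hT : 1 ≤ T) (hx : ‖x‖ ≤ 1)
    (hy : ∀ i, i ≠ lastIdx n → y i = x i) (hyn : |y (lastIdx n)| ≤ T * ‖x‖) :
    |peval P x - peval P y| ≤ (degs n m).card * (B * (m * (T ^ m * ‖x‖ ^ j) * |xn x - xn y|)) := by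
  have hB0 : 0 ≤ B := (abs_nonneg _).trans (hB 0)
  rw [peval_eq_of_subset _ x (support_subset_degs hdeg), peval_eq_of_subset _ y (support_subset_degs hdeg),
    ← Finset.sum_sub_distrib]
  refine (Finset.abs_sum_le_sum_abs _ _).trans ?_
  rw [← nsmul_eq_mul]
  refine Finset.sum_le_card_nsmul _ _ _ fun d hd => ?_
  rw [mem_degs] at hd
  rw [← mul_sub, abs_mul]
  by_cases hj : mdeg d < j + 1
  · rw [hP d hj, abs_zero, zero_mul]; positivity
  refine mul_le_mul (hB d) ?_ (abs_nonneg _) hB0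
  rw [← Finset.mul_prod_erase _ _ (Finset.mem_univ (lastIdx n)),
    ← Finset.mul_prod_erase _ (fun i => y i ^ d i) (Finset.mem_univ (lastIdx n))]
  have e1 : ∏ i ∈ Finset.univ.erase (lastIdx n), y i ^ d i = ∏ i ∈ Finset.univ.erase (lastIdx n), x i ^ d i :=
    Finset.prod_congr rfl fun i hi => by rw [hy i (Finset.mem_erase.1 hi).1]
  rw [e1, ← sub_mul, abs_mul]
  set R := T * ‖x‖ with hR
  have hR0 : 0 ≤ R := by positivity
  have hxR : ∀ i, |x i| ≤ R := fun i => (norm_apply_le x i).trans (by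
    rw [hR]; nlinarith [norm_nonneg x])
  set a := d (lastIdx n) with ha
  have e2 : |∏ i ∈ Finset.univ.erase (lastIdx n), x i ^ d i| ≤ R ^ (mdeg d - a) := by
    have : ∑ i ∈ Finset.univ.erase (lastIdx n), d i = mdeg d - a := by
      rw [mdeg_eq, Finsupp.degree_eq_sum, ← Finset.add_sum_erase _ _ (Finset.mem_univ (lastIdx n))]
      simp [ha]
    rw [← this, Finset.abs_prod, ← Finset.prod_pow_eq_pow_sum]
    refine Finset.prod_le_prod (fun i _ => abs_nonneg _) fun i _ => ?_
    rw [abs_pow]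
    exact pow_le_pow_left₀ (abs_nonneg _) (hxR i) _
  have e3 := pow_diff (x (lastIdx n)) (y (lastIdx n)) R (hxR _) hyn a
  have hal : a ≤ mdeg d := apply_le_mdeg d _
  rcases Nat.eq_zero_or_pos a with h0 | h0
  · rw [h0, pow_zero, pow_zero, sub_self, abs_zero, zero_mul]; positivity
  calc |x (lastIdx n) ^ a - y (lastIdx n) ^ a| * |∏ i ∈ Finset.univ.erase (lastIdx n), x i ^ d i|
      ≤ (a * R ^ (a - 1) * |x (lastIdx n) - y (lastIdx n)|) * R ^ (mdeg d - a) :=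
        mul_le_mul e3 e2 (abs_nonneg _) (by positivity)
    _ = a * R ^ (mdeg d - 1) * |xn x - xn y| := by
        rw [show mdeg d - 1 = (a - 1) + (mdeg d - a) by omega, pow_add]; unfold xn; ring
    _ ≤ m * (T ^ m * ‖x‖ ^ j) * |xn x - xn y| := by
        have h1 : (a : ℝ) ≤ m := by exact_mod_cast hal.trans hd
        have h2 : R ^ (mdeg d - 1) ≤ T ^ m * ‖x‖ ^ j := by
          rw [hR, mul_pow]
          refine mul_le_mul (pow_le_pow_right₀ hT (by omega)) ?_ (by positivity) (by positivity)
          exact pow_le_pow_of_le_one (norm_nonneg _) hx (by omega)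
        gcongr

lemma totalDegree_substLast {q p : MP n} {l N : ℕ} (hl : 1 ≤ l) (hq : q.totalDegree ≤ l)
    (hp : p.totalDegree ≤ N) : (substLast q p).totalDegree ≤ N * l := by
  conv_lhs => rw [p.as_sum, substLast_sum]
  refine totalDegree_finsetSum_le fun d hd => ?_
  rw [substLast_monomial]
  refine (totalDegree_mul _ _).trans ?_
  rw [totalDegree_C, zero_add]
  refine (totalDegree_finsetProd _ _).trans ?_
  have hd' := mem_degs.1 (support_subset_degs hp hd)
  calc _ ≤ ∑ i, d i * l := by
        refine Finset.sum_le_sum fun i _ => (totalDegree_pow _ _).trans ?_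
        refine Nat.mul_le_mul_left _ ?_
        split_ifs
        · exact hq
        · rw [totalDegree_X]; exact hl
    _ = mdeg d * l := by rw [← Finset.sum_mul, mdeg_eq, Finsupp.degree_eq_sum]
    _ ≤ _ := Nat.mul_le_mul_right _ hd'

lemma bdry_est (n : ℕ) [NeZero n] (k l N : ℕ) (hl : 1 ≤ l) (hN : k + l = N + 2) (α M : ℝ)
    (hα : 0 < α) (hα1 : α < 1) : ∃ Cb : ℝ, 0 < Cb ∧ ∀ Q : MP n, BP M Q → Q.totalDegree ≤ l →
    ∀ (G : MP n) (B : ℝ), Low (k + 1) G → G.totalDegree ≤ N + 2 → (∀ d, |coeff d G| ≤ B) →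
    (∀ d, mdeg d ≤ N + 2 → coeff d (substLast Q G) = 0) → ∀ x : En n, ‖x‖ < 1 →
    |xn x - peval Q x| ≤ M * ‖x‖ ^ ((l : ℝ) + α) → |peval G x| ≤ Cb * B * ‖x‖ ^ ((N : ℝ) + 2 + α) := by
  obtain ⟨C2, hC2, h2⟩ := substLast_bound n M ((N + 2) * l)
  set T : ℝ := 1 + (degs n l).card * |M| with hT
  have hT1 : 1 ≤ T := by rw [hT]; have : 0 ≤ (degs n l).card * |M| := by positivity
                         linarith
  set c1 : ℝ := (degs n (N + 2)).card * ((N + 2 : ℕ) * T ^ (N + 2) * |M|) with hc1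
  have hc10 : 0 ≤ c1 := by positivity
  refine ⟨c1 + (degs n ((N + 2) * l)).card * C2 + 1, by positivity, ?_⟩
  intro Q hQ hQd G B hG hGd hB hsub x hx hxn
  have hB0 : 0 ≤ B := (abs_nonneg _).trans (hB 0)
  have hM0 : 0 ≤ M := (abs_nonneg _).trans (hQ.cf 0)
  have hxn0 := norm_nonneg x
  set y : En n := x + (peval Q x - xn x) • ev (lastIdx n) with hy
  have hy1 : ∀ i, i ≠ lastIdx n → y i = x i := fun i hi => by
    simp [hy, hi]
  have hy2 : y (lastIdx n) = peval Q x := by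
    simp [hy, xn]
  have hyn : |y (lastIdx n)| ≤ T * ‖x‖ := by
    rw [hy2]
    refine (hQ.low.abs_le hQd hQ.cf hx.le).trans ?_
    have : ‖x‖ ^ 2 ≤ ‖x‖ := by nlinarith
    have h3 : (degs n l).card * M ≤ T := by rw [hT, abs_of_nonneg hM0]; linarith
    exact mul_le_mul h3 this (by positivity) (by linarith)
  have h3 := peval_diff hG hGd hB hT1 hx.le hy1 hyn
  have h4 : |peval G y| ≤ (degs n ((N + 2) * l)).card * (C2 * B) * ‖x‖ ^ (N + 3) := by
    rw [← peval_substLast Q G x y hy2 hy1]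
    have hd := totalDegree_substLast hl hQd hGd
    refine Low.abs_le (fun d hd => hsub d (by omega)) hd ?_ hx.le
    intro d
    by_cases hdd : mdeg d ≤ (N + 2) * l
    · exact h2 Q hQ.cf G (hGd.trans (Nat.le_mul_of_pos_right _ hl)) B hB d hdd
    · rw [coeff_eq_zero_of_mdeg hd (by omega), abs_zero]; positivity
  have e1 : xn y = peval Q x := hy2
  have h0 : |peval G x| ≤ |peval G x - peval G y| + |peval G y| := by
    have := abs_add_le (peval G x - peval G y) (peval G y)
    simpa using this
  rcases eq_or_lt_of_le hxn0 with hz | hpos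
  · have hx0 : x = 0 := norm_eq_zero.1 hz.symm
    rw [hx0, ← coeff_zero_eq, hG 0 (by simp [mdeg_eq]), abs_zero]; positivity
  have p1 : ‖x‖ ^ (N + 3) ≤ ‖x‖ ^ ((N : ℝ) + 2 + α) := by
    rw [← Real.rpow_natCast]
    refine Real.rpow_le_rpow_of_exponent_ge hpos hx.le ?_
    push_cast; linarith
  have p2 : ‖x‖ ^ k * ‖x‖ ^ ((l : ℝ) + α) = ‖x‖ ^ ((N : ℝ) + 2 + α) := by
    rw [← Real.rpow_natCast, ← Real.rpow_add hpos]
    congr 1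
    have : (k : ℝ) + l = N + 2 := by exact_mod_cast hN
    linarith
  have h5 : |peval G x - peval G y| ≤ c1 * B * ‖x‖ ^ ((N : ℝ) + 2 + α) := by
    refine h3.trans ?_
    rw [e1, ← p2, hc1, abs_of_nonneg hM0]
    calc _ ≤ ((degs n (N + 2)).card : ℝ) * (B * (((N + 2 : ℕ) : ℝ) * (T ^ (N + 2) * ‖x‖ ^ k) *
            (M * ‖x‖ ^ ((l : ℝ) + α)))) := by gcongr
      _ = _ := by ring
  have h6 : (degs n ((N + 2) * l)).card * (C2 * B) * ‖x‖ ^ (N + 3) ≤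
      (degs n ((N + 2) * l)).card * (C2 * B) * ‖x‖ ^ ((N : ℝ) + 2 + α) := by gcongr
  have h7 : 0 ≤ B * ‖x‖ ^ ((N : ℝ) + 2 + α) := by positivity
  linarith

/-- bundled (normalized) data of the boundary value problem -/
structure DD (k l N : ℕ) (α M M1 : ℝ) (Ω : Set (En n)) (u f : En n → ℝ) (Pf Pg Q : MP n) (D : ℝ) :
    Prop where
  op : IsOpen Ω
  z0 : (0 : En n) ∉ Ω
  D0 : 0 < D
  bp : BP M Q
  qd : Q.totalDegree ≤ l
  fr : ∀ x ∈ frontier Ω, ‖x‖ < 1 → |xn x - peval Q x| ≤ M * ‖x‖ ^ ((l : ℝ) + α)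
  lo : ∀ x ∈ Ω, ‖x‖ < 1 → -(M1 * ‖x‖ ^ (1 + α)) ≤ xn x
  up : ∀ x : En n, ‖x‖ < 1 → M1 * ‖x‖ ^ (1 + α) < xn x → x ∈ Ω
  ct : ContinuousOn u (closure Ω ∩ ball 0 1)
  lap : ∀ x ∈ Ω, ‖x‖ < 1 → HasLap u x (f x)
  hf : ∀ x ∈ Ω, ‖x‖ < 1 → |f x - peval Pf x| ≤ D * ‖x‖ ^ ((N : ℝ) + α)
  hg : ∀ x ∈ frontier Ω, ‖x‖ < 1 → |u x - peval Pg x| ≤ D * ‖x‖ ^ ((N : ℝ) + 2 + α)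
  fl : Low (k - 1) Pf
  fd : Pf.totalDegree ≤ N
  fc : ∀ d, |coeff d Pf| ≤ D
  gl : Low (k + 1) Pg
  gd : Pg.totalDegree ≤ N + 2
  gc : ∀ d, |coeff d Pg| ≤ D
  uq : ∃ Ku : ℝ, 0 ≤ Ku ∧ ∀ x ∈ Ω, ‖x‖ < 1 → |u x| ≤ Ku * ‖x‖ ^ ((k : ℝ) + α)
  ub : ∀ x ∈ Ω, ‖x‖ < 1 → |u x| ≤ D

def Good (n : ℕ) [NeZero n] (k l N : ℕ) (α M M1 β : ℝ) : Prop :=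
  ∃ C : ℝ, 0 < C ∧ ∀ (Ω : Set (En n)) (u f : En n → ℝ) (Pf Pg Q : MP n) (D : ℝ),
    DD k l N α M M1 Ω u f Pf Pg Q D → ∃ P : MP n, plap P = Pf ∧ Low (k + 1) P ∧
      P.totalDegree ≤ N + 2 ∧ (∀ d, |coeff d P| ≤ C * D) ∧
      (∀ d, mdeg d ≤ N + 2 → coeff d (substLast Q P) = coeff d (substLast Q Pg)) ∧
      ∀ x ∈ Ω, ‖x‖ < 1 → |u x - peval P x| ≤ C * D * ‖x‖ ^ β

lemma Good.zero (n : ℕ) [NeZero n] (k l N : ℕ) (α M M1 : ℝ) : Good n k l N α M M1 0 := by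
  obtain ⟨C, hC, h⟩ := corr n N M
  refine ⟨C + (1 + (degs n (N + 2)).card * C), by positivity, ?_⟩
  intro Ω u f Pf Pg Q D hD
  have hD0 := hD.D0
  obtain ⟨P, p1, p2, p3, p4, p5⟩ := h (k + 1) Q hD.bp Pf Pg D (hD.fl.mono (by omega)) hD.gl hD.fd hD.gd
    hD.fc hD.gc
  have hc : 0 ≤ (1 + (degs n (N + 2)).card * C) * D := by positivity
  refine ⟨P, p1, p2, p3, fun d => (p4 d).trans (by linarith), p5, ?_⟩
  intro x hx hx1
  rw [Real.rpow_zero, mul_one]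
  have h1 := abs_peval_le_card p3 p4 hx1.le
  have h2 := hD.ub x hx hx1
  have h3 := abs_sub (u x) (peval P x)
  nlinarith

lemma Good.mono {k l N : ℕ} {α M M1 β γ : ℝ} (h : Good n k l N α M M1 γ) (hβγ : β ≤ γ) :
    Good n k l N α M M1 β := by
  obtain ⟨C, hC, h⟩ := h
  refine ⟨C, hC, ?_⟩
  intro Ω u f Pf Pg Q D hD
  have hD0 := hD.D0
  obtain ⟨P, p1, p2, p3, p4, p5, p6⟩ := h Ω u f Pf Pg Q D hD
  refine ⟨P, p1, p2, p3, p4, p5, fun x hx hx1 => (p6 x hx hx1).trans ?_⟩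
  have hx0 : 0 < ‖x‖ := norm_pos_iff.2 (fun h => hD.z0 (h ▸ hx))
  refine mul_le_mul_of_nonneg_left ?_ (by positivity)
  exact Real.rpow_le_rpow_of_exponent_ge hx0 hx1.le hβγ

lemma cone_of_slab {Ω : Set (En n)} {α M1 : ℝ} (hα : 0 < α) (hM1 : 1 ≤ M1)
    (up : ∀ x : En n, ‖x‖ < 1 → M1 * ‖x‖ ^ (1 + α) < xn x → x ∈ Ω) :
    ∃ ρ : ℝ, 0 < ρ ∧ ρ ≤ 1 ∧ ∀ x : En n, Cone ρ x → x ∈ Ω := by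
  have h0 : (0 : ℝ) < 1 / (2 * M1) := by positivity
  have h1 : 1 / (2 * M1) ≤ 1 := by rw [div_le_one (by positivity)]; linarith
  refine ⟨(1 / (2 * M1)) ^ (1 / α), by positivity, Real.rpow_le_one h0.le h1 (by positivity), ?_⟩
  intro x hx
  have hx1 : ‖x‖ < 1 := hx.1.trans_le (Real.rpow_le_one h0.le h1 (by positivity))
  refine up x hx1 (lt_of_le_of_lt ?_ hx.2)
  rcases eq_or_lt_of_le (norm_nonneg x) with hz | hpos
  · rw [← hz, Real.zero_rpow (by positivity)]; simp
  have h2 : ‖x‖ ^ α ≤ 1 / (2 * M1) := by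
    have := Real.rpow_le_rpow (norm_nonneg x) hx.1.le hα.le
    rwa [← Real.rpow_mul h0.le, one_div_mul_cancel hα.ne', Real.rpow_one] at this
  rw [Real.rpow_add hpos, Real.rpow_one]
  have h3 : M1 * ‖x‖ ^ α ≤ 1 / 2 := by
    calc M1 * ‖x‖ ^ α ≤ M1 * (1 / (2 * M1)) := by gcongr
      _ = 1 / 2 := by field_simp
  nlinarith

section step
variable {k l N : ℕ} {α M M1 β γ : ℝ}

lemma DD.stg (hl : 1 ≤ l) (hN : k + l = N + 2) (hα : 0 < α) (hα1 : α < 1) (hM1 : 1 ≤ M1)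
    {C : ℝ} (hC : 0 < C) : ∃ C' : ℝ, 0 < C' ∧
    ∀ (Ω : Set (En n)) (u f : En n → ℝ) (Pf Pg Q : MP n) (D : ℝ), DD k l N α M M1 Ω u f Pf Pg Q D →
    ∀ P : MP n, plap P = Pf → Low (k + 1) P → P.totalDegree ≤ N + 2 → (∀ d, |coeff d P| ≤ C * D) →
      (∀ d, mdeg d ≤ N + 2 → coeff d (substLast Q P) = coeff d (substLast Q Pg)) →
      (∀ x ∈ Ω, ‖x‖ < 1 → |u x - peval P x| ≤ C * D * ‖x‖ ^ β) →
      Stg Ω (fun x => u x - peval P x) (C' * D) β ((N : ℝ) + 2 + α) α M1 := by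
  obtain ⟨Cb, hCb, hb⟩ := bdry_est n k l N hl hN α M hα hα1
  refine ⟨C + 1 + Cb * (1 + C), by positivity, ?_⟩
  intro Ω u f Pf Pg Q D h P p1 p2 p3 p4 p5 p6
  have hD0 := h.D0
  refine ⟨h.op, h.z0, by positivity, by linarith, h.lo, h.up, ?_, ?_, ?_, ?_⟩
  · exact h.ct.sub (continuous_peval P).continuousOn
  · intro x hx hx1
    refine ⟨f x - peval Pf x, (h.hf x hx hx1).trans ?_, ?_⟩
    · rw [show (N : ℝ) + 2 + α - 2 = N + α by ring]
      refine mul_le_mul_of_nonneg_right ?_ (by positivity)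
      have : 0 ≤ (C + Cb * (1 + C)) * D := by positivity
      linarith
    · rw [← p1]; exact (h.lap x hx hx1).sub (HasLap.peval P x)
  · intro x hx hx1
    have h1 := h.hg x hx hx1
    have h2 := hb Q h.bp h.qd (Pg - P) ((1 + C) * D) (h.gl.sub p2)
      ((totalDegree_sub _ _).trans (max_le h.gd p3))
      (fun d => by
        rw [coeff_sub]
        have := abs_sub (coeff d Pg) (coeff d P)
        have := h.gc d
        have := p4 d
        linarith)
      (fun d hd => by rw [substLast_sub, coeff_sub, p5 d hd, sub_self]) x hx1 (h.fr x hx hx1)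
    rw [peval_sub] at h2
    have h3 := abs_add_le (u x - peval Pg x) (peval Pg x - peval P x)
    rw [sub_add_sub_cancel] at h3
    have h4 : 0 ≤ C * D * ‖x‖ ^ ((N : ℝ) + 2 + α) := by positivity
    linarith
  · intro x hx hx1
    refine (p6 x hx hx1).trans ?_
    refine mul_le_mul_of_nonneg_right ?_ (by positivity)
    have : 0 ≤ (1 + Cb * (1 + C)) * D := by positivity
    linarith

lemma Good.step (hl : 1 ≤ l) (hN : k + l = N + 2) (hα : 0 < α) (hα1 : α < 1)
    (hM1 : 1 ≤ M1) (h : Good n k l N α M M1 β) (hβ : 0 ≤ β) (hβγ : β ≤ γ)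
    (hγ : γ ≤ (N : ℝ) + 2 + α) (hγ2 : γ ≤ β + α) {m : ℕ} (h1 : (m : ℝ) < γ) (h2 : γ < m + 1) :
    Good n k l N α M M1 γ := by
  obtain ⟨C, hC, h⟩ := h
  obtain ⟨CS, hCS, hS⟩ := DD.stg (n := n) (β := β) (M := M) hl hN hα hα1 hM1 hC
  obtain ⟨C1, hC1, hst⟩ := stage n m α β ((N : ℝ) + 2 + α) M1 γ hα hα1 hβ (by
    have : (0 : ℝ) ≤ N := Nat.cast_nonneg _
    linarith) hγ hγ2 (by linarith) h1 h2
  obtain ⟨C2, hC2, hsb⟩ := substLast_bound n M (N + 2)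
  obtain ⟨C3, hC3, hco⟩ := corr0 n N M (N + 3)
  have hmN : m ≤ N + 2 := by
    have : (m : ℝ) < (N + 2 : ℕ) + 1 := by push_cast; linarith
    exact_mod_cast Nat.lt_succ_iff.1 (by exact_mod_cast this)
  set CA := C1 * CS with hCA
  set CE := C3 * (C2 * CA) with hCE
  have hCA0 : 0 < CA := by positivity
  have hCE0 : 0 < CE := by positivity
  refine ⟨C + CA + CE + (degs n (N + 2)).card * CE, by positivity, ?_⟩
  intro Ω u f Pf Pg Q D hD
  have hD0 := hD.D0
  obtain ⟨P, p1, p2, p3, p4, p5, p6⟩ := h Ω u f Pf Pg Q D hD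
  have hStg := hS Ω u f Pf Pg Q D hD P p1 p2 p3 p4 p5 p6
  obtain ⟨a, a1, a2, a3, a4, a5⟩ := hst Ω _ _ hStg
  have hA1 : C1 * (CS * D) = CA * D := by rw [hCA]; ring
  rw [hA1] at a4 a5
  obtain ⟨ρ, hρ, hρ1, hcone⟩ := cone_of_slab hα hM1 hD.up
  have hpos : ∀ x ∈ Ω, 0 < ‖x‖ := fun x hx => norm_pos_iff.2 (fun h => hD.z0 (h ▸ hx))
  have hcd : 0 ≤ ((degs n (N + 2)).card : ℝ) * CE * D := by positivity
  by_cases hmk : m ≤ k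
  · -- here `a = 0`
    have ha0 : a = 0 := by
      obtain ⟨Ku, hKu, huq⟩ := hD.uq
      have hlow : Low (m + 1) a := by
        set τ := min γ ((k : ℝ) + α) with hτ
        refine low_of_bound (C := Ku + (degs n (N + 2)).card * (C * D) + CA * D) (κ := τ) hρ ?_ ?_
        · intro x hx
          have hxΩ := hcone x hx
          have hx1 : ‖x‖ < 1 := hx.1.trans_le hρ1
          have hx0 := hpos x hxΩ
          have b1 := huq x hxΩ hx1
          have b2 := p2.abs_le p3 p4 hx1.le
          have b3 := a5 x hxΩ hx1
          have c1 : ‖x‖ ^ ((k : ℝ) + α) ≤ ‖x‖ ^ τ :=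
            Real.rpow_le_rpow_of_exponent_ge hx0 hx1.le (min_le_right _ _)
          have c2 : ‖x‖ ^ γ ≤ ‖x‖ ^ τ :=
            Real.rpow_le_rpow_of_exponent_ge hx0 hx1.le (min_le_left _ _)
          have c3 : ‖x‖ ^ (k + 1) ≤ ‖x‖ ^ τ := by
            rw [← Real.rpow_natCast]
            refine Real.rpow_le_rpow_of_exponent_ge hx0 hx1.le ((min_le_right _ _).trans ?_)
            push_cast; linarith
          have d1 : Ku * ‖x‖ ^ ((k : ℝ) + α) ≤ Ku * ‖x‖ ^ τ := by gcongr
          have d2 : CA * D * ‖x‖ ^ γ ≤ CA * D * ‖x‖ ^ τ := by gcongr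
          have d3 : (degs n (N + 2)).card * (C * D) * ‖x‖ ^ (k + 1) ≤
              (degs n (N + 2)).card * (C * D) * ‖x‖ ^ τ := by gcongr
          have e1 : |peval a x| ≤ |u x| + |peval P x| + |u x - peval P x - peval a x| := by
            have := abs_sub (u x - peval P x) (u x - peval P x - peval a x)
            rw [sub_sub_cancel] at this
            have := abs_sub (u x) (peval P x)
            linarith
          linarith
        · have : (m : ℝ) < τ := lt_min h1 (by
            have : (m : ℝ) ≤ k := by exact_mod_cast hmk
            linarith)
          push_cast; linarith
      ext d
      rw [coeff_zero]
      by_cases hd : mdeg d < m + 1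
      · exact hlow d hd
      · exact coeff_eq_zero_of_mdeg a3 (by omega)
    refine ⟨P, p1, p2, p3, fun d => (p4 d).trans ?_, p5, ?_⟩
    · nlinarith
    · intro x hx hx1
      have := a5 x hx hx1
      rw [ha0, peval_zero, sub_zero] at this
      refine this.trans ?_
      refine mul_le_mul_of_nonneg_right ?_ (by positivity)
      nlinarith
  · have halow : Low m a := by
      refine low_of_bound (C := CS * D + CA * D) (κ := β) hρ ?_ (by linarith)
      intro x hx
      have hxΩ := hcone x hx
      have hx1 : ‖x‖ < 1 := hx.1.trans_le hρ1
      have hx0 := hpos x hxΩ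
      have b1 := hStg.bv x hxΩ hx1
      have b3 := a5 x hxΩ hx1
      have c2 : ‖x‖ ^ γ ≤ ‖x‖ ^ β := Real.rpow_le_rpow_of_exponent_ge hx0 hx1.le hβγ
      have d2 : CA * D * ‖x‖ ^ γ ≤ CA * D * ‖x‖ ^ β := by gcongr
      have e1 := abs_sub (u x - peval P x) (u x - peval P x - peval a x)
      rw [sub_sub_cancel] at e1
      linarith
    have had : a.totalDegree ≤ N + 2 := a3.trans hmN
    set q := - tr (N + 3) (substLast Q a) with hq
    have hsub : ∀ d, mdeg d ≤ N + 2 → coeff d q = - coeff d (substLast Q a) := fun d hd => by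
      rw [hq, coeff_neg, coeff_tr, if_pos (by omega)]
    obtain ⟨E, e1, e2, e3, e4, e5⟩ := hco (m + 1) (by omega) Q hD.bp q (C2 * (CA * D))
      (by rw [hq, map_neg, pderiv_tr, pderiv_substLast hD.bp.pd]; ext d; simp [coeff_tr])
      ((Low.substLast_succ hD.bp.low halow (fun d hd => a2 d (by rw [hd]; exact Even.zero))).tr _).neg
      (by rw [hq, totalDegree_neg]; exact totalDegree_tr _ _)
      (fun d => by
        by_cases hd : mdeg d ≤ N + 2
        · rw [hsub d hd, abs_neg]; exact hsb Q hD.bp.cf a had _ a4 d hd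
        · rw [hq, coeff_neg, coeff_tr, if_neg (by omega), neg_zero, abs_zero]; positivity)
    have hE1 : C3 * (C2 * (CA * D)) = CE * D := by rw [hCE]; ring
    rw [hE1] at e4
    refine ⟨P + a + E, ?_, (p2.add (halow.mono (by omega))).add (e2.mono (by omega)), ?_, ?_, ?_, ?_⟩
    · rw [plap_add, plap_add, p1, a1, e1, add_zero, add_zero]
    · exact (totalDegree_add _ _).trans (max_le ((totalDegree_add _ _).trans (max_le p3 had)) e3)
    · intro d
      rw [coeff_add, coeff_add]
      have b1 := abs_add_le (coeff d P + coeff d a) (coeff d E)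
      have b2 := abs_add_le (coeff d P) (coeff d a)
      have b3 := p4 d
      have b4 := a4 d
      have b5 := e4 d
      linarith
    · intro d hd
      rw [substLast_add, substLast_add, coeff_add, coeff_add, e5 d hd, hsub d hd, p5 d hd]; ring
    · intro x hx hx1
      have hx0 := hpos x hx
      have b1 := a5 x hx hx1
      have b2 := e2.abs_le e3 e4 hx1.le
      have c3 : ‖x‖ ^ (m + 1) ≤ ‖x‖ ^ γ := by
        rw [← Real.rpow_natCast]
        refine Real.rpow_le_rpow_of_exponent_ge hx0 hx1.le ?_
        push_cast; linarith
      have d3 : (degs n (N + 2)).card * (CE * D) * ‖x‖ ^ (m + 1) ≤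
          (degs n (N + 2)).card * (CE * D) * ‖x‖ ^ γ := by gcongr
      have b3 := abs_sub (u x - peval P x - peval a x) (peval E x)
      rw [peval_add, peval_add]
      have b4 : u x - (peval P x + peval a x + peval E x) = u x - peval P x - peval a x - peval E x := by
        ring
      rw [b4]
      have b5 : 0 ≤ (C + CE) * D * ‖x‖ ^ γ := by positivity
      linarith

end step

lemma exists_nonint (β α : ℝ) (hβ : 0 ≤ β) (hα : 0 < α) (hα1 : α < 1) : ∃ γ : ℝ, ∃ m : ℕ,
    β + α / 2 ≤ γ ∧ γ ≤ β + α ∧ (m : ℝ) < γ ∧ γ < m + 1 := by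
  have hf := Nat.floor_le (by positivity : 0 ≤ β + α / 2)
  have hf2 := Nat.lt_floor_add_one (β + α / 2)
  rcases eq_or_lt_of_le hf with h | h
  · exact ⟨β + α, ⌊β + α / 2⌋₊, by linarith, le_rfl, by linarith, by linarith⟩
  · exact ⟨β + α / 2, ⌊β + α / 2⌋₊, le_rfl, by linarith, h, hf2⟩

lemma good_final (n : ℕ) [NeZero n] (k l N : ℕ) (hl : 1 ≤ l) (hN : k + l = N + 2) (α M M1 : ℝ)
    (hα : 0 < α) (hα1 : α < 1) (hM1 : 1 ≤ M1) : Good n k l N α M M1 ((N : ℝ) + 2 + α) := by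
  have hN0 : (0 : ℝ) ≤ N := Nat.cast_nonneg _
  have key : ∀ i : ℕ, Good n k l N α M M1 (min ((N : ℝ) + 2 + α) (i * (α / 2))) := by
    intro i
    induction i with
    | zero =>
      refine (Good.zero n k l N α M M1).mono ?_
      simp
    | succ i ih =>
      set β := min ((N : ℝ) + 2 + α) (i * (α / 2)) with hβ
      have hβ0 : 0 ≤ β := le_min (by linarith) (by positivity)
      have hβ1 : β ≤ (N : ℝ) + 2 + α := min_le_left _ _
      by_cases hc : (N : ℝ) + 2 + α ≤ β + α
      · refine (Good.step (γ := (N : ℝ) + 2 + α) (m := N + 2) hl hN hα hα1 hM1 ih hβ0 hβ1 le_rfl hc ?_ ?_).mono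
          (min_le_left _ _)
        · push_cast; linarith
        · push_cast; linarith
      · push Not at hc
        obtain ⟨γ, m, g1, g2, g3, g4⟩ := exists_nonint β α hβ0 hα hα1
        refine (Good.step (γ := γ) (m := m) hl hN hα hα1 hM1 ih hβ0 (by linarith) (by linarith) g2 g3 g4).mono ?_
        refine le_trans ?_ g1
        have hb : β = i * (α / 2) := by
          rw [hβ]; refine min_eq_right ?_
          by_contra hcc
          push Not at hcc
          have : β = (N : ℝ) + 2 + α := min_eq_left hcc.le
          linarith
        rw [hb]
        refine (min_le_right _ _).trans ?_
        push_cast; linarith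
  obtain ⟨i, hi⟩ := exists_nat_ge (((N : ℝ) + 2 + α) / (α / 2))
  refine (key i).mono (le_min le_rfl ?_)
  rwa [div_le_iff₀ (by positivity)] at hi

lemma one_le_mfact (d : Fin n →₀ ℕ) : (1 : ℝ) ≤ mfact d := by
  have : 0 < mfact d := Finset.prod_pos fun i _ => Nat.factorial_pos _
  exact_mod_cast this

lemma pnorm_nonneg (P : MP n) : 0 ≤ pnorm P :=
  Finset.sum_nonneg fun d _ => by positivity

lemma coeff_le_pnorm (P : MP n) (d : Fin n →₀ ℕ) : |coeff d P| ≤ pnorm P := by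
  by_cases hd : d ∈ P.support
  · have h1 : (mfact d : ℝ) * |coeff d P| ≤ pnorm P :=
      Finset.single_le_sum (f := fun d => (mfact d : ℝ) * |coeff d P|)
        (fun d _ => by positivity) hd
    nlinarith [one_le_mfact d, abs_nonneg (coeff d P)]
  · rw [notMem_support_iff.1 hd, abs_zero]; exact pnorm_nonneg P

lemma eq_zero_of_pnorm {P : MP n} (h : pnorm P = 0) : P = 0 := by
  ext d
  have := coeff_le_pnorm P d
  rw [h] at this
  simpa using le_antisymm this (abs_nonneg _)

lemma derivNorm_le (i m : ℕ) {P : MP n} (hP : P.totalDegree ≤ m) {B : ℝ} (hB : ∀ d, |coeff d P| ≤ B) :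
    derivNorm i P ≤ (∑ d ∈ degs n m, (mfact d : ℝ)) * B := by
  have hB0 : 0 ≤ B := (abs_nonneg _).trans (hB 0)
  unfold derivNorm
  have h1 : ∀ s : Finset (Fin n →₀ ℕ), s ⊆ degs n m →
      Real.sqrt (∑ d ∈ s, ((mfact d : ℝ) * coeff d P) ^ 2) ≤ (∑ d ∈ degs n m, (mfact d : ℝ)) * B := by
    intro s hs
    apply Real.sqrt_le_iff.2
    refine ⟨by positivity, ?_⟩
    have h2 : ∑ d ∈ s, ((mfact d : ℝ) * coeff d P) ^ 2 ≤ (∑ d ∈ s, (mfact d : ℝ) * |coeff d P|) ^ 2 := by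
      have := Finset.sum_sq_le_sq_sum_of_nonneg (s := s) (f := fun d => (mfact d : ℝ) * |coeff d P|)
        (fun d _ => by positivity)
      simpa [mul_pow] using this
    refine h2.trans ?_
    have h3 : ∑ d ∈ s, (mfact d : ℝ) * |coeff d P| ≤ (∑ d ∈ degs n m, (mfact d : ℝ)) * B := by
      rw [Finset.sum_mul]
      refine (Finset.sum_le_sum fun d _ => mul_le_mul_of_nonneg_left (hB d) (by positivity)).trans ?_
      exact Finset.sum_le_sum_of_subset_of_nonneg hs fun d _ _ => by positivity
    have h4 : 0 ≤ ∑ d ∈ s, (mfact d : ℝ) * |coeff d P| := Finset.sum_nonneg fun d _ => by positivity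
    exact pow_le_pow_left₀ h4 h3 2
  exact h1 _ ((Finset.filter_subset _ _).trans (support_subset_degs hP))

lemma derivNorm_zero (i : ℕ) : derivNorm i (0 : MP n) = 0 := by
  simp [derivNorm]

lemma xpn_nonneg (x : En n) : 0 ≤ xpn x := Real.sqrt_nonneg _

lemma xpn_le (x : En n) : xpn x ≤ ‖x‖ := by
  unfold xpn
  apply Real.sqrt_le_iff.2
  refine ⟨norm_nonneg _, ?_⟩
  rw [normsq_eq]
  exact Finset.sum_le_sum_of_subset_of_nonneg (Finset.subset_univ _) fun _ _ _ => sq_nonneg _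

lemma continuous_xpn : Continuous (xpn : En n → ℝ) := by
  unfold xpn
  fun_prop

lemma continuous_xn' : Continuous (xn : En n → ℝ) := by
  unfold xn
  fun_prop

lemma low2_of {P : MP n} (h0 : coeff 0 P = 0) (h1 : ∀ i, coeff (Finsupp.single i 1) P = 0) :
    Low 2 P := by
  intro d hd
  rw [mdeg_eq] at hd
  have h : d.degree = 0 ∨ d.degree = 1 := by omega
  rcases h with h | h
  · rw [Finsupp.degree_eq_zero_iff] at h; rw [h, h0]
  · have hne : d ≠ 0 := by rintro rfl; simp at h
    obtain ⟨i, hi⟩ := Finsupp.ne_iff.1 hne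
    have hi' : 1 ≤ d i := Nat.one_le_iff_ne_zero.2 (by simpa using hi)
    have hle : Finsupp.single i 1 ≤ d := by
      rw [Finsupp.single_le_iff]; exact hi'
    obtain ⟨e, he⟩ := exists_add_of_le hle
    have : e.degree = 0 := by
      have h2 := congrArg mdeg he
      rw [mdeg_add, mdeg_single, mdeg_eq, mdeg_eq, h] at h2
      omega
    rw [Finsupp.degree_eq_zero_iff] at this
    rw [he, this, add_zero, h1]

lemma domain_fr {l : ℕ} {α K : ℝ} (hα : 0 < α) {Q : MP n} {Ω : Set (En n)} (ho : IsOpen Ω)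
    (h5 : ∀ x : En n, ‖x‖ < 1 → xn x > peval Q x + K * (xpn x) ^ ((l : ℝ) + α) → x ∈ Ω)
    (h6 : ∀ x : En n, ‖x‖ < 1 → xn x < peval Q x - K * (xpn x) ^ ((l : ℝ) + α) → x ∉ Ω)
    {x : En n} (hx : x ∈ frontier Ω) (hx1 : ‖x‖ < 1) :
    |xn x - peval Q x| ≤ K * (xpn x) ^ ((l : ℝ) + α) := by
  have hxn : x ∉ Ω := by
    rw [ho.frontier_eq] at hx; exact hx.2
  rw [abs_le]
  constructor
  · by_contra hc
    set V : Set (En n) := {y | ‖y‖ < 1} ∩ {y | xn y < peval Q y - K * (xpn y) ^ ((l : ℝ) + α)} with hV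
    have hp : Continuous fun y : En n => (xpn y) ^ ((l : ℝ) + α) :=
      continuous_xpn.rpow_const fun _ => Or.inr (by positivity)
    have hVo : IsOpen V := by
      refine (isOpen_lt continuous_norm continuous_const).inter (isOpen_lt continuous_xn' ?_)
      exact (continuous_peval Q).sub (continuous_const.mul hp)
    have hxV : x ∈ V := ⟨hx1, by simp only [mem_ofPred_eq]; push Not at hc; linarith⟩
    obtain ⟨y, hyV, hy⟩ := mem_closure_iff.1 (frontier_subset_closure hx) V hVo hxV
    exact h6 y hyV.1 hyV.2 hy
  · by_contra hc
    push Not at hc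
    exact hxn (h5 x hx1 (by linarith))

lemma u_zero {Ω : Set (En n)} {u : En n → ℝ} {K κ : ℝ} (hκ : 0 < κ)
    (h0 : (0 : En n) ∈ closure Ω) (hct : ContinuousOn u (closure Ω ∩ ball 0 1))
    (hu : ∀ x ∈ Ω, ‖x‖ < 1 → |u x| ≤ K * ‖x‖ ^ κ) : u 0 = 0 := by
  have h1 : (0 : En n) ∈ closure (Ω ∩ ball 0 1) := by
    rw [mem_closure_iff_nhds] at h0 ⊢
    intro t ht
    obtain ⟨y, hy⟩ := h0 (t ∩ ball 0 1) (inter_mem ht (ball_mem_nhds _ one_pos))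
    exact ⟨y, hy.1.1, hy.2, hy.1.2⟩
  have hne : (𝓝[Ω ∩ ball 0 1] (0 : En n)).NeBot := mem_closure_iff_nhdsWithin_neBot.1 h1
  have h2 : Tendsto u (𝓝[Ω ∩ ball 0 1] (0 : En n)) (𝓝 (u 0)) :=
    (hct 0 ⟨h0, mem_ball_self one_pos⟩).mono (inter_subset_inter_left _ subset_closure)
  have h3 : Tendsto (fun x : En n => K * ‖x‖ ^ κ) (𝓝[Ω ∩ ball 0 1] (0 : En n)) (𝓝 0) := by
    have hc : Continuous fun x : En n => K * ‖x‖ ^ κ :=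
      continuous_const.mul (continuous_norm.rpow_const fun _ => Or.inr hκ.le)
    have := hc.tendsto 0
    simp only [norm_zero, Real.zero_rpow hκ.ne', mul_zero] at this
    exact this.mono_left nhdsWithin_le_nhds
  have h4 : Tendsto u (𝓝[Ω ∩ ball 0 1] (0 : En n)) (𝓝 0) := by
    refine squeeze_zero_norm' ?_ h3
    filter_upwards [self_mem_nhdsWithin] with x hx
    exact hu x hx.1 (by simpa using hx.2)
  exact tendsto_nhds_unique h2 h4

/-- Theorem 1.1: higher boundary pointwise regularity for the Dirichlet
problem when the derivatives of `u` and `g` vanish at `0 ∈ ∂Ω`. -/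
theorem stmt_0 (n : ℕ) [NeZero n] (hn : 2 ≤ n) (k l : ℕ) (hk : 1 ≤ k) (hl : 1 ≤ l)
    (α : ℝ) (hα0 : 0 < α) (hα1 : α < 1) (M : ℝ) :
    ∃ C : ℝ, 0 < C ∧
      ∀ (Ω : Set (En n)) (u f g : En n → ℝ)
        (Pu Pf Pg PΩ : MvPolynomial (Fin n) ℝ) (Ku Kf Kg KΩ Mu : ℝ),
        IsOpen Ω → IsConnected Ω → IsBounded Ω → (0 : En n) ∈ frontier Ω →
        SolvesDirichlet Ω u f g →
        -- `∂Ω ∈ C^{l,α}(0)` with `‖∂Ω∩B₁‖_{C^{l,α}(0)} ≤ M`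
        0 ≤ KΩ → DomainCmα l α KΩ PΩ Ω → pnorm PΩ + KΩ ≤ M →
        -- `u ∈ C^{k,α}(0)` with `u(0) = |Du(0)| = ⋯ = |D^k u(0)| = 0`
        Pu.totalDegree ≤ k →
        (∀ x ∈ Ω ∩ ball (0 : En n) 1, |u x - peval Pu x| ≤ Ku * ‖x‖ ^ ((k : ℝ) + α)) →
        (∀ d : Fin n →₀ ℕ, mdeg d ≤ k → MvPolynomial.coeff d Pu = 0) →
        -- `f ∈ C^{k+l-2,α}(0)`
        Pf.totalDegree ≤ k + l - 2 → 0 ≤ Kf →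
        (∀ x ∈ Ω ∩ ball (0 : En n) 1,
          |f x - peval Pf x| ≤ Kf * ‖x‖ ^ (((k + l - 2 : ℕ) : ℝ) + α)) →
        -- `g ∈ C^{k+l,α}(0)` with `|Dg(0)| = ⋯ = |D^k g(0)| = 0`
        Pg.totalDegree ≤ k + l → 0 ≤ Kg →
        (∀ x ∈ frontier Ω ∩ ball (0 : En n) 1,
          |g x - peval Pg x| ≤ Kg * ‖x‖ ^ (((k + l : ℕ) : ℝ) + α)) →
        (∀ d : Fin n →₀ ℕ, 1 ≤ mdeg d → mdeg d ≤ k → MvPolynomial.coeff d Pg = 0) →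
        -- `‖u‖_{L^∞(Ω∩B₁)} ≤ Mu`
        0 ≤ Mu → (∀ x ∈ Ω ∩ ball (0 : En n) 1, |u x| ≤ Mu) →
        -- conclusion: `u ∈ C^{k+l,α}(0)`
        ∃ P : MvPolynomial (Fin n) ℝ, P.totalDegree ≤ k + l ∧
          (∀ x ∈ Ω ∩ ball (0 : En n) 1,
            |u x - peval P x| ≤
              C * ‖x‖ ^ (((k + l : ℕ) : ℝ) + α) * (Mu + (pnorm Pf + Kf) + (pnorm Pg + Kg))) ∧
          (∑ i ∈ Finset.Icc (k + 1) (k + l), derivNorm i P) ≤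
            C * (Mu + (pnorm Pf + Kf) + (pnorm Pg + Kg)) ∧
          plap P = Pf ∧
          (∀ d : Fin n →₀ ℕ, mdeg d ≤ k + l →
            MvPolynomial.coeff d (substLast PΩ P) = MvPolynomial.coeff d (substLast PΩ Pg)) := by

  obtain ⟨N, hN⟩ : ∃ N, k + l = N + 2 := ⟨k + l - 2, by omega⟩
  have hM1 : (1 : ℝ) ≤ (degs n l).card * |M| + |M| + 1 := by
    have : 0 ≤ (degs n l).card * |M| + |M| := by positivity
    linarith
  obtain ⟨C0, hC0, H⟩ := good_final n k l N hl hN α M _ hα0 hα1 hM1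
  set S : ℝ := ∑ d ∈ degs n (N + 2), (mfact d : ℝ) with hS
  have hS0 : 0 ≤ S := by positivity
  refine ⟨C0 + l * (S * C0), by positivity, ?_⟩
  intro Ω u f g Pu Pf Pg PΩ Ku Kf Kg KΩ Mu hop _ _ h0fr hsol hKΩ hdom hM hPud hu hPu hfd hKf hf
    hgd hKg hg hPg hMu hub
  obtain ⟨hct, hpde, hbd⟩ := hsol
  obtain ⟨q1, q2, q3, q4, q5, q6⟩ := hdom
  have hN' : k + l - 2 = N := by omega
  rw [hN'] at hfd hf
  rw [hN] at hgd hg ⊢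
  have hcast : ((N + 2 : ℕ) : ℝ) = (N : ℝ) + 2 := by push_cast; ring
  rw [hcast] at hg ⊢
  have hPu0 : Pu = 0 := by
    ext d
    rw [coeff_zero]
    by_cases hd : mdeg d ≤ k
    · exact hPu d hd
    · exact notMem_support_iff.1 fun h => hd (mem_degs.1 (support_subset_degs hPud h))
  have hu' : ∀ x ∈ Ω, ‖x‖ < 1 → |u x| ≤ |Ku| * ‖x‖ ^ ((k : ℝ) + α) := by
    intro x hx hx1
    have := hu x ⟨hx, by simpa using hx1⟩
    rw [hPu0] at this
    simp only [peval, map_zero, sub_zero] at this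
    exact this.trans (mul_le_mul_of_nonneg_right (le_abs_self _) (by positivity))
  have nf := pnorm_nonneg Pf
  have ng := pnorm_nonneg Pg
  have nΩ := pnorm_nonneg PΩ
  have hM0 : 0 ≤ M := by linarith
  have hD : 0 ≤ Mu + (pnorm Pf + Kf) + (pnorm Pg + Kg) := by linarith
  rcases hD.eq_or_lt with hD0 | hD0
  · have e1 : pnorm Pf = 0 := by linarith
    have e2 : pnorm Pg = 0 := by linarith
    have e3 : Mu = 0 := by linarith
    have e4 := eq_zero_of_pnorm e1
    have e5 := eq_zero_of_pnorm e2
    refine ⟨0, by simp, ?_, ?_, ?_, ?_⟩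
    · intro x hx
      rw [← hD0]
      have := hub x hx
      rw [e3] at this
      simpa [peval] using this
    · rw [← hD0]
      simp [derivNorm_zero]
    · rw [e4]; simp [plap]
    · intro d _; rw [e5]
  have hxl : ∀ x : En n, ‖x‖ < 1 → KΩ * (xpn x) ^ ((l : ℝ) + α) ≤ M * ‖x‖ ^ ((l : ℝ) + α) := by
    intro x hx
    have h1 : (xpn x) ^ ((l : ℝ) + α) ≤ ‖x‖ ^ ((l : ℝ) + α) :=
      Real.rpow_le_rpow (xpn_nonneg x) (xpn_le x) (by positivity)
    have h2 : 0 ≤ (xpn x) ^ ((l : ℝ) + α) := Real.rpow_nonneg (xpn_nonneg x) _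
    exact mul_le_mul (by linarith) h1 h2 hM0
  have hbp : BP M PΩ := by
    refine ⟨low2_of q2 (q4 hl), q3, fun d => (coeff_le_pnorm PΩ d).trans (by linarith)⟩
  have hl1 : (1 : ℝ) ≤ l := by exact_mod_cast hl
  have hslab : ∀ x : En n, ‖x‖ < 1 → |peval PΩ x| + KΩ * (xpn x) ^ ((l : ℝ) + α) ≤
      ((degs n l).card * |M| + |M| + 1) * ‖x‖ ^ (1 + α) := by
    intro x hx
    have h1 := hbp.low.abs_le q1 hbp.cf hx.le
    have h2 := hxl x hx
    have hn0 := norm_nonneg x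
    have h3 : ‖x‖ ^ ((l : ℝ) + α) ≤ ‖x‖ ^ (1 + α) :=
      Real.rpow_le_rpow_of_exponent_ge' hn0 hx.le (by positivity) (by linarith)
    have h4 : ‖x‖ ^ 2 ≤ ‖x‖ ^ (1 + α) := by
      rw [← Real.rpow_natCast]
      exact Real.rpow_le_rpow_of_exponent_ge' hn0 hx.le (by positivity) (by push_cast; linarith)
    rw [abs_of_nonneg hM0]
    have h5 : (degs n l).card * M * ‖x‖ ^ 2 ≤ (degs n l).card * M * ‖x‖ ^ (1 + α) :=
      mul_le_mul_of_nonneg_left h4 (mul_nonneg (Nat.cast_nonneg _) hM0)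
    have h6 := mul_le_mul_of_nonneg_left h3 hM0
    have h7 : 0 ≤ ‖x‖ ^ (1 + α) := by positivity
    nlinarith
  have hup : ∀ x : En n, ‖x‖ < 1 → ((degs n l).card * |M| + |M| + 1) * ‖x‖ ^ (1 + α) < xn x →
      x ∈ Ω := by
    intro x hx h
    have h1 := hslab x hx
    have h2 := le_abs_self (peval PΩ x)
    exact q5 x hx (by linarith)
  have hlap : ∀ x ∈ Ω, ‖x‖ < 1 → HasLap u x (f x) := by
    intro x hx hx1
    have hxV : x ∈ Ω ∩ ball (0 : En n) 1 := ⟨hx, by simpa using hx1⟩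
    have h1 := hasLap_of_differentiable (hop.inter isOpen_ball) hxV (fun y hy => (hpde y hy).1)
      (hpde x hxV).2.1
    have h2 := (hpde x hxV).2.2
    rw [lapAt] at h2
    rwa [h2] at h1
  have hf' : ∀ x ∈ Ω, ‖x‖ < 1 → |f x - peval Pf x| ≤ Kf * ‖x‖ ^ ((N : ℝ) + α) :=
    fun x hx hx1 => hf x ⟨hx, by simpa using hx1⟩
  have hu0 : u 0 = 0 := u_zero (by positivity) (frontier_subset_closure h0fr) hct hu'
  have hg0 : coeff 0 Pg = 0 := by
    have h1 := hg 0 ⟨h0fr, mem_ball_self one_pos⟩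
    rw [← hbd 0 ⟨h0fr, mem_ball_self one_pos⟩, hu0, norm_zero, Real.zero_rpow (by positivity), mul_zero,
      ← coeff_zero_eq] at h1
    have := abs_nonpos_iff.1 h1
    linarith
  have hDD : DD k l N α M ((degs n l).card * |M| + |M| + 1) Ω u f Pf Pg PΩ
      (Mu + (pnorm Pf + Kf) + (pnorm Pg + Kg)) := by
    refine
      { op := hop, z0 := ?_, D0 := hD0, bp := hbp, qd := q1, fr := ?_, lo := ?_, up := hup, ct := hct,
        lap := hlap, hf := ?_, hg := ?_, fl := ?_, fd := hfd, fc := ?_, gl := ?_, gd := hgd, gc := ?_,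
        uq := ⟨|Ku|, abs_nonneg _, hu'⟩, ub := ?_ }
    · rw [hop.frontier_eq] at h0fr; exact h0fr.2
    · intro x hx hx1
      exact (domain_fr hα0 hop q5 q6 hx hx1).trans (hxl x hx1)
    · intro x hx hx1
      have h1 := hslab x hx1
      have h2 := neg_abs_le (peval PΩ x)
      by_contra hc
      push Not at hc
      exact q6 x hx1 (by linarith) hx
    · intro x hx hx1
      exact (hf' x hx hx1).trans (mul_le_mul_of_nonneg_right (by linarith) (by positivity))
    · intro x hx hx1
      have hxb : x ∈ frontier Ω ∩ ball (0 : En n) 1 := ⟨hx, by simpa using hx1⟩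
      rw [hbd x hxb]
      exact (hg x hxb).trans (mul_le_mul_of_nonneg_right (by linarith) (by positivity))
    · obtain ⟨ρ, hρ, hρ1, hcone⟩ := cone_of_slab hα0 hM1 hup
      have hk1 : ((k - 1 : ℕ) : ℝ) = (k : ℝ) - 1 := by push_cast [hk]; ring
      have hNr : (k : ℝ) + l = N + 2 := by exact_mod_cast hN
      exact rhs_low hρ hcone hρ1 (hct.mono (inter_subset_inter_left _ subset_closure)) hlap hu' hf'
        (abs_nonneg _) hKf (k - 1) (by rw [hk1]; linarith) (by rw [hk1]; linarith)
    · exact fun d => (coeff_le_pnorm Pf d).trans (by linarith)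
    · intro d hd
      rcases Nat.eq_zero_or_pos (mdeg d) with h | h
      · rw [mdeg_eq, Finsupp.degree_eq_zero_iff] at h
        rw [h, hg0]
      · exact hPg d h (by omega)
    · exact fun d => (coeff_le_pnorm Pg d).trans (by linarith)
    · intro x hx hx1
      exact (hub x ⟨hx, by simpa using hx1⟩).trans (by linarith)
  obtain ⟨P, p1, p2, p3, p4, p5, p6⟩ := H Ω u f Pf Pg PΩ _ hDD
  set D : ℝ := Mu + (pnorm Pf + Kf) + (pnorm Pg + Kg) with hDdef
  refine ⟨P, p3, ?_, ?_, p1, p5⟩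
  · intro x hx
    refine (p6 x hx.1 (by simpa using hx.2)).trans ?_
    have h1 : 0 ≤ l * (S * C0) * ‖x‖ ^ ((N : ℝ) + 2 + α) * D := by positivity
    linarith
  · have h1 : ∑ i ∈ Finset.Icc (k + 1) (N + 2), derivNorm i P ≤ l * (S * (C0 * D)) := by
      refine (Finset.sum_le_card_nsmul _ _ (S * (C0 * D)) fun i _ => derivNorm_le i (N + 2) p3 p4).trans ?_
      rw [nsmul_eq_mul, Nat.card_Icc]
      have : N + 2 + 1 - (k + 1) = l := by omega
      rw [this]
    refine h1.trans ?_
    have h2 : 0 ≤ C0 * D := by positivity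
    linarith
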